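/- arXiv:1609.07017 — 2 statements merged into one kernel-verified Lean document; each statement's English description precedes it below -/
import Mathlib

section
/- Let R = ℂ[[x,y,z,u,v]]/(x³ + y³ + z³, z² − ux − vy), a quotient of the formal power series ring in five variables over ℂ, and let I = (x,y,z)R. Then: (1) for every prime ideal P of R of height 1, the ideal I + P is not primary to the maximal ideal of R (i.e., the radical of I + P is not the maximal ideal); and (2) H²_I(R) ≠ 0. In particular, this gives a negative answer to Lyubeznik's question asking whether, for a prime ideal I of a complete local domain with separably closed residue field, H^j_I(M) = 0 for all j ≥ dim(R) − 1 and all R-modules M if and only if P + I is not primary to the maximal ideal for any prime ideal P of height 1. -/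
section
open CategoryTheory Limits

namespace LC
universe v u v' u'
section
variable {C : Type u} [Category.{v} C] [Abelian C] [EnoughProjectives C]
  {D : Type u'} [Category.{v'} D] [Abelian D] (F : C ⥤ D) [F.Additive]

lemma aux_nat {K K' : ChainComplex D ℕ} (ψ : K' ⟶ K) {W : D} (h : K.X 2 ⟶ W)
    (hh : K.d 3 2 ≫ h = 0) (h' : K'.X 2 ⟶ W) (hh' : K'.d 3 2 ≫ h' = 0) (e : ψ.f 2 ≫ h = h') :
    HomologicalComplex.homologyMap ψ 2 ≫ K.homologyι 2 ≫ K.descOpcycles h 3 (by simp) hh =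
      K'.homologyι 2 ≫ K'.descOpcycles h' 3 (by simp) hh' := by
  subst e
  rw [HomologicalComplex.homologyι_naturality_assoc]
  congr 1
  rw [← cancel_epi (HomologicalComplex.pOpcycles _ _), HomologicalComplex.p_opcyclesMap_assoc,
    HomologicalComplex.p_descOpcycles, HomologicalComplex.p_descOpcycles]

noncomputable def cls {X : C} (P : ProjectiveResolution X) {W : D}
    (h : F.obj (P.complex.X 2) ⟶ W) (hh : F.map (P.complex.d 3 2) ≫ h = 0) :
    (F.leftDerived 2).obj X ⟶ W :=
  (P.isoLeftDerivedObj F 2).hom ≫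
    HomologicalComplex.homologyι ((F.mapHomologicalComplex _).obj P.complex) 2 ≫
    HomologicalComplex.descOpcycles ((F.mapHomologicalComplex _).obj P.complex) h 3 (by simp) hh

lemma cls_nat {X X' : C} (f : X' ⟶ X) (P' : ProjectiveResolution X') (P : ProjectiveResolution X)
    (φ : P'.complex ⟶ P.complex) (comm : φ.f 0 ≫ P.π.f 0 = P'.π.f 0 ≫ f) {W : D}
    (h : F.obj (P.complex.X 2) ⟶ W) (hh : F.map (P.complex.d 3 2) ≫ h = 0)
    (hh' : F.map (P'.complex.d 3 2) ≫ F.map (φ.f 2) ≫ h = 0) :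
    (F.leftDerived 2).map f ≫ cls F P h hh = cls F P' (F.map (φ.f 2) ≫ h) hh' := by
  unfold cls
  rw [ProjectiveResolution.isoLeftDerivedObj_hom_naturality_assoc f P' P φ comm F 2]
  congr 1
  exact aux_nat ((F.mapHomologicalComplex _).map φ) h hh _ _ rfl

lemma cls_zero {X : C} (P : ProjectiveResolution X) {W : D} [Injective W]
    (h : F.obj (P.complex.X 2) ⟶ W) (hh : F.map (P.complex.d 3 2) ≫ h = 0)
    (h0 : cls F P h hh = 0) : ∃ β : F.obj (P.complex.X 1) ⟶ W, h = F.map (P.complex.d 2 1) ≫ β := by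
  unfold cls at h0
  rw [← cancel_epi (P.isoLeftDerivedObj F 2).inv, Iso.inv_hom_id_assoc, comp_zero] at h0
  set K := (F.mapHomologicalComplex _).obj P.complex with hK
  have hex : (ShortComplex.mk (K.homologyι 2) (K.fromOpcycles 2 1) (by simp)).Exact :=
    ShortComplex.exact_of_f_is_kernel _ (K.homologyIsKernel 2 1 (by simp))
  refine ⟨hex.descToInjective _ h0, ?_⟩
  have := hex.comp_descToInjective _ h0
  have h2 := congrArg (K.pOpcycles 2 ≫ ·) this
  simp only [HomologicalComplex.p_fromOpcycles_assoc] at h2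
  exact ((HomologicalComplex.p_descOpcycles K h 3 (by simp) hh).symm.trans h2.symm)
end

section
variable {R : Type} [CommRing R]

/-- the element-as-morphism attached to `e : M`. -/
noncomputable def pt {M Y : ModuleCat.{0} R} (e : M ⟶ Y) :
    (((linearYoneda R (ModuleCat.{0} R)).obj Y).rightOp.obj M) ⟶
      Opposite.op (ModuleCat.of R R) :=
  Quiver.Hom.op (ModuleCat.ofHom (LinearMap.toSpanSingleton R (M ⟶ Y) e))

lemma pt_map {M M' Y : ModuleCat.{0} R} (g : M' ⟶ M) (e : M ⟶ Y) :
    ((linearYoneda R (ModuleCat.{0} R)).obj Y).rightOp.map g ≫ pt e = pt (g ≫ e) := by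
  apply Quiver.Hom.unop_inj
  ext
  rfl

lemma pt_zero {M Y : ModuleCat.{0} R} : pt (0 : M ⟶ Y) = 0 := by
  apply Quiver.Hom.unop_inj
  ext
  exact smul_zero (A := (M ⟶ Y)) (1 : R)

lemma pt_surj {M Y : ModuleCat.{0} R} (h : (((linearYoneda R (ModuleCat.{0} R)).obj Y).rightOp.obj M) ⟶
      Opposite.op (ModuleCat.of R R)) : ∃ e : M ⟶ Y, h = pt e := by
  refine ⟨(h.unop.hom : R →ₗ[R] (M ⟶ Y)) 1, ?_⟩
  apply Quiver.Hom.unop_inj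
  ext
  exact (one_smul R _).symm

lemma pt_inj {M Y : ModuleCat.{0} R} {e e' : M ⟶ Y} (h : pt e = pt e') : e = e' := by
  have := congrArg (fun k => (k.unop.hom : R →ₗ[R] (M ⟶ Y)) 1) h
  have h1 : (1 : R) • e = (1 : R) • e' := this
  simpa using h1

lemma exists_of_subsingleton (I : Ideal R) (Y : ModuleCat.{0} R) (m : ℕ)
    (hs : Subsingleton ((localCohomology I 2).obj Y))
    (P : ∀ n : ℕ, ProjectiveResolution (ModuleCat.of R (R ⧸ I ^ n)))
    (e : (P m).complex.X 2 ⟶ Y) (he : (P m).complex.d 3 2 ≫ e = 0) :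
    ∃ (n : ℕ) (hn : m ≤ n) (φ : (P n).complex ⟶ (P m).complex)
      (β : (P n).complex.X 1 ⟶ Y), φ.f 0 ≫ (P m).π.f 0 = (P n).π.f 0 ≫
        ModuleCat.ofHom (Submodule.mapQ _ _ LinearMap.id (Ideal.pow_le_pow_right hn)) ∧
        φ.f 2 ≫ e = (P n).complex.d 2 1 ≫ β := by
  let F := ((linearYoneda R (ModuleCat.{0} R)).obj Y).rightOp
  set dg := localCohomology.diagram (localCohomology.idealPowersDiagram I) 2 with hdg
  have hh : F.map ((P m).complex.d 3 2) ≫ pt e = 0 := by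
    exact (pt_map _ _).trans (by rw [he, pt_zero])
  let c : (F.leftDerived 2).obj (ModuleCat.of R (R ⧸ I ^ m)) ⟶ Opposite.op (ModuleCat.of R R) :=
    cls F (P m) (pt e) hh
  let j : (ℕᵒᵖ)ᵒᵖ := Opposite.op (Opposite.op m)
  have hcol := isColimitOfPreserves ((evaluation _ _).obj Y) (colimit.isColimit dg)
  let c' : ModuleCat.of R R ⟶ (dg ⋙ ((evaluation _ _).obj Y)).obj j := c.unop
  obtain ⟨k, f, g, hfg⟩ := Concrete.isColimit_exists_of_rep_eq _ hcol
    (i := j) (j := j) (c'.hom (1 : R)) 0 (@Subsingleton.elim _ hs _ _)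
  obtain ⟨⟨n⟩⟩ := k
  have hn : m ≤ n := f.unop.unop.down.down
  rw [map_zero] at hfg
  let q : ModuleCat.of R (R ⧸ I ^ n) ⟶ ModuleCat.of R (R ⧸ I ^ m) :=
    ModuleCat.ofHom (Submodule.mapQ _ _ LinearMap.id (Ideal.pow_le_pow_right hn))
  have hz : (F.leftDerived 2).map q ≫ c = 0 := by
    apply Quiver.Hom.unop_inj
    ext
    exact hfg
  let φ := ProjectiveResolution.lift q (P n) (P m)
  have hφ : φ.f 0 ≫ (P m).π.f 0 = (P n).π.f 0 ≫ q := ProjectiveResolution.lift_commutes_zero _ _ _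
  have hh' : F.map ((P n).complex.d 3 2) ≫ F.map (φ.f 2) ≫ pt e = 0 := by
    have h1 : F.map (φ.f 2) ≫ pt e = pt (φ.f 2 ≫ e) := pt_map _ _
    rw [h1]
    exact (pt_map _ _).trans (by rw [← φ.comm_assoc, he, comp_zero, pt_zero])
  rw [cls_nat F q (P n) (P m) φ hφ (pt e) hh hh'] at hz
  obtain ⟨β, hβ⟩ := cls_zero F (P n) _ hh' hz
  obtain ⟨b, rfl⟩ := pt_surj β
  refine ⟨n, hn, φ, b, hφ, ?_⟩
  exact pt_inj ((pt_map _ _).symm.trans (hβ.trans (pt_map _ _)))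
end
end LC
end

section
open CategoryTheory Limits
namespace LC
section
variable {R : Type} [CommRing R]

/-- syzygies of a pair -/
def Syz (p q : R) : Submodule R (R × R) :=
  LinearMap.ker ((LinearMap.mulLeft R p).coprod (LinearMap.mulLeft R q))

lemma mem_Syz {p q : R} {w : R × R} : w ∈ Syz p q ↔ p * w.1 + q * w.2 = 0 := by
  simp [Syz]

lemma exists_cocycle {A0 A1 A2 A3 : Type} [AddCommGroup A0] [AddCommGroup A1] [AddCommGroup A2]
    [AddCommGroup A3] [Module R A0] [Module R A1] [Module R A2] [Module R A3]
    [Module.Projective R A0] [Module.Projective R A1] (L K : Ideal R) (p q : R) (hLK : L ≤ K)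
    (hK : K = Ideal.span {p, q})
    (π : A0 →ₗ[R] R ⧸ L) (d1 : A1 →ₗ[R] A0) (d2 : A2 →ₗ[R] A1) (d3 : A3 →ₗ[R] A2)
    (h0 : ∀ a, π (d1 a) = 0) (h1 : ∀ a, d1 (d2 a) = 0) (h2 : ∀ a, d2 (d3 a) = 0)
    (h : Syz p q →ₗ[R] R) :
    ∃ (r : A0 →ₗ[R] R) (s : A1 →ₗ[R] R × R) (e : A2 →ₗ[R] R)
      (hs : ∀ a, s (d2 a) ∈ Syz p q),
      (∀ a, Submodule.mapQ L K LinearMap.id hLK (π a) = Submodule.Quotient.mk (r a)) ∧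
      (∀ a, p * (s a).1 + q * (s a).2 = r (d1 a)) ∧
      (∀ a, e a = h ⟨s (d2 a), hs a⟩) ∧ (∀ a, e (d3 a) = 0) := by
  obtain ⟨r, hr⟩ := Module.projective_lifting_property K.mkQ
    ((Submodule.mapQ L K LinearMap.id hLK) ∘ₗ π) (Submodule.mkQ_surjective K)
  have hr' : ∀ a, Submodule.mapQ L K LinearMap.id hLK (π a) = Submodule.Quotient.mk (r a) :=
    fun a => (LinearMap.congr_fun hr a).symm
  have hrK : ∀ a, r (d1 a) ∈ K := fun a => by
    rw [← Submodule.Quotient.mk_eq_zero, ← hr', h0, map_zero]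
  let t0 : R × R →ₗ[R] R := (LinearMap.mulLeft R p).coprod (LinearMap.mulLeft R q)
  have ht0 : ∀ w, t0 w ∈ K := fun w => by
    rw [hK, Ideal.mem_span_pair]
    exact ⟨w.1, w.2, by simp [t0, mul_comm]⟩
  let t : R × R →ₗ[R] K := t0.codRestrict K ht0
  have htsurj : Function.Surjective t := by
    rintro ⟨k, hk⟩
    have hk' := hk
    rw [hK, Ideal.mem_span_pair] at hk'
    obtain ⟨a, b, hab⟩ := hk'
    refine ⟨(a, b), Subtype.ext ?_⟩
    simp [t, t0, ← hab, mul_comm]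
  obtain ⟨s, hs⟩ := Module.projective_lifting_property t
    ((r ∘ₗ d1).codRestrict K hrK) htsurj
  have hs1 : ∀ a, p * (s a).1 + q * (s a).2 = r (d1 a) := fun a => by
    have := congrArg Subtype.val (LinearMap.congr_fun hs a)
    simpa [t, t0] using this
  have hs2 : ∀ a, s (d2 a) ∈ Syz p q := fun a => by
    rw [mem_Syz, hs1, h1, map_zero]
  refine ⟨r, s, h ∘ₗ (s ∘ₗ d2).codRestrict _ hs2, hs2, hr', hs1, fun a => rfl, fun a => ?_⟩
  have : (s ∘ₗ d2).codRestrict _ hs2 (d3 a) = 0 := by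
    apply Subtype.ext
    simp [h2]
  simp [this]

/-- The element computation. -/
lemma elt_contra (x y : R) (C n : ℕ) (hC : 1 ≤ C) (hCn : C ≤ n)
    (h : Syz (x ^ C) (y ^ C) →ₗ[R] R)
    (hh : ∀ hm : (y ^ C, - x ^ C) ∈ Syz (x ^ C) (y ^ C), h ⟨_, hm⟩ = (x * y) ^ (C - 1))
    (hno : (x * y) ^ (n - 1) ∉ Ideal.span {x ^ n, y ^ n})
    (r0 : R) (hr0 : 1 - r0 ∈ Ideal.span {x ^ C, y ^ C}) (s1 s2 : R × R)
    (e1 : x ^ C * s1.1 + y ^ C * s1.2 = x ^ n * r0)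
    (e2 : x ^ C * s2.1 + y ^ C * s2.2 = y ^ n * r0) (b1 b2 : R)
    (hb : ∀ hm : y ^ n • s1 - x ^ n • s2 ∈ Syz (x ^ C) (y ^ C),
      h ⟨_, hm⟩ = y ^ n * b1 - x ^ n * b2) : False := by
  obtain ⟨k, rfl⟩ := Nat.exists_eq_add_of_le hCn
  obtain ⟨c, rfl⟩ := Nat.exists_eq_add_of_le' hC
  have m0 : (y ^ (c + 1), - x ^ (c + 1)) ∈ Syz (x ^ (c+1)) (y ^ (c+1)) := by
    rw [mem_Syz]; ring
  have m1 : s1 - (x ^ k * r0, 0) ∈ Syz (x ^ (c+1)) (y ^ (c+1)) := by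
    rw [mem_Syz]; simp only [Prod.fst_sub, Prod.snd_sub]; rw [pow_add] at e1; linear_combination e1
  have m2 : s2 - (0, y ^ k * r0) ∈ Syz (x ^ (c+1)) (y ^ (c+1)) := by
    rw [mem_Syz]; simp only [Prod.fst_sub, Prod.snd_sub]; rw [pow_add] at e2; linear_combination e2
  have m3 : y ^ (c+1+k) • s1 - x ^ (c+1+k) • s2 ∈ Syz (x ^ (c+1)) (y ^ (c+1)) := by
    rw [mem_Syz]; simp only [Prod.fst_sub, Prod.snd_sub, Prod.smul_fst, Prod.smul_snd, smul_eq_mul]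
    linear_combination y ^ (c+1+k) * e1 - x ^ (c+1+k) * e2
  have key : (⟨_, m3⟩ : Syz (x ^ (c+1)) (y ^ (c+1))) =
      (r0 * (x * y) ^ k) • ⟨_, m0⟩ + y ^ (c+1+k) • ⟨_, m1⟩ - x ^ (c+1+k) • ⟨_, m2⟩ := by
    apply Subtype.ext
    apply Prod.ext
    · simp; ring
    · simp; ring
  have h1 := hb m3
  rw [key, map_sub, map_add, map_smul, map_smul, map_smul, hh] at h1
  simp only [smul_eq_mul, Nat.add_sub_cancel] at h1
  rw [Ideal.mem_span_pair] at hr0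
  obtain ⟨a, b, hab⟩ := hr0
  apply hno
  rw [Ideal.mem_span_pair]
  have e3 : c + 1 + k - 1 = c + k := by omega
  rw [e3]
  refine ⟨a * y ^ (c + k) * x ^ c + h ⟨_, m2⟩ - b2, b * x ^ (c + k) * y ^ c + b1 - h ⟨_, m1⟩, ?_⟩
  have e4 : (x * y) ^ (c + k) = (x*y)^(c+k) * (1 - r0) + r0 * (x * y)^k * (x*y)^c := by ring
  rw [e4, ← hab]
  linear_combination (-1 : R) * h1


lemma nontrivial_lc (I : Ideal R) (x y : R) (hx : x ∈ I) (hy : y ∈ I) (C m : ℕ) (hC : 1 ≤ C)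
    (hm : I ^ m ≤ Ideal.span {x ^ C, y ^ C})
    (h : Syz (x ^ C) (y ^ C) →ₗ[R] R)
    (hh : ∀ hm : (y ^ C, - x ^ C) ∈ Syz (x ^ C) (y ^ C), h ⟨_, hm⟩ = (x * y) ^ (C - 1))
    (hno : ∀ n, (x * y) ^ n ∉ Ideal.span {x ^ (n + 1), y ^ (n + 1)}) :
    Nontrivial ((localCohomology I 2).obj (ModuleCat.of R R)) := by
  wlog hmC : C ≤ m generalizing m
  · exact this (m + C) (le_trans (Ideal.pow_le_pow_right (by omega)) hm) (by omega)
  by_contra hs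
  rw [not_nontrivial_iff_subsingleton] at hs
  let P : ∀ n : ℕ, ProjectiveResolution (ModuleCat.of R (R ⧸ I ^ n)) :=
    fun n => ProjectiveResolution.of _
  have proj : ∀ n i, Module.Projective R ((P n).complex.X i) := fun n i =>
    (IsProjective.iff_projective _).mpr ((P n).projective i)
  have dd : ∀ n i (a : (P n).complex.X (i + 2)),
      ((P n).complex.d (i + 1) i).hom (((P n).complex.d (i + 2) (i + 1)).hom a) = 0 := by
    intro n i a
    have := (P n).complex.d_comp_d (i + 2) (i + 1) i
    exact congrArg (fun k => k.hom a) this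
  have dπ : ∀ n (a : (P n).complex.X 1),
      (((P n).π.f 0).hom (((P n).complex.d 1 0).hom a) : R ⧸ I ^ n) = 0 := by
    intro n a
    have := (P n).complex_d_comp_π_f_zero
    exact congrArg (fun k => k.hom a) this
  obtain ⟨r, s, e, hs', hr1, hs1, he1, he2⟩ := exists_cocycle (I ^ m) (Ideal.span {x ^ C, y ^ C})
    (x ^ C) (y ^ C) hm rfl (A0 := (P m).complex.X 0) (A1 := (P m).complex.X 1)
    (A2 := (P m).complex.X 2) (A3 := (P m).complex.X 3)
    ((P m).π.f 0).hom ((P m).complex.d 1 0).hom ((P m).complex.d 2 1).hom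
    ((P m).complex.d 3 2).hom (dπ m) (dd m 0) (dd m 1) h
  obtain ⟨n, hn, φ, β, hφ, hβ⟩ := exists_of_subsingleton I (ModuleCat.of R R) m hs P
    (ModuleCat.ofHom e) (by ext a; exact he2 a)
  have hφ' : ∀ a, (((P m).π.f 0).hom ((φ.f 0).hom a) : R ⧸ I ^ m) =
      Submodule.mapQ _ _ LinearMap.id (Ideal.pow_le_pow_right hn)
        (((P n).π.f 0).hom a : R ⧸ I ^ n) := fun a => congrArg (fun k => k.hom a) hφ
  have hβ' : ∀ a, e ((φ.f 2).hom a) = β.hom (((P n).complex.d 2 1).hom a) :=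
    fun a => congrArg (fun k => k.hom a) hβ
  have hc1 : ∀ a, (φ.f 0).hom (((P n).complex.d 1 0).hom a) =
      ((P m).complex.d 1 0).hom ((φ.f 1).hom a) := fun a =>
    (congrArg (fun k => k.hom a) (φ.comm 1 0)).symm
  have hc2 : ∀ a, (φ.f 1).hom (((P n).complex.d 2 1).hom a) =
      ((P m).complex.d 2 1).hom ((φ.f 2).hom a) := fun a =>
    (congrArg (fun k => k.hom a) (φ.comm 2 1)).symm
  have ex0 := (ShortComplex.moduleCat_exact_iff _).mp (P n).exact₀
  have ex1 := (ShortComplex.moduleCat_exact_iff _).mp ((P n).exact_succ 0)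
  have surj : Function.Surjective ((P n).π.f 0).hom :=
    (ModuleCat.epi_iff_surjective _).mp inferInstance
  obtain ⟨p0, hp0⟩ := surj (Ideal.Quotient.mk (I ^ n) 1 : R ⧸ I ^ n)
  have hI : ∀ t ∈ I, ∃ p1, ((P n).complex.d 1 0).hom p1 = t ^ n • p0 := by
    intro t ht
    apply ex0
    have h1 : ((P n).π.f 0).hom (t ^ n • p0) = t ^ n • ((P n).π.f 0).hom p0 := map_smul _ _ _
    refine h1.trans ?_
    rw [hp0]
    have : (t ^ n • (Ideal.Quotient.mk (I ^ n) 1 : R ⧸ I ^ n)) = 0 := by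
      rw [Algebra.smul_def, map_one, mul_one]
      exact Ideal.Quotient.eq_zero_iff_mem.mpr (Ideal.pow_mem_pow ht n)
    exact this
  obtain ⟨p1, hp1⟩ := hI x hx
  obtain ⟨p2, hp2⟩ := hI y hy
  obtain ⟨q, hq⟩ := ex1 (y ^ n • p1 - x ^ n • p2) (by
    change ((P n).complex.d 1 0).hom (y ^ n • p1 - x ^ n • p2) = 0
    rw [map_sub, map_smul, map_smul, hp1, hp2, smul_smul, smul_smul, mul_comm, sub_self])
  have hq' : ((P n).complex.d 2 1).hom q = y ^ n • p1 - x ^ n • p2 := hq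
  have hsq : s (((P m).complex.d 2 1).hom ((φ.f 2).hom q)) =
      y ^ n • s ((φ.f 1).hom p1) - x ^ n • s ((φ.f 1).hom p2) := by
    rw [← hc2, hq']; simp only [map_sub, map_smul]
  obtain ⟨N, rfl⟩ : ∃ N, n = N + 1 := ⟨n - 1, by omega⟩
  refine elt_contra x y C (N + 1) hC (by omega) h hh (by simpa using hno N) (r ((φ.f 0).hom p0)) ?_
    (s ((φ.f 1).hom p1)) (s ((φ.f 1).hom p2)) ?_ ?_ (β.hom p1) (β.hom p2) ?_
  · have h1 := hr1 ((φ.f 0).hom p0)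
    have h2 := (congrArg (Submodule.mapQ (I ^ m) (Ideal.span {x ^ C, y ^ C}) LinearMap.id hm)
      ((hφ' p0).trans (congrArg (Submodule.mapQ _ _ LinearMap.id (Ideal.pow_le_pow_right hn))
        hp0))).symm.trans h1
    exact (Submodule.Quotient.eq _).mp h2
  · rw [hs1, ← hc1, hp1, map_smul, map_smul, smul_eq_mul]
  · rw [hs1, ← hc1, hp2, map_smul, map_smul, smul_eq_mul]
  · intro hm'
    have h1 := he1 ((φ.f 2).hom q)
    rw [hβ', hq'] at h1
    simp only [map_sub, map_smul] at h1
    have h2 : (⟨s (((P m).complex.d 2 1).hom ((φ.f 2).hom q)), hs' _⟩ : Syz (x ^ C) (y ^ C)) =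
        ⟨_, hm'⟩ := Subtype.ext hsq
    rw [h2] at h1
    exact h1.symm

lemma nontrivial_lc' [IsNoetherianRing R] (I : Ideal R) (x y : R) (hx : x ∈ I) (hy : y ∈ I)
    (hI : I ≤ (Ideal.span {x, y}).radical) (hreg : ∀ a, y * a = 0 → a = 0)
    (hno : ∀ n, (x * y) ^ n ∉ Ideal.span {x ^ (n + 1), y ^ (n + 1)}) :
    Nontrivial ((localCohomology I 2).obj (ModuleCat.of R R)) := by
  let f : ℕ →o Ideal R := ⟨fun n => (Ideal.span {y}).colon {x ^ n}, by
    intro i j hij a ha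
    rw [Submodule.mem_colon_singleton, smul_eq_mul] at ha ⊢
    rw [← Nat.sub_add_cancel hij, pow_add, ← mul_assoc, mul_right_comm]
    exact Ideal.mul_mem_right _ _ ha⟩
  obtain ⟨c, hc⟩ := (monotone_stabilizes_iff_noetherian (R := R) (M := R)).mpr inferInstance f
  have hc' : ∀ a, a * x ^ (c + 1) ∈ Ideal.span {y} → a * x ^ c ∈ Ideal.span {y} := by
    intro a ha
    have h1 : a ∈ f (c + 1) := (Submodule.mem_colon_singleton).mpr ha
    rw [← hc (c + 1) (by omega)] at h1
    exact (Submodule.mem_colon_singleton).mp h1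
  have hex : ∀ w : Syz (x ^ (c + 1)) (y ^ (c + 1)), ∃ r, y * r = w.1.1 * x ^ c := by
    rintro ⟨w, hw⟩
    rw [mem_Syz] at hw
    have := hc' w.1 (by
      rw [Ideal.mem_span_singleton']
      exact ⟨- y ^ c * w.2, by linear_combination -hw⟩)
    rw [Ideal.mem_span_singleton'] at this
    obtain ⟨r, hr⟩ := this
    exact ⟨r, by rw [mul_comm, hr]⟩
  choose h hh using hex
  have inj : ∀ a b, y * a = y * b → a = b := fun a b hab => by
    have := hreg (a - b) (by rw [mul_sub, hab, sub_self])
    exact sub_eq_zero.mp this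
  let h' : Syz (x ^ (c + 1)) (y ^ (c + 1)) →ₗ[R] R :=
    { toFun := h
      map_add' := fun a b => inj _ _ (by rw [mul_add, hh, hh, hh]; simp; ring)
      map_smul' := fun a b => inj _ _ (by
        rw [hh, smul_eq_mul, mul_left_comm, RingHom.id_apply, hh]; simp; ring) }
  have hI2 : I ≤ (Ideal.span {x ^ (c + 1), y ^ (c + 1)}).radical := by
    refine hI.trans ?_
    rw [Ideal.radical_le_radical_iff, Ideal.span_le]
    rintro t (rfl | rfl)
    · exact ⟨c + 1, Ideal.subset_span (by simp)⟩
    · exact ⟨c + 1, Ideal.subset_span (by simp)⟩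
  obtain ⟨m, hm⟩ := Ideal.exists_pow_le_of_le_radical_of_fg hI2 (IsNoetherian.noetherian I)
  refine nontrivial_lc I x y hx hy (c + 1) m (by omega) hm h' (fun hm => inj _ _ ?_) hno
  change y * h _ = _
  rw [hh]
  simp; ring

end
end LC
end

namespace LC
section
open Polynomial

lemma exists_ring : ∃ (A : Type) (_ : CommRing A) (_ : Algebra ℂ A) (X : Aˣ) (Z : A),
    Z ^ 3 = -1 - (X : A) ^ 3 ∧
    LinearIndependent ℂ (fun p : ℤ × Fin 3 => ((X ^ p.1 : Aˣ) : A) * Z ^ (p.2 : ℕ)) := by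
  let B := LaurentPolynomial ℂ
  let t : Bˣ := ⟨LaurentPolynomial.T 1, LaurentPolynomial.T (-1),
    by rw [← LaurentPolynomial.T_add]; simp, by rw [← LaurentPolynomial.T_add]; simp⟩
  have ht : ∀ k : ℤ, ((t ^ k : Bˣ) : B) = LaurentPolynomial.T k := by
    intro k
    induction k using Int.induction_on with
    | zero => simp
    | succ i ih => rw [zpow_add_one, Units.val_mul, ih, LaurentPolynomial.T_add]
    | pred i ih => 
      rw [zpow_sub_one, Units.val_mul, ih, sub_eq_add_neg, LaurentPolynomial.T_add]; rfl
  let g : B[X] := X ^ 3 + C (1 + (t : B) ^ 3)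
  have hg : g.Monic := monic_X_pow_add_C _ (by norm_num)
  have hd : g.natDegree = 3 := natDegree_X_pow_add_C
  let A := AdjoinRoot g
  let e : B →+* A := AdjoinRoot.of g
  refine ⟨A, inferInstance, inferInstance, Units.map e.toMonoidHom t, AdjoinRoot.root g, ?_, ?_⟩
  · have h := AdjoinRoot.eval₂_root g
    simp only [g, eval₂_add, eval₂_pow, eval₂_X, eval₂_C, map_add, map_one, map_pow, eval₂_one] at h
    rw [Units.coe_map]
    change _ = -1 - (e t) ^ 3
    linear_combination h
  · have h1 : LinearIndependent B (fun i : Fin 3 => (AdjoinRoot.root g) ^ (i : ℕ)) := by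
      have := (AdjoinRoot.powerBasis' hg).basis.linearIndependent
      rw [PowerBasis.coe_basis] at this
      exact this.comp (Fin.cast (by simp [hd])) (Fin.cast_injective _)
    have h2 : LinearIndependent ℂ (fun k : ℤ => (LaurentPolynomial.T k : B)) := by
      have h3 : LinearIndependent ℂ (fun k : ℤ => (Finsupp.single k (1 : ℂ))) :=
        Finsupp.linearIndependent_single_one ℂ ℤ
      exact h3.map' (AddMonoidAlgebra.coeffLinearEquiv (R := ℂ) (S := ℂ) (M := ℤ)).symm.toLinearMap 
        (LinearEquiv.ker _)
    have h3 := linearIndependent_smul h2 h1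
    convert h3 using 2 with p
    rw [Algebra.smul_def, ← ht, ← map_zpow]
    rfl
end
end LC

namespace LC
section
open Polynomial
variable {A : Type} [CommRing A] [Algebra ℂ A]

/-- polynomials with coefficients in a subalgebra -/
def PS (H : Subalgebra ℂ A) : Subalgebra ℂ A[X] where
  carrier := {p | ∀ i, p.coeff i ∈ H}
  mul_mem' := by
    intro p q hp hq i
    rw [coeff_mul]
    exact sum_mem fun c _ => mul_mem (hp _) (hq _)
  add_mem' := by
    intro p q hp hq i
    rw [coeff_add]
    exact add_mem (hp _) (hq _)
  algebraMap_mem' := by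
    intro r i
    rw [Polynomial.algebraMap_apply, coeff_C]
    split_ifs
    · exact H.algebraMap_mem r
    · exact zero_mem _

lemma mem_PS {H : Subalgebra ℂ A} {p : A[X]} : p ∈ PS H ↔ ∀ i, p.coeff i ∈ H := Iff.rfl

lemma C_mem_PS {H : Subalgebra ℂ A} {a : A} (h : a ∈ H) : C a ∈ PS H := by
  intro i
  rw [coeff_C]
  split_ifs
  · exact h
  · exact zero_mem _

lemma X_mem_PS {H : Subalgebra ℂ A} : (X : A[X]) ∈ PS H := by
  intro i
  rw [coeff_X]
  split_ifs
  · exact one_mem _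
  · exact zero_mem _

lemma adjoin_le_span {s : Set A} {V : Submodule ℂ A} (h1 : (1 : A) ∈ V)
    (hs : ∀ a ∈ s, ∀ m ∈ V, a * m ∈ V) : ∀ a ∈ Algebra.adjoin ℂ s, a ∈ V := by
  have key : ∀ a ∈ Algebra.adjoin ℂ s, ∀ m ∈ V, a * m ∈ V := by
    intro a ha
    induction ha using Algebra.adjoin_induction with
    | mem a h => exact hs a h
    | algebraMap r => intro m hm; rw [← Algebra.smul_def]; exact V.smul_mem r hm
    | add a b _ _ ha hb => intro m hm; rw [add_mul]; exact V.add_mem (ha m hm) (hb m hm)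
    | mul a b _ _ ha hb => intro m hm; rw [mul_assoc]; exact ha _ (hb m hm)
  intro a ha
  simpa using key a ha 1 h1

lemma smul_span {T : Set A} {V : Submodule ℂ A} (a : A) (h : ∀ t ∈ T, a * t ∈ V) :
    ∀ m ∈ Submodule.span ℂ T, a * m ∈ V := by
  intro m hm
  have : Submodule.span ℂ T ≤ V.comap (LinearMap.mulLeft ℂ a) := by
    rw [Submodule.span_le]; exact h
  exact this hm

variable (x : Aˣ) (Z : A)

/-- the monomials -/
def mon (p : ℤ × Fin 3) : A := ((x ^ p.1 : Aˣ) : A) * Z ^ (p.2 : ℕ)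

lemma mon_x (k l : ℤ) (i : Fin 3) : ((x ^ l : Aˣ) : A) * mon x Z (k, i) = mon x Z (l + k, i) := by
  simp [mon, zpow_add, mul_assoc]

/-- chart one -/
def S1 : Set (ℤ × Fin 3) := {p | 0 ≤ p.1}
/-- chart two -/
def S2 : Set (ℤ × Fin 3) := {p | p.1 ≤ - ((p.2 : ℕ) : ℤ)}
/-- chart two, shifted -/
def S3 : Set (ℤ × Fin 3) := {p | p.1 ≤ - ((p.2 : ℕ) : ℤ) - 2}

lemma zmon (hZ : Z ^ 3 = -1 - (x : A) ^ 3) (k : ℤ) (i : Fin 3) :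
    (∃ j : Fin 3, (j : ℕ) = i + 1 ∧ Z * mon x Z (k, i) = mon x Z (k, j)) ∨
    (i = 2 ∧ Z * mon x Z (k, i) = - mon x Z (k, 0) - mon x Z (k + 3, 0)) := by
  have e : ((x ^ (k + 3) : Aˣ) : A) = ((x ^ k : Aˣ) : A) * (x : A) ^ 3 := by
    rw [zpow_add, Units.val_mul]; norm_cast
  fin_cases i
  · left; refine ⟨1, rfl, ?_⟩; simp [mon]; ring
  · left; refine ⟨2, rfl, ?_⟩; simp [mon]; ring
  · right; refine ⟨rfl, ?_⟩; simp only [mon, e]; simp; linear_combination ((x ^ k : Aˣ) : A) * hZ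

lemma H1_le (hZ : Z ^ 3 = -1 - (x : A) ^ 3) : ∀ a ∈ Algebra.adjoin ℂ {(x : A), Z},
    a ∈ Submodule.span ℂ (mon x Z '' S1) := by
  have sub : ∀ p ∈ S1, mon x Z p ∈ Submodule.span ℂ (mon x Z '' S1) := fun p hp =>
    Submodule.subset_span ⟨p, hp, rfl⟩
  apply adjoin_le_span
  · have := sub (0, 0) (by simp [S1])
    simpa [mon] using this
  · rintro a (rfl | rfl)
    · apply smul_span
      rintro _ ⟨⟨k, i⟩, hk, rfl⟩
      have := mon_x x Z k 1 i
      rw [zpow_one] at this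
      rw [this]
      apply sub
      simp only [S1, Set.mem_ofPred_eq] at hk ⊢
      omega
    · apply smul_span
      rintro _ ⟨⟨k, i⟩, hk, rfl⟩
      simp only [S1, Set.mem_ofPred_eq] at hk
      rcases zmon x a hZ k i with ⟨j, hj, h⟩ | ⟨rfl, h⟩
      · rw [h]; exact sub _ (by simpa [S1] using hk)
      · rw [h]
        refine sub_mem (neg_mem (sub _ ?_)) (sub _ ?_)
        · simpa [S1] using hk
        · simp only [S1, Set.mem_ofPred_eq]; omega

lemma H2_le (hZ : Z ^ 3 = -1 - (x : A) ^ 3) :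
    ∀ a ∈ Algebra.adjoin ℂ {((x⁻¹ : Aˣ) : A), Z * ((x⁻¹ : Aˣ) : A)},
    a ∈ Submodule.span ℂ (mon x Z '' S2) := by
  have sub : ∀ p ∈ S2, mon x Z p ∈ Submodule.span ℂ (mon x Z '' S2) := fun p hp =>
    Submodule.subset_span ⟨p, hp, rfl⟩
  have hx := fun k => mon_x x Z k (-1)
  simp only [zpow_neg_one] at hx
  apply adjoin_le_span
  · have := sub (0, 0) (by simp [S2])
    simpa [mon] using this
  · rintro a (rfl | rfl)
    · apply smul_span
      rintro _ ⟨⟨k, i⟩, hk, rfl⟩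
      rw [hx]
      apply sub
      simp only [S2, Set.mem_ofPred_eq] at hk ⊢
      omega
    · apply smul_span
      rintro _ ⟨⟨k, i⟩, hk, rfl⟩
      simp only [S2, Set.mem_ofPred_eq] at hk
      rw [mul_assoc, hx]
      rcases zmon x Z hZ (-1 + k) i with ⟨j, hj, h⟩ | ⟨rfl, h⟩
      · rw [h]; apply sub; simp only [S2, Set.mem_ofPred_eq]; omega
      · rw [h]
        simp only [Fin.val_two] at hk
        refine sub_mem (neg_mem (sub _ ?_)) (sub _ ?_)
        · simp only [S2, Set.mem_ofPred_eq, Fin.val_zero]; omega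
        · simp only [S2, Set.mem_ofPred_eq, Fin.val_zero]; omega

lemma H3_le (hZ : Z ^ 3 = -1 - (x : A) ^ 3)
    (a) (ha : a ∈ Algebra.adjoin ℂ {((x⁻¹ : Aˣ) : A), Z * ((x⁻¹ : Aˣ) : A)}) :
    ((x ^ (-2 : ℤ) : Aˣ) : A) * a ∈ Submodule.span ℂ (mon x Z '' S3) := by
  refine smul_span _ ?_ a (H2_le x Z hZ a ha)
  rintro _ ⟨⟨k, i⟩, hk, rfl⟩
  rw [mon_x]
  refine Submodule.subset_span ⟨_, ?_, rfl⟩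
  simp only [S2, S3, Set.mem_ofPred_eq] at hk ⊢
  omega

lemma disj (hl : LinearIndependent ℂ (mon x Z)) (a : A)
    (h1 : a ∈ Submodule.span ℂ (mon x Z '' S1)) (h3 : a ∈ Submodule.span ℂ (mon x Z '' S3)) :
    a = 0 := by
  have hd : Disjoint S1 S3 := by
    rw [Set.disjoint_left]
    intro p h1 h3
    simp only [S1, S3, Set.mem_ofPred_eq] at h1 h3
    omega
  exact Submodule.disjoint_def.mp (hl.disjoint_span_image hd) a h1 h3

lemma notsum (hl : LinearIndependent ℂ (mon x Z)) (a b : A)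
    (h1 : a ∈ Submodule.span ℂ (mon x Z '' S1)) (h3 : b ∈ Submodule.span ℂ (mon x Z '' S3))
    (h : ((x ^ (-1 : ℤ) : Aˣ) : A) = a + b) : False := by
  have : mon x Z (-1, 0) ∈ Submodule.span ℂ (mon x Z '' (S1 ∪ S3)) := by
    rw [Set.image_union, Submodule.span_union]
    have e : mon x Z (-1, 0) = a + b := by rw [← h]; simp [mon]
    rw [e]
    exact Submodule.add_mem_sup h1 h3
  refine hl.notMem_span_image ?_ this
  rintro (h | h)
  · simp [S1] at h
  · simp [S3] at h

lemma polyContra (hZ : Z ^ 3 = -1 - (x : A) ^ 3) (hl : LinearIndependent ℂ (mon x Z)) (c : A)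
    (a b : A[X]) (ha : taylor c a ∈ PS (Algebra.adjoin ℂ {(x : A), Z}))
    (hb : b ∈ PS (Algebra.adjoin ℂ {((x⁻¹ : Aˣ) : A), Z * ((x⁻¹ : Aˣ) : A)}))
    (h : C ((x ^ (-1 : ℤ) : Aˣ) : A) = a + C ((x ^ (-2 : ℤ) : Aˣ) : A) * b) : False := by
  have hlead : a.leadingCoeff ∈ Submodule.span ℂ (mon x Z '' S1) := by
    apply H1_le x Z hZ
    rw [← coeff_taylor_natDegree (r := c)]
    exact ha _
  have hd : a.natDegree = 0 := by
    by_contra hne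
    have h1 := congrArg (fun p => p.coeff a.natDegree) h
    simp only [coeff_add, coeff_C_mul, coeff_C_of_ne_zero hne] at h1
    have h2 : a.leadingCoeff = 0 := by
      refine disj x Z hl _ hlead ?_
      have : a.leadingCoeff = - (((x ^ (-2 : ℤ) : Aˣ) : A) * b.coeff a.natDegree) := by
        rw [leadingCoeff]; linear_combination -h1
      rw [this]
      exact neg_mem (H3_le x Z hZ _ (hb _))
    rw [leadingCoeff_eq_zero] at h2
    rw [h2] at hne
    simp at hne
  have h1 := congrArg (fun p => p.coeff 0) h
  simp only [coeff_add, coeff_C_mul, coeff_C_zero] at h1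
  refine notsum x Z hl _ _ ?_ (H3_le x Z hZ _ (hb 0)) h1
  rw [leadingCoeff, hd] at hlead
  exact hlead
end
end LC

namespace LC
section
variable {S : Type} [CommRing S] [Algebra ℂ S]

/-- the substituted series -/
noncomputable def sv (w : Fin 5 → S) (i : Fin 5) : PowerSeries S :=
  PowerSeries.C (w i) * PowerSeries.X

lemma sv_has (w : Fin 5 → S) : MvPowerSeries.HasSubst (τ := Unit) (S := S) (sv w) := by
  apply MvPowerSeries.hasSubst_of_constantCoeff_zero
  intro i
  change PowerSeries.constantCoeff (sv w i) = 0
  simp [sv]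

/-- the substitution morphism -/
noncomputable def Psi (w : Fin 5 → S) : MvPowerSeries (Fin 5) ℂ →ₐ[ℂ] PowerSeries S :=
  MvPowerSeries.substAlgHom (sv_has w)

lemma Psi_X (w : Fin 5 → S) (i : Fin 5) : Psi w (MvPowerSeries.X i) =
    PowerSeries.C (w i) * PowerSeries.X :=
  MvPowerSeries.substAlgHom_X (sv_has w) i

lemma Psi_coeff (w : Fin 5 → S) (V : Submodule ℂ S) (N : ℕ)
    (h : ∀ d : Fin 5 →₀ ℕ, d.degree = N → (d.prod fun s e => w s ^ e) ∈ V)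
    (F : MvPowerSeries (Fin 5) ℂ) : PowerSeries.coeff N (Psi w F) ∈ V := by
  have e1 : Psi w F = MvPowerSeries.subst (sv w) F := by
    rw [Psi, MvPowerSeries.substAlgHom_apply]
  rw [e1, PowerSeries.coeff, MvPowerSeries.coeff_subst (sv_has w)]
  refine finsum_induction (fun a => a ∈ V) V.zero_mem (fun _ _ => V.add_mem) ?_
  intro d
  apply V.smul_mem
  have e2 : (d.prod fun s e => sv w s ^ e) =
      PowerSeries.C (d.prod fun s e => w s ^ e) * PowerSeries.X ^ d.degree := by
    simp only [sv, mul_pow]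
    rw [Finsupp.prod_mul, Finsupp.prod, Finsupp.prod, Finsupp.prod, map_prod,
      Finset.prod_pow_eq_pow_sum]
    simp only [map_pow]
    rfl
  have e3 : (MvPowerSeries.coeff (Finsupp.single () N)) (d.prod fun s e => sv w s ^ e) =
      PowerSeries.coeff N (PowerSeries.C (d.prod fun s e => w s ^ e) * PowerSeries.X ^ d.degree) := by
    rw [e2]; rfl
  rw [e3, PowerSeries.coeff_C_mul, PowerSeries.coeff_X_pow]
  split_ifs with hN
  · rw [mul_one]; exact h d hN.symm
  · rw [mul_zero]; exact V.zero_mem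
end

open MvPowerSeries in
lemma gradedNot (n : ℕ) (F G a b : MvPowerSeries (Fin 5) ℂ)
    (h : (X 0 * X 1) ^ n = X 0 ^ (n + 1) * a + X 1 ^ (n + 1) * b +
      (X 0 ^ 3 + X 1 ^ 3 + X 2 ^ 3) * F + (X 2 ^ 2 - X 3 * X 0 - X 4 * X 1) * G) : False := by
  cases n with
  | zero =>
    have := congrArg (constantCoeff (σ := Fin 5) (R := ℂ)) h
    simp at this
  | succ n =>
    obtain ⟨A, _, _, x, Z, hZ, hl⟩ := exists_ring
    let s : Polynomial A := Polynomial.X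
    let xi : A := ((x⁻¹ : Aˣ) : A)
    have hxi : (x : A) * xi = 1 := by simp [xi]
    let c : A := Z ^ 2 * xi
    let w : Fin 5 → Polynomial A := ![Polynomial.C (x : A), 1, Polynomial.C Z, Polynomial.C c - s,
      Polynomial.C (x : A) * s]
    let w' : Fin 5 → Polynomial A := ![1, Polynomial.C xi, Polynomial.C (Z * xi),
      Polynomial.C (Z * xi) ^ 2 - Polynomial.C xi * s, s]
    have hw : ∀ i, w i = Polynomial.C (x : A) * w' i := by
      have hC : Polynomial.C (x : A) * Polynomial.C xi = 1 := by rw [← map_mul, hxi, map_one]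
      intro i
      fin_cases i
      · simp [w, w']
      · simp [w, w', hC]
      · simp only [w, w', map_mul]; simp; linear_combination -Polynomial.C Z * hC
      · simp only [w, w', c, map_mul, map_pow]; simp
        linear_combination (s - Polynomial.C Z ^ 2 * Polynomial.C xi) * hC
      · simp [w, w']
    set H1 := Algebra.adjoin ℂ {(x : A), Z} with hH1
    set H2 := Algebra.adjoin ℂ {((x⁻¹ : Aˣ) : A), Z * ((x⁻¹ : Aˣ) : A)} with hH2
    have hx1 : (x : A) ∈ H1 := Algebra.subset_adjoin (by simp)
    have hz1 : Z ∈ H1 := Algebra.subset_adjoin (by simp)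
    have hx2 : xi ∈ H2 := Algebra.subset_adjoin (by simp [xi])
    have hz2 : Z * xi ∈ H2 := Algebra.subset_adjoin (by simp [xi])
    let tay : Polynomial A →ₐ[ℂ] Polynomial A := (Polynomial.taylorAlgHom c).restrictScalars ℂ
    have htay : ∀ p, tay p = Polynomial.taylor c p := fun p => rfl
    have hw1 : ∀ i, w i ∈ (PS H1).comap tay := by
      intro i
      rw [Subalgebra.mem_comap, htay]
      fin_cases i
      · simpa [w] using C_mem_PS hx1
      · simpa [w] using C_mem_PS (one_mem H1)
      · simpa [w] using C_mem_PS hz1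
      · simp [w, s]; exact X_mem_PS
      · simp [w, s]
        have : Polynomial.C (x : A) * (Polynomial.X + Polynomial.C c) =
          Polynomial.C (x : A) * Polynomial.X + Polynomial.C (Z ^ 2) := by
          rw [mul_add, ← map_mul]
          congr 2
          simp only [c]
          linear_combination Z ^ 2 * hxi
        rw [this]
        exact add_mem (mul_mem (C_mem_PS hx1) X_mem_PS) (C_mem_PS (pow_mem hz1 2))
    have hw2 : ∀ i, w' i ∈ PS H2 := by
      intro i
      fin_cases i
      · exact one_mem _
      · exact C_mem_PS hx2
      · exact C_mem_PS hz2
      · exact sub_mem (pow_mem (C_mem_PS hz2) 2) (mul_mem (C_mem_PS hx2) X_mem_PS)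
      · exact X_mem_PS
    have ha : PowerSeries.coeff n (Psi w a) ∈ Subalgebra.toSubmodule ((PS H1).comap tay) :=
      Psi_coeff w _ n (fun d _ => (Subalgebra.mem_toSubmodule _).mpr
        (prod_mem fun i _ => pow_mem (hw1 i) _)) a
    have hb : PowerSeries.coeff n (Psi w b) ∈ (Subalgebra.toSubmodule (PS H2)).comap
        (LinearMap.mulLeft ℂ (Polynomial.C xi ^ n)) := by
      apply Psi_coeff
      intro d hd
      have hC : Polynomial.C xi * Polynomial.C (x : A) = 1 := by
        rw [← map_mul, mul_comm, hxi, map_one]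
      have e : Polynomial.C xi ^ n * (d.prod fun s e => w s ^ e) = d.prod fun s e => w' s ^ e := by
        simp only [hw, mul_pow]
        rw [Finsupp.prod_mul]
        have : (d.prod fun _ b => Polynomial.C (x : A) ^ b) = Polynomial.C (x : A) ^ n := by
          rw [Finsupp.prod, Finset.prod_pow_eq_pow_sum, ← hd]; rfl
        rw [this, ← mul_assoc, ← mul_pow, hC, one_pow, one_mul]
      rw [Submodule.mem_comap, LinearMap.mulLeft_apply, e]
      exact (Subalgebra.mem_toSubmodule _).mpr (prod_mem fun i _ => pow_mem (hw2 i) _)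
    rw [Submodule.mem_comap, LinearMap.mulLeft_apply] at hb
    refine polyContra x Z hZ hl c _ _ ha hb ?_
    have h0 := congrArg (fun q => PowerSeries.coeff (n + (n + 1 + 1)) (Psi w q)) h
    simp only [map_add, map_mul, map_pow, map_sub, Psi_X] at h0
    have r1 : (PowerSeries.C (w 0) * PowerSeries.X) ^ 3 + (PowerSeries.C (w 1) * PowerSeries.X) ^ 3 +
        (PowerSeries.C (w 2) * PowerSeries.X) ^ 3 = (0 : PowerSeries (Polynomial A)) := by
      have : w 0 ^ 3 + w 1 ^ 3 + w 2 ^ 3 = 0 := by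
        simp only [w]; simp
        rw [← map_pow, ← map_pow, hZ]; simp; ring
      have h' := congrArg (PowerSeries.C (R := Polynomial A)) this
      simp only [map_add, map_pow, map_zero] at h'
      linear_combination h' * PowerSeries.X ^ 3
    have r2 : (PowerSeries.C (w 2) * PowerSeries.X) ^ 2 -
        (PowerSeries.C (w 3) * PowerSeries.X) * (PowerSeries.C (w 0) * PowerSeries.X) -
        (PowerSeries.C (w 4) * PowerSeries.X) * (PowerSeries.C (w 1) * PowerSeries.X)
        = (0 : PowerSeries (Polynomial A)) := by
      have : w 2 ^ 2 - w 3 * w 0 - w 4 * w 1 = 0 := by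
        simp only [w]; simp
        have : Polynomial.C (x : A) * Polynomial.C c = Polynomial.C Z ^ 2 := by
          rw [← map_mul, ← map_pow]
          congr 1
          simp only [c]
          linear_combination Z ^ 2 * hxi
        linear_combination - this
      have h' := congrArg (PowerSeries.C (R := Polynomial A)) this
      simp only [map_sub, map_mul, map_pow, map_zero] at h'
      linear_combination h' * PowerSeries.X ^ 2
    rw [r1, r2, zero_mul, zero_mul, map_zero, add_zero, add_zero] at h0
    have e0 : ∀ t : PowerSeries (Polynomial A), ∀ p : Polynomial A,
        PowerSeries.coeff (n + (n + 1 + 1)) ((PowerSeries.C p * PowerSeries.X) ^ (n + 1 + 1) * t) =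
        p ^ (n + 1 + 1) * PowerSeries.coeff n t := by
      intro t p
      rw [mul_pow, mul_assoc, ← map_pow, PowerSeries.coeff_C_mul, PowerSeries.coeff_X_pow_mul]
    rw [e0, e0] at h0
    have e1 : PowerSeries.coeff (n + (n + 1 + 1)) ((PowerSeries.C (w 0) * PowerSeries.X *
       (PowerSeries.C (w 1) * PowerSeries.X)) ^ (n + 1)) = w 0 ^ (n + 1) := by
      have : (PowerSeries.C (w 0) * PowerSeries.X *
       (PowerSeries.C (w 1) * PowerSeries.X)) ^ (n + 1) = PowerSeries.C (w 0 ^ (n + 1)) *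
          PowerSeries.X ^ (n + (n + 1 + 1)) := by
        simp only [w]; simp; ring
      rw [this, PowerSeries.coeff_C_mul, PowerSeries.coeff_X_pow_self, mul_one]
    rw [e1] at h0
    have hw0 : w 0 = Polynomial.C (x : A) := rfl
    have hw1' : w 1 = 1 := rfl
    rw [hw0, hw1'] at h0
    have hC : Polynomial.C xi * Polynomial.C (x : A) = 1 := by
      rw [← map_mul, mul_comm, hxi, map_one]
    have hCn : ∀ k, Polynomial.C xi ^ k * Polynomial.C (x : A) ^ k = 1 := by
      intro k; rw [← mul_pow, hC, one_pow]
    have t1 : ((x ^ (-1 : ℤ) : Aˣ) : A) = xi := by simp [xi]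
    have t2 : ((x ^ (-2 : ℤ) : Aˣ) : A) = xi ^ 2 := by
      simp only [xi]; rw [← Units.val_pow_eq_pow_val]; congr 1
    rw [t1, t2, map_pow]
    linear_combination Polynomial.C xi ^ (n + 2) * h0 - Polynomial.C xi * hCn (n + 1) + 
      PowerSeries.coeff n (Psi w a) * hCn (n + 2)
end LC

namespace LC
section
open RingTheory.Sequence

lemma wr_append {R : Type} [CommRing R] (rs : List R) (r : R) :
    IsWeaklyRegular R (rs ++ [r]) ↔ IsWeaklyRegular R rs ∧
      ∀ a, r * a ∈ Ideal.ofList rs → a ∈ Ideal.ofList rs := by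
  rw [isWeaklyRegular_append_iff, isWeaklyRegular_singleton_iff]
  refine and_congr_right' ?_
  rw [isSMulRegular_quotient_iff_mem_of_smul_mem]
  simp

lemma wr_pow {R : Type} [CommRing R] {rs : List R} {r : R} (n : ℕ)
    (h : IsWeaklyRegular R (rs ++ [r])) : IsWeaklyRegular R (rs ++ [r ^ n]) := by
  rw [wr_append] at h ⊢
  refine ⟨h.1, ?_⟩
  induction n with
  | zero => intro a ha; simpa using ha
  | succ n ih =>
    intro a ha
    rw [pow_succ, mul_assoc] at ha
    exact h.2 _ (ih _ ha)

lemma wr_congr {R : Type} [CommRing R] {rs : List R} {r r' : R} (hr : r' - r ∈ Ideal.ofList rs)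
    (h : IsWeaklyRegular R (rs ++ [r])) : IsWeaklyRegular R (rs ++ [r']) := by
  rw [wr_append] at h ⊢
  refine ⟨h.1, fun a ha => h.2 a ?_⟩
  have : r * a = r' * a - (r' - r) * a := by ring
  rw [this]
  exact sub_mem ha (Ideal.mul_mem_right _ _ hr)

open MvPowerSeries

lemma mem_span_X (s : Finset (Fin 5)) (F : MvPowerSeries (Fin 5) ℂ) :
    F ∈ Ideal.span ((X : Fin 5 → MvPowerSeries (Fin 5) ℂ) '' s) ↔
      ∀ m : Fin 5 →₀ ℕ, (∀ j ∈ s, m j = 0) → coeff m F = 0 := by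
  constructor
  · intro h
    induction h using Submodule.span_induction with
    | mem x h =>
      obtain ⟨j, hj, rfl⟩ := h
      intro m hm
      rw [coeff_X, if_neg]
      rintro rfl
      simpa using hm j hj
    | zero => intro m _; simp
    | add a b _ _ ha hb => intro m hm; rw [map_add, ha m hm, hb m hm, add_zero]
    | smul a b _ hb =>
      intro m hm
      rw [smul_eq_mul, coeff_mul]
      refine Finset.sum_eq_zero fun p hp => ?_
      rw [Finset.HasAntidiagonal.mem_antidiagonal] at hp
      rw [hb, mul_zero]
      intro j hj
      have := hm j hj
      rw [← hp, Finsupp.add_apply] at this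
      omega
  · induction s using Finset.induction_on generalizing F with
    | empty =>
      intro h
      have : F = 0 := by ext m; simpa using h m
      rw [this]; exact zero_mem _
    | insert i s hi ih =>
      intro h
      let F0 : MvPowerSeries (Fin 5) ℂ := fun m => if m i = 0 then coeff m F else 0
      have hF0 : ∀ m, coeff m F0 = if m i = 0 then coeff m F else 0 := fun m => rfl
      have h1 : F0 ∈ Ideal.span ((X : Fin 5 → MvPowerSeries (Fin 5) ℂ) '' s) := by
        apply ih
        intro m hm
        rw [hF0]
        split_ifs with hmi
        · apply h
          intro j hj
          rcases Finset.mem_insert.mp hj with rfl | hj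
          · exact hmi
          · exact hm j hj
        · rfl
      have h2 : (X i : MvPowerSeries (Fin 5) ℂ) ∣ F - F0 := by
        rw [X_dvd_iff]
        intro m hm
        rw [map_sub, hF0, if_pos hm, sub_self]
      obtain ⟨q, hq⟩ := h2
      have : F = F0 + X i * q := by rw [← hq]; ring
      rw [this]
      refine add_mem (Ideal.span_mono (Set.image_mono (by simp)) h1)
        (Ideal.mul_mem_right _ _ (Ideal.subset_span ⟨i, by simp, rfl⟩))

lemma X_reg (s : Finset (Fin 5)) (i : Fin 5) (hi : i ∉ s) (a : MvPowerSeries (Fin 5) ℂ)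
    (h : X i * a ∈ Ideal.span ((X : Fin 5 → MvPowerSeries (Fin 5) ℂ) '' s)) :
    a ∈ Ideal.span ((X : Fin 5 → MvPowerSeries (Fin 5) ℂ) '' s) := by
  rw [mem_span_X] at h ⊢
  intro m hm
  have := h (Finsupp.single i 1 + m) (by
    intro j hj
    have : i ≠ j := by rintro rfl; exact hi hj
    simp [Finsupp.single_apply, this, hm j hj])
  rw [X, coeff_add_monomial_mul, one_mul] at this
  exact this

lemma wr_X (s : List (Fin 5)) (hs : s.Nodup) :
    IsWeaklyRegular (MvPowerSeries (Fin 5) ℂ) (s.map (X : Fin 5 → MvPowerSeries (Fin 5) ℂ)) := by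
  induction s using List.reverseRecOn with
  | nil => simp
  | append_singleton s i ih =>
    rw [List.map_append, List.map_singleton, wr_append]
    have hs' := List.nodup_append.mp hs
    have e : Ideal.ofList (s.map (X : Fin 5 → MvPowerSeries (Fin 5) ℂ)) =
      Ideal.span ((X : Fin 5 → MvPowerSeries (Fin 5) ℂ) '' s.toFinset) := by
      rw [Ideal.ofList]; congr 1; ext; simp
    refine ⟨ih hs'.1, ?_⟩
    rw [e]
    intro a
    apply X_reg
    intro hi
    exact hs'.2.2 i (by simpa using hi) i (by simp) rfl

lemma wr_main (N : ℕ) (hN : N ≠ 0) : IsWeaklyRegular (MvPowerSeries (Fin 5) ℂ)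
    [(X 0 ^ 3 + X 1 ^ 3 + X 2 ^ 3 : MvPowerSeries (Fin 5) ℂ), X 2 ^ 2 - X 3 * X 0 - X 4 * X 1, X 1 ^ N, X 3 ^ N, X 4 ^ N] := by
  set P := MvPowerSeries (Fin 5) ℂ
  set f : P := X 0 ^ 3 + X 1 ^ 3 + X 2 ^ 3 with hf
  set g : P := X 2 ^ 2 - X 3 * X 0 - X 4 * X 1 with hg
  let mm := IsLocalRing.maximalIdeal P
  have hX : ∀ i, (X i : P) ∈ mm := by
    intro i
    rw [IsLocalRing.mem_maximalIdeal, mem_nonunits_iff, isUnit_iff_constantCoeff]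
    simp
  have hXn : ∀ i, ∀ n ≠ 0, (X i : P) ^ n ∈ mm := fun i n hn => Ideal.pow_mem_of_mem _ (hX i) n (Nat.pos_of_ne_zero hn)
  have hfm : f ∈ mm := add_mem (add_mem (hXn _ 3 (by norm_num)) (hXn _ 3 (by norm_num))) (hXn _ 3 (by norm_num))
  have hgm : g ∈ mm := sub_mem (sub_mem (hXn _ 2 (by norm_num)) (Ideal.mul_mem_left _ _ (hX _))) (Ideal.mul_mem_left _ _ (hX _))
  have perm : ∀ {rs rs' : List P}, IsWeaklyRegular P rs → List.Perm rs rs' → (∀ r ∈ rs, r ∈ mm) →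
    IsWeaklyRegular P rs' := fun h1 h2 h3 =>
      IsLocalRing.isWeaklyRegular_of_perm_of_subset_maximalIdeal h1 h2 h3
  have s1 : IsWeaklyRegular P ([(X 1 : P), X 3, X 4, X 2] ++ [(X 0 : P)]) := by
    simpa using wr_X [1, 3, 4, 2, 0] (by decide)
  have s2 := wr_pow 3 s1
  have s3 : IsWeaklyRegular P ([(X 1 : P), X 3, X 4, X 0 ^ 3] ++ [(X 2 : P)]) := by
    refine perm s2 ?_ ?_
    · exact ((List.Perm.swap _ _ []).cons _).cons _ |>.cons _
    · simp [hX, hXn]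
  have s4 := wr_pow 2 s3
  have s5 : IsWeaklyRegular P ([(X 1 : P), X 3, X 4, X 0 ^ 3] ++ [g]) := by
    refine wr_congr ?_ s4
    have : g - X 2 ^ 2 = - (X 0 * X 3) - X 4 * X 1 := by rw [hg]; ring
    rw [this]
    refine sub_mem (neg_mem (Ideal.mul_mem_left _ _ (Ideal.subset_span ?_)))
      (Ideal.mul_mem_left _ _ (Ideal.subset_span ?_))
    · simp
    · simp
  have s6 : IsWeaklyRegular P ([(X 1 : P), X 3, X 4, g] ++ [(X 0 ^ 3 : P)]) := by
    refine perm s5 ?_ ?_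
    · exact ((List.Perm.swap _ _ []).cons _).cons _ |>.cons _
    · simp [hX, hXn, hgm]
  have s7 : IsWeaklyRegular P ([(X 1 : P), X 3, X 4, g] ++ [f]) := by
    refine wr_congr ?_ s6
    have : f - X 0 ^ 3 = (X 1 ^ 2 + X 2 * X 4) * X 1 + (X 2 * X 0) * X 3 + X 2 * g := by
      rw [hg, hf]; ring
    rw [this]
    refine add_mem (add_mem (Ideal.mul_mem_left _ _ (Ideal.subset_span ?_))
      (Ideal.mul_mem_left _ _ (Ideal.subset_span ?_))) (Ideal.mul_mem_left _ _ (Ideal.subset_span ?_))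
    · simp
    · simp
    · simp
  have s8 : IsWeaklyRegular P ([f, g, X 3, X 4] ++ [(X 1 : P)]) := by
    refine perm s7 ?_ ?_
    · rw [← Multiset.coe_eq_coe]
      simp only [List.cons_append, List.nil_append, ← Multiset.cons_coe, Multiset.coe_nil]
      simp only [Multiset.cons_zero, ← Multiset.singleton_add]; abel
    · simp [hX, hXn, hgm, hfm]
  have s9 : IsWeaklyRegular P ([f, g, X 1 ^ N, X 4] ++ [(X 3 : P)]) := by
    refine perm (wr_pow N s8) ?_ ?_
    · rw [← Multiset.coe_eq_coe]
      simp only [List.cons_append, List.nil_append, ← Multiset.cons_coe, Multiset.coe_nil]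
      simp only [Multiset.cons_zero, ← Multiset.singleton_add]; abel
    · simp [hX, hXn, hgm, hfm, hN]
  have s10 : IsWeaklyRegular P ([f, g, X 1 ^ N, X 3 ^ N] ++ [(X 4 : P)]) := by
    refine perm (wr_pow N s9) ?_ ?_
    · exact ((List.Perm.swap _ _ []).cons _).cons _ |>.cons _
    · simp [hX, hXn, hgm, hfm, hN]
  exact wr_pow N s10
end
end LC

namespace LC

/-- depth at least two of a triple on a module, elementwise. -/
structure Dep {R : Type} [CommRing R] (s : Fin 3 → R) (M : Type) [AddCommGroup M] [Module R M] :
    Prop where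
  inj : ∀ m : M, (∀ i, s i • m = 0) → m = 0
  sur : ∀ c : Fin 3 → M, (∀ i j, s j • c i = s i • c j) → ∃ m, ∀ i, c i = s i • m

lemma depth_mod {R : Type} [CommRing R] [IsLocalRing R] [IsNoetherianRing R] {M : Type}
    [AddCommGroup M] [Module R M] [Module.Finite R M] (P : Ideal R) (h : R) (hh : ¬ IsUnit h)
    (s : Fin 3 → R) (hs : ∀ i, s i ∈ P ⊔ Ideal.span {h}) (D : Dep s M) (e : M)
    (he : ∀ p ∈ P, p • e = 0) : e = 0 := by
  let T : Submodule R M :=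
    { carrier := {e | ∀ p ∈ P, p • e = 0}
      add_mem' := by
        intro a b ha hb p hp
        rw [smul_add, ha p hp, hb p hp, add_zero]
      zero_mem' := by
        intro p hp
        simp
      smul_mem' := by
        intro c a ha p hp
        rw [smul_comm, ha p hp, smul_zero] }
  have hT : ∀ e, e ∈ T ↔ ∀ p ∈ P, p • e = 0 := fun e => Iff.rfl
  have key : T ≤ Ideal.span {h} • T := by
    intro e he
    rw [hT] at he
    have h1 : ∀ i, ∃ p ∈ P, ∃ a, s i = p + a * h := by
      intro i
      obtain ⟨p, hp, q, hq, hpq⟩ := Submodule.mem_sup.1 (hs i)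
      obtain ⟨a, rfl⟩ := Ideal.mem_span_singleton'.1 hq
      exact ⟨p, hp, a, hpq.symm⟩
    choose p hp a ha using h1
    have hse : ∀ i, s i • e = h • a i • e := by
      intro i
      rw [ha i, add_smul, he _ (hp i), zero_add, mul_comm, mul_smul]
    obtain ⟨m, hm⟩ := D.sur (fun i => a i • e) (by
      intro i j
      change s j • a i • e = s i • a j • e
      rw [smul_comm (s j), hse, smul_comm (s i), hse]
      simp only [smul_smul]
      congr 1
      ring)
    replace hm : ∀ i, a i • e = s i • m := hm
    have hem : e = h • m := by
      rw [← sub_eq_zero]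
      apply D.inj
      intro i
      rw [smul_sub, hse, hm, smul_comm, sub_self]
    have hmT : m ∈ T := by
      rw [hT]
      intro q hq
      apply D.inj
      intro i
      rw [smul_comm, ← hm, smul_comm, he q hq, smul_zero]
    rw [hem]
    exact Submodule.smul_mem_smul (Ideal.mem_span_singleton_self h) hmT
  have hb := Submodule.eq_bot_of_le_smul_of_le_jacobson_bot (Ideal.span {h}) T
    (IsNoetherian.noetherian T) key (by
      rw [IsLocalRing.jacobson_eq_maximalIdeal ⊥ bot_ne_top, Ideal.span_singleton_le_iff_mem]
      exact hh)
  have : e ∈ T := he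
  rw [hb] at this
  simpa using this

lemma dep_self {R : Type} [CommRing R] (s : Fin 3 → R) (r1 : ∀ a, s 0 * a = 0 → a = 0)
    (r2 : ∀ a, s 1 * a ∈ Ideal.span {s 0} → a ∈ Ideal.span {s 0}) : Dep s R := by
  refine ⟨fun m hm => r1 m (hm 0), ?_⟩
  intro c hc
  simp only [smul_eq_mul] at hc
  have h1 : c 0 ∈ Ideal.span {s 0} := by
    apply r2
    rw [hc 0 1]
    exact Ideal.mul_mem_right _ _ (Ideal.mem_span_singleton_self _)
  obtain ⟨m, hm⟩ := Ideal.mem_span_singleton'.1 h1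
  refine ⟨m, ?_⟩
  intro i
  rw [← sub_eq_zero]
  apply r1
  rw [smul_eq_mul]
  have := hc i 0
  rw [← hm] at this
  linear_combination this

lemma dep_quot {R : Type} [CommRing R] (s : Fin 3 → R) (r1 : ∀ a, s 0 * a = 0 → a = 0)
    (r2 : ∀ a, s 1 * a ∈ Ideal.span {s 0} → a ∈ Ideal.span {s 0})
    (r3 : ∀ a, s 2 * a ∈ Ideal.span {s 0, s 1} → a ∈ Ideal.span {s 0, s 1})
    (w : R) (hw : ∀ a, w * a = 0 → a = 0) : Dep s (R ⧸ Ideal.span {w}) := by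
  have D := dep_self s r1 r2
  have hq : ∀ a b : R, (Ideal.Quotient.mk (Ideal.span {w}) a = Ideal.Quotient.mk _ b) ↔
      ∃ t, a - b = w * t := by
    intro a b
    rw [Ideal.Quotient.eq, Ideal.mem_span_singleton]
    rfl
  have hsm : ∀ a b : R, a • Ideal.Quotient.mk (Ideal.span {w}) b = Ideal.Quotient.mk _ (a * b) :=
    fun a b => rfl
  constructor
  · intro m hm
    obtain ⟨m, rfl⟩ := Ideal.Quotient.mk_surjective m
    simp only [hsm] at hm
    simp only [← map_zero (Ideal.Quotient.mk (Ideal.span {w})), hq] at hm ⊢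
    choose t ht using hm
    obtain ⟨m', hm'⟩ := D.sur t (by
      intro i j
      simp only [smul_eq_mul]
      rw [← sub_eq_zero]
      apply hw
      linear_combination s i * ht j - s j * ht i)
    refine ⟨m', ?_⟩
    rw [← sub_eq_zero]
    apply r1
    have := hm' 0
    rw [smul_eq_mul] at this
    linear_combination ht 0 + w * this
  · intro c hc
    choose c' hc' using fun i => Ideal.Quotient.mk_surjective (c i)
    obtain rfl : (fun i => Ideal.Quotient.mk (Ideal.span {w}) (c' i)) = c := funext hc'
    clear hc'
    simp only [hsm, hq] at hc
    obtain ⟨t01, h01⟩ := hc 0 1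
    obtain ⟨t02, h02⟩ := hc 0 2
    obtain ⟨t12, h12⟩ := hc 1 2
    have e1 : s 2 * t01 - s 1 * t02 + s 0 * t12 = 0 := by
      apply hw
      linear_combination -s 2 * h01 + s 1 * h02 - s 0 * h12
    have m1 : t01 ∈ Ideal.span {s 0, s 1} := by
      apply r3
      rw [Ideal.mem_span_pair]
      exact ⟨-t12, t02, by linear_combination -e1⟩
    obtain ⟨d1, d0, hd⟩ := Ideal.mem_span_pair.1 m1
    have m2 : s 2 * d0 - t02 ∈ Ideal.span {s 0} := by
      apply r2
      rw [Ideal.mem_span_singleton']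
      exact ⟨-t12 - s 2 * d1, by linear_combination -e1 - s 2 * hd⟩
    obtain ⟨d2, hd2⟩ := Ideal.mem_span_singleton'.1 m2
    -- t01 = s1 d0 + s0 d1,  t02 = s2 d0 - s0 d2
    have h3 : t12 = - s 2 * d1 - s 1 * d2 := by
      rw [← sub_eq_zero]
      apply r1
      linear_combination e1 + s 2 * hd + s 1 * hd2
    let k : Fin 3 → R := ![c' 0 - w * d0, c' 1 + w * d1, c' 2 - w * d2]
    have k0 : k 0 = c' 0 - w * d0 := rfl
    have k1 : k 1 = c' 1 + w * d1 := rfl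
    have k2 : k 2 = c' 2 - w * d2 := rfl
    have K01 : s 1 * k 0 = s 0 * k 1 := by
      rw [k0, k1]; linear_combination h01 - w * hd
    have K02 : s 2 * k 0 = s 0 * k 2 := by
      rw [k0, k2]; linear_combination h02 + w * hd2
    have K12 : s 2 * k 1 = s 1 * k 2 := by
      rw [k1, k2]; linear_combination h12 + w * h3
    obtain ⟨m, hm⟩ := D.sur k (by
      intro i j
      simp only [smul_eq_mul]
      fin_cases i <;> fin_cases j <;> first | rfl | exact K01 | exact K02 | exact K12 | exact K01.symm | exact K02.symm | exact K12.symm)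
    refine ⟨Ideal.Quotient.mk _ m, ?_⟩
    simp only [smul_eq_mul] at hm
    intro i
    simp only [hsm, hq]
    have g0 : c' 0 - s 0 * m = w * d0 := by linear_combination hm 0 - k0
    have g1 : c' 1 - s 1 * m = w * (-d1) := by linear_combination hm 1 - k1
    have g2 : c' 2 - s 2 * m = w * d2 := by linear_combination hm 2 - k2
    fin_cases i
    · exact ⟨d0, g0⟩
    · exact ⟨-d1, g1⟩
    · exact ⟨d2, g2⟩

lemma no_height_one {R : Type} [CommRing R] [IsLocalRing R] [IsNoetherianRing R]
    (P : PrimeSpectrum R) (hP : Order.height P = 1)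
    (s : Fin 3 → R) (r1 : ∀ a, s 0 * a = 0 → a = 0)
    (r2 : ∀ a, s 1 * a ∈ Ideal.span {s 0} → a ∈ Ideal.span {s 0})
    (r3 : ∀ a, s 2 * a ∈ Ideal.span {s 0, s 1} → a ∈ Ideal.span {s 0, s 1})
    (h : R) (hh : ¬ IsUnit h) (hs : ∀ i, s i ∈ P.asIdeal ⊔ Ideal.span {h}) : False := by
  by_cases hd : Disjoint (P.asIdeal : Set R) (nonZeroDivisors R)
  · have := Ideal.bot_lt_annihilator_of_disjoint_nonZeroDivisors hd
    obtain ⟨-, e, he, he0⟩ := SetLike.lt_iff_le_and_exists.1 this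
    apply he0
    rw [Submodule.mem_bot]
    apply depth_mod P.asIdeal h hh s hs (dep_self s r1 r2)
    intro p hp
    rw [Submodule.mem_annihilator] at he
    have := he p hp
    rw [smul_eq_mul] at this ⊢
    rw [mul_comm, this]
  · obtain ⟨w, hwP, hw⟩ := Set.not_disjoint_iff.1 hd
    have hmin : P.asIdeal ∈ (Module.annihilator R (R ⧸ Ideal.span {w})).minimalPrimes := by
      rw [Ideal.annihilator_quotient]
      refine ⟨⟨P.isPrime, by rw [Ideal.span_singleton_le_iff_mem]; exact hwP⟩, ?_⟩
      rintro Q ⟨hQ, hwQ⟩ hQP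
      by_contra hPQ
      have hlt : (⟨Q, hQ⟩ : PrimeSpectrum R) < P := by
        rw [← PrimeSpectrum.asIdeal_lt_asIdeal]
        exact lt_of_le_not_ge hQP hPQ
      have h0 : Order.height (⟨Q, hQ⟩ : PrimeSpectrum R) = 0 := by
        have := Order.height_strictMono hlt (by
          refine lt_of_le_of_lt (Order.height_mono hlt.le) ?_
          rw [hP]
          exact ENat.natCast_lt_top 1)
        rw [hP] at this
        exact Order.lt_one_iff.1 this
      rw [Order.height_eq_zero] at h0
      have hm : Q ∈ minimalPrimes R := by
        refine ⟨⟨hQ, bot_le⟩, ?_⟩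
        rintro Q' ⟨hQ', -⟩ hle
        exact h0 (b := ⟨Q', hQ'⟩) hle
      exact Set.disjoint_left.1 (Ideal.disjoint_nonZeroDivisors_of_mem_minimalPrimes hm)
        (hwQ (Ideal.mem_span_singleton_self w)) hw
    have hass := Module.associatedPrimes.minimalPrimes_annihilator_subset_associatedPrimes R _ hmin
    rw [AssociatedPrimes.mem_iff, isAssociatedPrime_iff] at hass
    obtain ⟨hpr, e, he⟩ := hass
    have he0 : e = 0 := by
      apply depth_mod P.asIdeal h hh s hs (dep_quot s r1 r2 r3 w
        (fun a ha => (mul_left_mem_nonZeroDivisors_eq_zero_iff hw).1 ha))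
      intro p hp
      rw [he] at hp
      simpa using hp
    apply hpr.ne_top
    rw [he, he0]
    rw [Ideal.eq_top_iff_one]
    simp
end LC

namespace LC
lemma trace_dvd {B K L : Type} (A : Type) [CommRing B] [IsDomain B] [IsIntegrallyClosed B] [Field K] [Field L]
    [CharZero K] [Algebra B K] [IsFractionRing B K] [Algebra B L] [Algebra K L]
    [IsScalarTower B K L] [FiniteDimensional K L]
    [Field A] [IsAlgClosed A] [Algebra K A] [Algebra B A] [IsScalarTower B K A] (w : B) (hw0 : w ≠ 0)
    (hw : ∀ b, w ∣ b ^ 3 → w ∣ b) (z t : L) (hz : z ^ 3 = - algebraMap B L w)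
    (ht : IsIntegral B t) : ∃ b : B, Algebra.trace K L (t / z ^ 2) = algebraMap B K b := by
  have hzi : IsIntegral B z := by
    apply IsIntegral.of_pow (n := 3) (by norm_num)
    rw [hz]
    exact (isIntegral_algebraMap).neg
  have hwK : algebraMap B K w ≠ 0 := by simpa using hw0
  have hwL : algebraMap B L w ≠ 0 := by
    rw [IsScalarTower.algebraMap_apply B K L]
    simpa using hw0
  have hz0 : z ≠ 0 := by
    rintro rfl
    apply hwL
    linear_combination hz
  have hb : IsIntegral B (Algebra.trace K L (t * z)) := by
    exact Algebra.isIntegral_trace (ht.mul hzi)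
  obtain ⟨b, hb⟩ := IsIntegrallyClosed.isIntegral_iff.1 hb
  obtain ⟨z0, hz0A⟩ := IsAlgClosed.exists_pow_nat_eq (-(algebraMap B A w)) (n := 3) (by norm_num)
  have hwA : algebraMap B A w ≠ 0 := by
    rw [IsScalarTower.algebraMap_apply B K A]
    simpa using hw0
  have hz00 : z0 ≠ 0 := by
    rintro rfl
    apply hwA
    linear_combination hz0A
  let θ : A := ∑ σ : L →ₐ[K] A, σ t * (σ z / z0)
  have hθ : IsIntegral B θ := by
    apply IsIntegral.sum
    intro σ _
    apply IsIntegral.mul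
    · exact ht.map (σ.restrictScalars B)
    · apply IsIntegral.of_pow (n := 3) (by norm_num)
      have : (σ z / z0) ^ 3 = 1 := by
        rw [div_pow, ← map_pow, hz, hz0A, map_neg, IsScalarTower.algebraMap_apply B K L,
          AlgHom.commutes, ← IsScalarTower.algebraMap_apply B K A]
        exact div_self (neg_ne_zero.2 hwA)
      rw [this]
      exact isIntegral_one
  have hbθ : algebraMap B A b = z0 * θ := by
    rw [IsScalarTower.algebraMap_apply B K A, hb, trace_eq_sum_embeddings A, Finset.mul_sum]
    apply Finset.sum_congr rfl
    intro σ _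
    rw [map_mul]
    field_simp
  have h3 : algebraMap K A (- (algebraMap B K b) ^ 3 / algebraMap B K w) = θ ^ 3 := by
    rw [map_div₀, map_neg, map_pow, ← IsScalarTower.algebraMap_apply B K A,
      ← IsScalarTower.algebraMap_apply B K A, hbθ, mul_pow, hz0A]
    field_simp
  have h4 : IsIntegral B (- (algebraMap B K b) ^ 3 / algebraMap B K w) := by
    rw [← isIntegral_algebraMap_iff (algebraMap K A).injective, h3]
    exact hθ.pow 3
  obtain ⟨c, hc⟩ := IsIntegrallyClosed.isIntegral_iff.1 h4
  have h5 : w ∣ b ^ 3 := by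
    refine ⟨-c, ?_⟩
    apply IsFractionRing.injective B K
    rw [map_mul, map_neg, hc, map_pow]
    field_simp
  obtain ⟨d, hd⟩ := hw b h5
  refine ⟨-d, ?_⟩
  have h6 : t / z ^ 2 = (-(algebraMap B K w)⁻¹) • (t * z) := by
    rw [Algebra.smul_def, map_neg, map_inv₀, ← IsScalarTower.algebraMap_apply B K L]
    field_simp
    linear_combination t * hz
  rw [h6, map_smul, ← hb, hd, map_mul, map_neg, smul_eq_mul]
  field_simp

lemma trace_contra_aux {B D K L : Type} [CommRing B] [IsDomain B] [IsIntegrallyClosed B] [CharZero B]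
    [CommRing D] [IsDomain D] [Algebra B D] [Module.Finite B D]
    [Field K] [Field L] [CharZero K] [Algebra B K] [IsFractionRing B K] [Algebra B L]
    [Algebra D L] [IsFractionRing D L] [IsScalarTower B D L] [Algebra K L]
    [IsScalarTower B K L] [FiniteDimensional K L]
    (hinj : Function.Injective (algebraMap B D)) (w x y : B) (hw0 : w ≠ 0)
    (hw : ∀ b, w ∣ b ^ 3 → w ∣ b) (z u v : D) (hz : z ^ 3 = - algebraMap B D w)
    (h : z ^ 2 = u * algebraMap B D x + v * algebraMap B D y) :
    ∃ n : ℕ, n ≠ 0 ∧ (n : B) ∈ Ideal.span {x, y} := by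
  obtain ⟨a, ha⟩ := trace_dvd (K := K) (AlgebraicClosure K) w hw0 hw (algebraMap D L z) (algebraMap D L u)
    (by rw [← map_pow, hz, map_neg, ← IsScalarTower.algebraMap_apply])
    ((Algebra.IsIntegral.isIntegral (R := B) u).map (IsScalarTower.toAlgHom B D L))
  obtain ⟨b, hb⟩ := trace_dvd (K := K) (AlgebraicClosure K) w hw0 hw (algebraMap D L z) (algebraMap D L v)
    (by rw [← map_pow, hz, map_neg, ← IsScalarTower.algebraMap_apply])
    ((Algebra.IsIntegral.isIntegral (R := B) v).map (IsScalarTower.toAlgHom B D L))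
  refine ⟨Module.finrank K L, Module.finrank_pos.ne', ?_⟩
  rw [Ideal.mem_span_pair]
  refine ⟨a, b, ?_⟩
  have hz0 : algebraMap D L z ≠ 0 := by
    intro h0
    have : z = 0 := by simpa using h0
    rw [this] at hz
    apply hw0
    apply hinj
    rw [map_zero]
    linear_combination hz
  apply IsFractionRing.injective B K
  rw [map_add, map_mul, map_mul, ← ha, ← hb]
  have h1 : (1 : L) = (algebraMap B K x) • (algebraMap D L u / algebraMap D L z ^ 2) +
      (algebraMap B K y) • (algebraMap D L v / algebraMap D L z ^ 2) := by
    rw [Algebra.smul_def, Algebra.smul_def, ← IsScalarTower.algebraMap_apply,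
      ← IsScalarTower.algebraMap_apply]
    field_simp
    rw [← map_pow, h, map_add, map_mul, map_mul, ← IsScalarTower.algebraMap_apply,
      ← IsScalarTower.algebraMap_apply]
    ring
  have h2 := Algebra.trace_algebraMap (R := K) (S := L) (1 : K)
  rw [map_one, h1, map_add, map_smul, map_smul, smul_eq_mul, smul_eq_mul] at h2
  rw [map_natCast, mul_comm, mul_comm _ (algebraMap B K y), h2]
  simp

lemma trace_contra {B D : Type} [CommRing B] [IsDomain B] [IsIntegrallyClosed B] [CharZero B]
    [CommRing D] [IsDomain D] [Algebra B D] [Module.Finite B D]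
    (hinj : Function.Injective (algebraMap B D)) (w x y : B) (hw0 : w ≠ 0)
    (hw : ∀ b, w ∣ b ^ 3 → w ∣ b) (z u v : D) (hz : z ^ 3 = - algebraMap B D w)
    (h : z ^ 2 = u * algebraMap B D x + v * algebraMap B D y) :
    ∃ n : ℕ, n ≠ 0 ∧ (n : B) ∈ Ideal.span {x, y} := by
  have : FaithfulSMul B D := (faithfulSMul_iff_algebraMap_injective B D).2 hinj
  let _ : Algebra (FractionRing B) (FractionRing D) := FractionRing.liftAlgebra B (FractionRing D)
  have : CharZero (FractionRing B) :=
    charZero_of_injective_algebraMap (IsFractionRing.injective B (FractionRing B))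
  have : FiniteDimensional (FractionRing B) (FractionRing D) := inferInstance
  exact trace_contra_aux (K := FractionRing B) (L := FractionRing D) hinj w x y hw0 hw z u v hz h
end LC

namespace LC
section
open MvPowerSeries

lemma ufd_one : IsPrincipalIdealRing (MvPowerSeries (Fin 1) ℂ) := by
  have e : MvPowerSeries (Fin 1) ℂ ≃+* PowerSeries ℂ :=
    (renameEquiv ℂ (Equiv.ofUnique (Fin 1) Unit)).toRingEquiv
  exact IsPrincipalIdealRing.of_surjective e.symm e.symm.surjective

lemma ufd_two : UniqueFactorizationMonoid (MvPowerSeries (Fin 2) ℂ) := by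
  have := ufd_one
  have : IsDomain (MvPowerSeries (Fin 1) ℂ) := NoZeroDivisors.to_isDomain _
  exact (finSuccEquiv ℂ 1).symm.toMulEquiv.uniqueFactorizationMonoid inferInstance

lemma coeff_one_mul (i : Fin 2) (p q : MvPowerSeries (Fin 2) ℂ) :
    coeff (Finsupp.single i 1) (p * q) =
      coeff (Finsupp.single i 1) p * constantCoeff q + constantCoeff p * coeff (Finsupp.single i 1) q := by
  classical
  rw [coeff_mul, Finsupp.antidiagonal_single]
  simp [Finset.Nat.antidiagonal_succ, add_comm]

/-- the linear form -/
noncomputable def lin (a : ℂ) : MvPowerSeries (Fin 2) ℂ := X 0 + C a * X 1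

lemma lin0 (a : ℂ) : constantCoeff (lin a) = 0 := by simp [lin]
lemma lin1 (a : ℂ) : coeff (Finsupp.single 0 1) (lin a) = 1 := by
  classical
  simp [lin, coeff_X, Finsupp.single_left_inj]
lemma lin2 (a : ℂ) : coeff (Finsupp.single 1 1) (lin a) = a := by
  classical
  simp [lin, coeff_X, Finsupp.single_left_inj]

lemma lin_irr (a : ℂ) : Irreducible (lin a) := by
  constructor
  · rw [isUnit_iff_constantCoeff, lin0]
    simp
  · intro p q h
    by_contra! hc
    simp only [isUnit_iff_constantCoeff, isUnit_iff_ne_zero, not_not] at hc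
    have := congrArg (coeff (Finsupp.single 0 1)) h
    rw [lin1, coeff_one_mul, hc.1, hc.2] at this
    simp at this

lemma lin_not_dvd (a b : ℂ) (hab : a ≠ b) : ¬ lin a ∣ lin b := by
  rintro ⟨r, hr⟩
  have h1 := congrArg (coeff (Finsupp.single 0 1)) hr
  have h2 := congrArg (coeff (Finsupp.single 1 1)) hr
  rw [coeff_one_mul] at h1 h2
  simp only [lin0, lin1, lin2] at h1 h2
  apply hab
  linear_combination a * h1 - h2

lemma w_sqf : Squarefree ((X 0 : MvPowerSeries (Fin 2) ℂ) ^ 3 + X 1 ^ 3) := by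
  have := ufd_two
  have hp := Complex.isPrimitiveRoot_exp 3 (by norm_num)
  set ω := Complex.exp (2 * Real.pi * Complex.I / (3 : ℕ)) with hω
  clear_value ω
  have h3 : ω ^ 3 = 1 := hp.pow_eq_one
  have h1 : ω ≠ 1 := hp.ne_one (by norm_num)
  have h2 : ω ^ 2 ≠ 1 := hp.pow_ne_one_of_pos_of_lt (by norm_num) (by norm_num)
  have hs : 1 + ω + ω ^ 2 = 0 := by
    have : (ω - 1) * (1 + ω + ω ^ 2) = 0 := by linear_combination h3
    exact (mul_eq_zero.1 this).resolve_left (sub_ne_zero.2 h1)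
  have h21 : ω ^ 2 ≠ ω := by
    intro h
    apply h1
    have h0 : ω ≠ 0 := by
      rintro rfl
      norm_num at h3
    apply mul_left_cancel₀ h0
    linear_combination h
  have e : (X 0 : MvPowerSeries (Fin 2) ℂ) ^ 3 + X 1 ^ 3 = lin 1 * (lin ω * lin (ω ^ 2)) := by
    have c3 : (C ω : MvPowerSeries (Fin 2) ℂ) ^ 3 = 1 := by rw [← map_pow, h3, map_one]
    have cs : 1 + (C ω : MvPowerSeries (Fin 2) ℂ) + C ω ^ 2 = 0 := by
      rw [← map_pow, ← map_one C, ← map_add, ← map_add, hs, map_zero]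
    simp only [lin, map_one, map_pow]
    linear_combination -(X 0 ^ 2 * X 1) * cs - (X 1 ^ 3) * c3 - (X 0 * X 1 ^ 2) * (cs + c3)
  have rp : ∀ a b, a ≠ b → IsRelPrime (lin a) (lin b) := fun a b hab =>
    (lin_irr a).isRelPrime_iff_not_dvd.2 (lin_not_dvd a b hab)
  rw [e, squarefree_mul_iff, squarefree_mul_iff]
  refine ⟨?_, (lin_irr _).squarefree, rp _ _ h21.symm, (lin_irr _).squarefree, (lin_irr _).squarefree⟩
  exact IsRelPrime.mul_right (rp _ _ h1.symm) (rp _ _ h2.symm)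

lemma w_dvd (b : MvPowerSeries (Fin 2) ℂ) (h : (X 0 : MvPowerSeries (Fin 2) ℂ) ^ 3 + X 1 ^ 3 ∣ b ^ 3) :
    (X 0 : MvPowerSeries (Fin 2) ℂ) ^ 3 + X 1 ^ 3 ∣ b := by
  have := ufd_two
  exact (w_sqf.dvd_pow_iff_dvd (by norm_num)).1 h

lemma w_ne : (X 0 : MvPowerSeries (Fin 2) ℂ) ^ 3 + X 1 ^ 3 ≠ 0 := w_sqf.ne_zero

lemma natCast_notMem (n : ℕ) (hn : n ≠ 0) :
    (n : MvPowerSeries (Fin 2) ℂ) ∉ Ideal.span {X 0, X 1} := by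
  intro h
  obtain ⟨a, b, h⟩ := Ideal.mem_span_pair.1 h
  have := congrArg constantCoeff h
  simp at this
  exact hn (by exact_mod_cast this.symm)
end
end LC

namespace LC

lemma precomplete_pi {B : Type} [CommRing B] (b : Ideal B) [h : IsPrecomplete b B] (k : ℕ) :
    IsPrecomplete b (Fin k → B) := by
  have key : ∀ n (v : Fin k → B), v ∈ (b ^ n • ⊤ : Submodule B (Fin k → B)) ↔ ∀ i, v i ∈ b ^ n := by
    intro n v
    constructor
    · intro hv i
      have := Submodule.mem_map_of_mem (f := LinearMap.proj (R := B) (φ := fun _ : Fin k => B) i) hv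
      rw [Submodule.map_smul''] at this
      have := Submodule.smul_mono (le_refl (b ^ n)) le_top this
      simpa using this
    · intro hv
      rw [pi_eq_sum_univ v]
      apply Submodule.sum_mem
      intro i _
      exact Submodule.smul_mem_smul (hv i) trivial
  constructor
  intro f hf
  have : ∀ i, ∃ L : B, ∀ n, f n i ≡ L [SMOD (b ^ n • ⊤ : Submodule B B)] := by
    intro i
    apply h.prec
    intro m n hmn
    have := hf hmn
    rw [SModEq.sub_mem] at this ⊢
    rw [key] at this
    simpa using this i
  choose L hL using this
  refine ⟨L, fun n => ?_⟩
  rw [SModEq.sub_mem, key]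
  intro i
  have := hL i n
  rw [SModEq.sub_mem] at this
  simpa using this

lemma fin_pow {k A : Type} [CommRing k] [CommRing A] [Algebra k A] [IsNoetherianRing A]
    (m : Ideal A) (h : ∀ a : A, ∃ c : k, a - algebraMap k A c ∈ m) (N : ℕ) :
    ∃ V : Submodule k A, V.FG ∧ ∀ a, ∃ v ∈ V, a - v ∈ m ^ N := by
  induction N with
  | zero => exact ⟨⊥, Submodule.fg_bot, fun a => ⟨0, by simp, by simp⟩⟩
  | succ N ih =>
    obtain ⟨V, hV, hVs⟩ := ih
    obtain ⟨S, hS⟩ := IsNoetherian.noetherian (m ^ N)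
    refine ⟨V ⊔ Submodule.span k (S : Set A), hV.sup ⟨S, rfl⟩, ?_⟩
    have key : ∀ a ∈ m ^ N, ∃ v ∈ Submodule.span k (S : Set A), a - v ∈ m ^ (N + 1) := by
      intro a ha
      rw [← hS] at ha
      induction ha using Submodule.span_induction with
      | mem x hx => exact ⟨x, Submodule.subset_span hx, by simp⟩
      | zero => exact ⟨0, Submodule.zero_mem _, by simp⟩
      | add x y hx hy ihx ihy =>
        obtain ⟨v, hv, hv'⟩ := ihx
        obtain ⟨v2, hv2, hv2'⟩ := ihy
        refine ⟨v + v2, Submodule.add_mem _ hv hv2, ?_⟩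
        rw [add_sub_add_comm]
        exact Ideal.add_mem _ hv' hv2'
      | smul a x hx ih =>
        obtain ⟨v, hv, hv'⟩ := ih
        obtain ⟨c, hc⟩ := h a
        refine ⟨c • v, Submodule.smul_mem _ _ hv, ?_⟩
        rw [hS] at hx
        have e : a • x - c • v = (a - algebraMap k A c) * x + algebraMap k A c * (x - v) := by
          rw [smul_eq_mul, Algebra.smul_def c]
          ring
        rw [e]
        refine Ideal.add_mem _ ?_ (Ideal.mul_mem_left _ _ hv')
        rw [pow_succ, mul_comm]
        exact Ideal.mul_mem_mul hc hx
    intro a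
    obtain ⟨v, hv, hv'⟩ := hVs a
    obtain ⟨v2, hv2, hv2'⟩ := key _ hv'
    refine ⟨v + v2, Submodule.add_mem_sup hv hv2, ?_⟩
    rw [← sub_sub]
    exact hv2'

lemma fin_main {B D : Type} [CommRing B] [CommRing D] [Algebra B D] [IsNoetherianRing D]
    [IsLocalRing D] (b : Ideal B) [IsPrecomplete b B]
    (hsurj : ∀ a : D, ∃ c : B, a - algebraMap B D c ∈ IsLocalRing.maximalIdeal D)
    (hb : b.map (algebraMap B D) ≤ IsLocalRing.maximalIdeal D) (N : ℕ)
    (hN : IsLocalRing.maximalIdeal D ^ N ≤ b.map (algebraMap B D)) : Module.Finite B D := by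
  obtain ⟨V, hV, hVs⟩ := fin_pow (k := B) (IsLocalRing.maximalIdeal D) hsurj N
  obtain ⟨n, s, hs⟩ := Submodule.fg_iff_exists_fin_generating_family.1 hV
  have hH : IsHausdorff (b.map (algebraMap B D)) D := by
    apply IsHausdorff.of_isLocalRing
    intro h
    rw [h, top_le_iff] at hb
    exact Ideal.IsPrime.ne_top' hb
  have : IsHausdorff b D := (IsHausdorff.map_algebraMap_iff (R := B) (S := D) (M := D)).1 hH
  have := precomplete_pi b n
  let f : (Fin n → B) →ₗ[B] D := Fintype.linearCombination B s
  have hr : LinearMap.range f = V := by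
    rw [Fintype.range_linearCombination, hs]
  apply Module.Finite.of_surjective f
  apply surjective_of_mkQ_comp_surjective (I := b)
  intro q
  obtain ⟨a, rfl⟩ := Submodule.mkQ_surjective _ q
  obtain ⟨v, hv, hav⟩ := hVs a
  rw [← hr] at hv
  obtain ⟨c, rfl⟩ := hv
  refine ⟨c, ?_⟩
  rw [LinearMap.comp_apply, eq_comm, ← sub_eq_zero, ← map_sub, Submodule.mkQ_apply,
    Submodule.Quotient.mk_eq_zero]
  have := hN hav
  rw [Ideal.smul_top_eq_map]
  exact this
end LC

namespace LC
section
open MvPowerSeries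

lemma exists_X1_pow (q : MvPowerSeries (Fin 2) ℂ) (hq : ¬ (X 0 : MvPowerSeries (Fin 2) ℂ) ∣ q) :
    ∃ k a b, (X 1 : MvPowerSeries (Fin 2) ℂ) ^ k = a * X 0 + b * q := by
  classical
  have hs : ∀ m : Fin 2 →₀ ℕ, m 0 = 0 → m = Finsupp.single 1 (m 1) := by
    intro m hm
    ext i
    fin_cases i
    · simpa using hm
    · simp
  have hex : ∃ k, coeff (Finsupp.single 1 k) q ≠ 0 := by
    rw [X_dvd_iff] at hq
    push Not at hq
    obtain ⟨m, hm, hm'⟩ := hq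
    refine ⟨m 1, ?_⟩
    rwa [← hs m hm]
  let k := Nat.find hex
  have hk : coeff (Finsupp.single 1 k) q ≠ 0 := Nat.find_spec hex
  have hk' : ∀ j < k, coeff (Finsupp.single 1 j) q = 0 := fun j hj => by
    have := Nat.find_min hex hj
    simpa using this
  clear_value k
  let U : MvPowerSeries (Fin 2) ℂ := fun m => coeff (m + Finsupp.single 1 k) q
  have hU : ∀ m, coeff m U = coeff (m + Finsupp.single 1 k) q := fun m => rfl
  have hUu : IsUnit U := by
    rw [isUnit_iff_constantCoeff, isUnit_iff_ne_zero, ← coeff_zero_eq_constantCoeff_apply, hU,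
      zero_add]
    exact hk
  obtain ⟨V, hV⟩ := hUu.exists_right_inv
  have hd : (X 0 : MvPowerSeries (Fin 2) ℂ) ∣ q - X 1 ^ k * U := by
    rw [X_dvd_iff]
    intro m hm
    rw [map_sub, X_pow_eq, coeff_monomial_mul]
    split_ifs with h
    · rw [hU, tsub_add_cancel_of_le h]
      ring
    · rw [sub_zero, hs m hm]
      apply hk'
      by_contra hc
      apply h
      rw [hs m hm]
      exact Finsupp.single_le_single.2 (by omega)
  obtain ⟨r, hr⟩ := hd
  refine ⟨k, -r * V, V, ?_⟩
  linear_combination -(X 1 ^ k) * hV - V * hr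

/-- the defining ideal -/
noncomputable abbrev J5 : Ideal (MvPowerSeries (Fin 5) ℂ) := Ideal.span
      {(X 0 : MvPowerSeries (Fin 5) ℂ) ^ 3 + X 1 ^ 3 + X 2 ^ 3, X 2 ^ 2 - X 3 * X 0 - X 4 * X 1}

/-- the ring -/
abbrev R5 := MvPowerSeries (Fin 5) ℂ ⧸ J5

/-- the variables -/
noncomputable def xx (i : Fin 5) : R5 := Ideal.Quotient.mk J5 (X i)

lemma rel1 : xx 2 ^ 3 = -(xx 0 ^ 3 + xx 1 ^ 3) := by
  have : Ideal.Quotient.mk J5 (X 0 ^ 3 + X 1 ^ 3 + X 2 ^ 3) = 0 := by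
    rw [Ideal.Quotient.eq_zero_iff_mem]
    exact Ideal.subset_span (by simp)
  simp only [map_add, map_pow] at this
  unfold xx
  linear_combination this

lemma rel2 : xx 2 ^ 2 = xx 3 * xx 0 + xx 4 * xx 1 := by
  have : Ideal.Quotient.mk J5 (X 2 ^ 2 - X 3 * X 0 - X 4 * X 1) = 0 := by
    rw [Ideal.Quotient.eq_zero_iff_mem]
    exact Ideal.subset_span (by simp)
  simp only [map_sub, map_mul, map_pow] at this
  unfold xx
  linear_combination this

lemma mem_span_R5 (S : Set (MvPowerSeries (Fin 5) ℂ)) (a : MvPowerSeries (Fin 5) ℂ) :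
    Ideal.Quotient.mk J5 a ∈ Ideal.span (Ideal.Quotient.mk J5 '' S) ↔ a ∈ Ideal.span S ⊔ J5 := by
  rw [← Ideal.map_span, Ideal.mem_quotient_iff_mem_sup]

lemma reg5 (N : ℕ) (hN : N ≠ 0) :
    (∀ a : R5, xx 1 ^ N * a = 0 → a = 0) ∧
    (∀ a : R5, xx 3 ^ N * a ∈ Ideal.span {xx 1 ^ N} → a ∈ Ideal.span {xx 1 ^ N}) ∧
    (∀ a : R5, xx 4 ^ N * a ∈ Ideal.span {xx 1 ^ N, xx 3 ^ N} →
      a ∈ Ideal.span {xx 1 ^ N, xx 3 ^ N}) := by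
  have h := wr_main N hN
  have h3 := (wr_append [(X 0 : MvPowerSeries (Fin 5) ℂ) ^ 3 + X 1 ^ 3 + X 2 ^ 3,
    X 2 ^ 2 - X 3 * X 0 - X 4 * X 1, X 1 ^ N, X 3 ^ N] (X 4 ^ N)).1 h
  have h2 := (wr_append [(X 0 : MvPowerSeries (Fin 5) ℂ) ^ 3 + X 1 ^ 3 + X 2 ^ 3,
    X 2 ^ 2 - X 3 * X 0 - X 4 * X 1, X 1 ^ N] (X 3 ^ N)).1 h3.1
  have h1 := (wr_append [(X 0 : MvPowerSeries (Fin 5) ℂ) ^ 3 + X 1 ^ 3 + X 2 ^ 3,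
    X 2 ^ 2 - X 3 * X 0 - X 4 * X 1] (X 1 ^ N)).1 h2.1
  have o1 : Ideal.ofList [(X 0 : MvPowerSeries (Fin 5) ℂ) ^ 3 + X 1 ^ 3 + X 2 ^ 3,
    X 2 ^ 2 - X 3 * X 0 - X 4 * X 1] = J5 := by
    simp only [Ideal.ofList_cons, Ideal.ofList_nil, sup_bot_eq, J5, Ideal.span_insert]
  have o2 : Ideal.ofList [(X 0 : MvPowerSeries (Fin 5) ℂ) ^ 3 + X 1 ^ 3 + X 2 ^ 3,
    X 2 ^ 2 - X 3 * X 0 - X 4 * X 1, X 1 ^ N] = Ideal.span {X 1 ^ N} ⊔ J5 := by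
    simp only [Ideal.ofList_cons, Ideal.ofList_nil, sup_bot_eq, J5, Ideal.span_insert]
    ac_rfl
  have o3 : Ideal.ofList [(X 0 : MvPowerSeries (Fin 5) ℂ) ^ 3 + X 1 ^ 3 + X 2 ^ 3,
    X 2 ^ 2 - X 3 * X 0 - X 4 * X 1, X 1 ^ N, X 3 ^ N] =
      Ideal.span {X 1 ^ N, X 3 ^ N} ⊔ J5 := by
    simp only [Ideal.ofList_cons, Ideal.ofList_nil, sup_bot_eq, J5, Ideal.span_insert]
    ac_rfl
  rw [o1] at h1
  rw [o2] at h2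
  rw [o3] at h3
  refine ⟨?_, ?_, ?_⟩
  · intro a ha
    obtain ⟨a, rfl⟩ := Ideal.Quotient.mk_surjective a
    rw [xx, ← map_pow, ← map_mul, Ideal.Quotient.eq_zero_iff_mem] at ha
    rw [Ideal.Quotient.eq_zero_iff_mem]
    exact h1.2 a ha
  · intro a ha
    obtain ⟨a, rfl⟩ := Ideal.Quotient.mk_surjective a
    have e : ({xx 1 ^ N} : Set R5) = Ideal.Quotient.mk J5 '' {X 1 ^ N} := by
      simp [xx]
    rw [e] at ha ⊢
    rw [xx, ← map_pow, ← map_mul, mem_span_R5] at ha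
    rw [mem_span_R5]
    exact h2.2 a ha
  · intro a ha
    obtain ⟨a, rfl⟩ := Ideal.Quotient.mk_surjective a
    have e : ({xx 1 ^ N, xx 3 ^ N} : Set R5) = Ideal.Quotient.mk J5 '' {X 1 ^ N, X 3 ^ N} := by
      simp [xx, Set.image_pair]
    rw [e] at ha ⊢
    rw [xx, ← map_pow, ← map_mul, mem_span_R5] at ha
    rw [mem_span_R5]
    exact h3.2 a ha

/-- the ideal -/
noncomputable abbrev I5 : Ideal R5 := Ideal.span {xx 0, xx 1, xx 2}

lemma part1_aux [IsLocalRing R5] (P : PrimeSpectrum R5) (hP : Order.height P = 1)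
    (hm : (I5 ⊔ P.asIdeal).radical = IsLocalRing.maximalIdeal R5)
    (hxm : ∀ i, xx i ∈ IsLocalRing.maximalIdeal R5)
    (h : R5) (hh : ¬ IsUnit h) (h0 : xx 0 ∈ (P.asIdeal ⊔ Ideal.span {h}).radical)
    (h1 : xx 1 ∈ (P.asIdeal ⊔ Ideal.span {h}).radical) : False := by
  set T := P.asIdeal ⊔ Ideal.span {h} with hT
  have h2 : xx 2 ∈ T.radical := by
    apply Ideal.IsRadical.radical (Ideal.radical_isRadical T) |>.le
    refine ⟨3, ?_⟩
    rw [rel1]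
    exact neg_mem (add_mem (Ideal.pow_mem_of_mem _ h0 3 (by norm_num))
      (Ideal.pow_mem_of_mem _ h1 3 (by norm_num)))
  have hle : IsLocalRing.maximalIdeal R5 ≤ T.radical := by
    rw [← hm, Ideal.radical_le_radical_iff, sup_le_iff]
    refine ⟨?_, le_sup_left.trans Ideal.le_radical⟩
    rw [Ideal.span_le]
    rintro a (rfl | rfl | rfl) <;> assumption
  have hall : ∀ i, ∃ n, xx i ^ n ∈ T := fun i => hle (hxm i)
  choose n hn using hall
  have hN : ∀ i, i ∈ ({1, 3, 4} : Finset (Fin 5)) → xx i ^ (n 1 + n 3 + n 4 + 1) ∈ T := by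
    intro i hi
    refine Ideal.pow_mem_of_pow_mem _ (hn i) ?_
    fin_cases hi <;> omega
  obtain ⟨r1, r2, r3⟩ := reg5 (n 1 + n 3 + n 4 + 1) (by omega)
  refine no_height_one P hP ![xx 1 ^ (n 1 + n 3 + n 4 + 1), xx 3 ^ (n 1 + n 3 + n 4 + 1),
    xx 4 ^ (n 1 + n 3 + n 4 + 1)] r1 r2 r3 h hh ?_
  intro i
  fin_cases i
  · exact hN 1 (by simp)
  · exact hN 3 (by simp)
  · exact hN 4 (by simp)

lemma part1_D {D : Type} [CommRing D] [IsDomain D] [IsNoetherianRing D] [IsLocalRing D]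
    (φ : MvPowerSeries (Fin 2) ℂ →+* D) (x : Fin 5 → D) (hinj : Function.Injective φ)
    (hx : ∀ i, x i ∈ IsLocalRing.maximalIdeal D) (h0 : φ (X 0) = x 0) (h1 : φ (X 1) = x 1)
    (rl1 : x 2 ^ 3 = -(x 0 ^ 3 + x 1 ^ 3)) (rl2 : x 2 ^ 2 = x 3 * x 0 + x 4 * x 1)
    (hsurj : ∀ a, ∃ c : ℂ, a - φ (C c) ∈ IsLocalRing.maximalIdeal D)
    (hrad : IsLocalRing.maximalIdeal D ≤ (Ideal.span {x 0, x 1}).radical) : False := by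
  have hdB : IsDomain (MvPowerSeries (Fin 2) ℂ) := NoZeroDivisors.to_isDomain _
  have hufd := ufd_two
  let _ : Algebra (MvPowerSeries (Fin 2) ℂ) D := φ.toAlgebra
  have hal : ∀ q : MvPowerSeries (Fin 2) ℂ, algebraMap _ D q = φ q := fun q => rfl
  let b : Ideal (MvPowerSeries (Fin 2) ℂ) := Ideal.span (Set.range X)
  have hbm : b.map (algebraMap _ D) = Ideal.span {x 0, x 1} := by
    rw [Ideal.map_span, ← Set.range_comp]
    congr 1
    ext t
    simp only [Set.mem_range, Fin.exists_fin_two, Function.comp, hal, h0, h1,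
      Set.mem_insert_iff, Set.mem_singleton_iff]
    tauto
  rw [← hbm] at hrad
  obtain ⟨N, hN⟩ := Ideal.exists_pow_le_of_le_radical_of_fg hrad (IsNoetherian.noetherian _)
  have hfin : Module.Finite (MvPowerSeries (Fin 2) ℂ) D := by
    have : IsAdicComplete b (MvPowerSeries (Fin 2) ℂ) := inferInstance
    refine fin_main b ?_ ?_ N hN
    · intro a
      obtain ⟨c, hc⟩ := hsurj a
      exact ⟨C c, hc⟩
    · rw [hbm, Ideal.span_le]
      rintro a (rfl | rfl)
      · exact hx 0
      · exact hx 1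
  have hch : CharZero (MvPowerSeries (Fin 2) ℂ) :=
    charZero_of_injective_algebraMap (FaithfulSMul.algebraMap_injective ℂ _)
  obtain ⟨n, hn, hmem⟩ := trace_contra (B := MvPowerSeries (Fin 2) ℂ) (D := D)
    hinj (X 0 ^ 3 + X 1 ^ 3) (X 0) (X 1) w_ne w_dvd (x 2) (x 3) (x 4)
    (by rw [hal, map_add, map_pow, map_pow, h0, h1, rl1]) (by rw [hal, hal, h0, h1, rl2])
  exact natCast_notMem n hn hmem

lemma part1 (P : PrimeSpectrum R5) (hP : Order.height P = 1) :
    ¬ (I5 ⊔ P.asIdeal).radical.IsMaximal := by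
  intro hmax
  have hnt : Nontrivial R5 := by
    by_contra hc
    rw [not_nontrivial_iff_subsingleton] at hc
    exact P.isPrime.ne_top (Subsingleton.elim _ _)
  have hloc : IsLocalRing R5 := IsLocalRing.of_surjective' (Ideal.Quotient.mk J5)
    Ideal.Quotient.mk_surjective
  have hm := IsLocalRing.eq_maximalIdeal hmax
  have hlh : IsLocalHom (Ideal.Quotient.mk J5) :=
    IsLocalHom.of_surjective _ Ideal.Quotient.mk_surjective
  have hcc : ∀ p : MvPowerSeries (Fin 5) ℂ, constantCoeff p = 0 →
      Ideal.Quotient.mk J5 p ∈ IsLocalRing.maximalIdeal R5 := by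
    intro p hp
    rw [IsLocalRing.mem_maximalIdeal, mem_nonunits_iff]
    intro hu
    have := isUnit_of_map_unit _ _ hu
    rw [isUnit_iff_constantCoeff, hp] at this
    simp at this
  have hxm : ∀ i, xx i ∈ IsLocalRing.maximalIdeal R5 := fun i => hcc _ (by simp)
  have hxu : ∀ i, ¬ IsUnit (xx i) := fun i => hxm i
  have aux := part1_aux P hP hm hxm
  have hdB : IsDomain (MvPowerSeries (Fin 2) ℂ) := NoZeroDivisors.to_isDomain _
  have hufd := ufd_two
  have hPp := P.isPrime
  let e : Fin 2 ↪ Fin 5 := Fin.castLEEmb (by norm_num)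
  let ψ : MvPowerSeries (Fin 2) ℂ →+* R5 :=
    (Ideal.Quotient.mk J5).comp (rename (R := ℂ) e).toRingHom
  have hψC : ∀ c, ψ (C c) = Ideal.Quotient.mk J5 (C c) := by
    intro c
    change Ideal.Quotient.mk J5 (rename e (C c)) = _
    rw [rename_C]
  have hψ0 : ψ (X 0) = xx 0 := by
    change Ideal.Quotient.mk J5 (rename e (X 0)) = _
    rw [rename_X]
    rfl
  have hψ1 : ψ (X 1) = xx 1 := by
    change Ideal.Quotient.mk J5 (rename e (X 1)) = _
    rw [rename_X]
    rfl
  clear_value ψ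
  have hinj : ∀ q, ψ q ∈ P.asIdeal → q = 0 := by
    intro q hq
    by_contra hq0
    obtain ⟨n, q', hq', rfl⟩ := WfDvdMonoid.max_power_factor' (x := (X 0 : MvPowerSeries (Fin 2) ℂ))
      hq0 (by rw [isUnit_iff_constantCoeff]; simp)
    rw [map_mul, map_pow, hψ0] at hq
    rcases hPp.mem_or_mem hq with h | h
    · have h0 := hPp.mem_of_pow_mem _ h
      exact aux (xx 1) (hxu 1) (Ideal.le_radical (Ideal.mem_sup_left h0))
        (Ideal.le_radical (Ideal.mem_sup_right (Ideal.mem_span_singleton_self _)))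
    · obtain ⟨k, a, b, hk⟩ := exists_X1_pow q' hq'
      refine aux (xx 0) (hxu 0)
        (Ideal.le_radical (Ideal.mem_sup_right (Ideal.mem_span_singleton_self _))) ⟨k, ?_⟩
      have := congrArg ψ hk
      rw [map_pow, map_add, map_mul, map_mul, hψ0, hψ1] at this
      rw [this]
      exact add_mem (Ideal.mul_mem_left _ _ (Ideal.mem_sup_right (Ideal.mem_span_singleton_self _)))
        (Ideal.mul_mem_left _ _ (Ideal.mem_sup_left h))
  have hdD : IsDomain (R5 ⧸ P.asIdeal) := Ideal.Quotient.isDomain _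
  have hlD : IsLocalRing (R5 ⧸ P.asIdeal) := IsLocalRing.of_surjective' (Ideal.Quotient.mk P.asIdeal)
    Ideal.Quotient.mk_surjective
  have hlh2 : IsLocalHom (Ideal.Quotient.mk P.asIdeal) :=
    IsLocalHom.of_surjective _ Ideal.Quotient.mk_surjective
  have hmm : ∀ r : R5, Ideal.Quotient.mk P.asIdeal r ∈ IsLocalRing.maximalIdeal (R5 ⧸ P.asIdeal) ↔
      r ∈ IsLocalRing.maximalIdeal R5 := by
    intro r
    rw [IsLocalRing.mem_maximalIdeal, mem_nonunits_iff, IsLocalRing.mem_maximalIdeal,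
      mem_nonunits_iff, isUnit_map_iff]
  have hrad : IsLocalRing.maximalIdeal (R5 ⧸ P.asIdeal) ≤
      (Ideal.span {Ideal.Quotient.mk P.asIdeal (xx 0), Ideal.Quotient.mk P.asIdeal (xx 1)}).radical := by
    set W := Ideal.span {Ideal.Quotient.mk P.asIdeal (xx 0), Ideal.Quotient.mk P.asIdeal (xx 1)}
      with hW
    have k0 : Ideal.Quotient.mk P.asIdeal (xx 0) ∈ W := Ideal.subset_span (by simp)
    have k1 : Ideal.Quotient.mk P.asIdeal (xx 1) ∈ W := Ideal.subset_span (by simp)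
    have hc : IsLocalRing.maximalIdeal R5 ≤ (W.comap (Ideal.Quotient.mk P.asIdeal)).radical := by
      rw [← hm, Ideal.radical_le_radical_iff, sup_le_iff]
      constructor
      · rw [Ideal.span_le]
        rintro a (rfl | rfl | rfl)
        · exact Ideal.le_radical k0
        · exact Ideal.le_radical k1
        · refine ⟨3, ?_⟩
          rw [rel1, Ideal.mem_comap, map_neg, map_add, map_pow, map_pow]
          exact neg_mem (add_mem (Ideal.pow_mem_of_mem _ k0 3 (by norm_num))
            (Ideal.pow_mem_of_mem _ k1 3 (by norm_num)))
      · refine le_trans ?_ Ideal.le_radical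
        intro a ha
        rw [Ideal.mem_comap, Ideal.Quotient.eq_zero_iff_mem.2 ha]
        exact zero_mem _
    intro d hd
    obtain ⟨r, rfl⟩ := Ideal.Quotient.mk_surjective d
    rw [hmm] at hd
    have := hc hd
    obtain ⟨n, hn⟩ := this
    refine ⟨n, ?_⟩
    rw [← map_pow]
    exact hn
  refine part1_D ((Ideal.Quotient.mk P.asIdeal).comp ψ) (fun i => Ideal.Quotient.mk P.asIdeal (xx i))
    ?_ (fun i => (hmm _).2 (hxm i)) (congrArg _ hψ0) (congrArg _ hψ1) ?_ ?_ ?_ hrad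
  · rw [injective_iff_map_eq_zero]
    intro q hq
    rw [RingHom.comp_apply, Ideal.Quotient.eq_zero_iff_mem] at hq
    exact hinj q hq
  · change (Ideal.Quotient.mk P.asIdeal (xx 2)) ^ 3 = -((Ideal.Quotient.mk P.asIdeal (xx 0)) ^ 3 +
      (Ideal.Quotient.mk P.asIdeal (xx 1)) ^ 3)
    rw [← map_pow, rel1, map_neg, map_add, map_pow, map_pow]
  · change (Ideal.Quotient.mk P.asIdeal (xx 2)) ^ 2 =
      Ideal.Quotient.mk P.asIdeal (xx 3) * Ideal.Quotient.mk P.asIdeal (xx 0) +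
      Ideal.Quotient.mk P.asIdeal (xx 4) * Ideal.Quotient.mk P.asIdeal (xx 1)
    rw [← map_pow, rel2, map_add, map_mul, map_mul]
  · intro a
    obtain ⟨r, rfl⟩ := Ideal.Quotient.mk_surjective a
    obtain ⟨p, rfl⟩ := Ideal.Quotient.mk_surjective r
    refine ⟨constantCoeff p, ?_⟩
    rw [RingHom.comp_apply, hψC, ← map_sub, ← map_sub, hmm]
    exact hcc _ (by simp)
end
end LC

namespace LC
open MvPowerSeries

theorem part2 : Nontrivial ((localCohomology I5 2).obj (ModuleCat.of R5 R5)) := by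
  refine nontrivial_lc' I5 (xx 0) (xx 1) (Ideal.subset_span (by simp)) (Ideal.subset_span (by simp)) ?_ ?_ ?_
  · rw [Ideal.span_le]
    have h0 : xx 0 ∈ Ideal.span {xx 0, xx 1} := Ideal.subset_span (by simp)
    have h1 : xx 1 ∈ Ideal.span {xx 0, xx 1} := Ideal.subset_span (by simp)
    intro a ha
    simp only [Set.mem_insert_iff, Set.mem_singleton_iff] at ha
    rcases ha with rfl | rfl | rfl
    · exact Ideal.le_radical h0
    · exact Ideal.le_radical h1
    · refine ⟨3, ?_⟩
      rw [rel1]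
      exact neg_mem (add_mem (Ideal.pow_mem_of_mem _ h0 3 (by norm_num)) (Ideal.pow_mem_of_mem _ h1 3 (by norm_num)))
  · intro a ha
    exact (reg5 1 one_ne_zero).1 a (by rw [pow_one]; exact ha)
  · intro n hn
    obtain ⟨a, b, hab⟩ := Ideal.mem_span_pair.1 hn
    obtain ⟨a, rfl⟩ := Ideal.Quotient.mk_surjective a
    obtain ⟨b, rfl⟩ := Ideal.Quotient.mk_surjective b
    have h : Ideal.Quotient.mk J5 ((X 0 * X 1) ^ n) = Ideal.Quotient.mk J5 (a * X 0 ^ (n+1) + b * X 1 ^ (n+1)) := by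
      simp only [map_pow, map_mul, map_add]
      exact hab.symm
    obtain ⟨F, G, hFG⟩ := Ideal.mem_span_pair.1 (Ideal.Quotient.eq.1 h)
    refine gradedNot n F G a b ?_
    linear_combination -hFG

end LC
open MvPowerSeries
theorem lyubeznik_counterexample :
    let x : MvPowerSeries (Fin 5) ℂ := X 0
    let y : MvPowerSeries (Fin 5) ℂ := X 1
    let z : MvPowerSeries (Fin 5) ℂ := X 2
    let u : MvPowerSeries (Fin 5) ℂ := X 3
    let v : MvPowerSeries (Fin 5) ℂ := X 4
    let J : Ideal (MvPowerSeries (Fin 5) ℂ) := Ideal.span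
      {x ^ 3 + y ^ 3 + z ^ 3, z ^ 2 - u * x - v * y}
    let R := MvPowerSeries (Fin 5) ℂ ⧸ J
    let I : Ideal R := Ideal.span
      {Ideal.Quotient.mk J x, Ideal.Quotient.mk J y, Ideal.Quotient.mk J z}
    (∀ P : PrimeSpectrum R, Order.height P = 1 →
      ¬ (I ⊔ P.asIdeal).radical.IsMaximal) ∧
    Nontrivial ((localCohomology I 2).obj (ModuleCat.of R R)) := by

  intro x y z u v J R I
  exact ⟨fun P hP => LC.part1 P hP, LC.part2⟩
end

section
/- Assume that for every complete local Noetherian domain (R,m) of mixed characteristic p and Krull dimension d admitting a system of parameters of the form p, x_2, …, x_d, and for every n ≥ 1, the image in R̄ = R/pR of the ideal (x_2,…,x_d)R :_R p^n is contained in the tight closure ((x_2,…,x_d)R̄)^* computed in the characteristic-p ring R̄. Then the Monomial Conjecture holds: for every complete local Noetherian domain R of mixed characteristic, every system of parameters x_1,…,x_d of R, and every integer t ≥ 1, (x_1⋯x_d)^{t−1} ∉ (x_1^t,…,x_d^t)R. -/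
open scoped BigOperators

universe u

/-- `u` lies in the tight closure of the ideal `J` in the ring `T` of
prime characteristic `p`. -/
def MemTightClosure (T : Type u) [CommRing T] (p : ℕ) (J : Ideal T) (u : T) : Prop :=
  ∃ c : T, (∀ P ∈ minimalPrimes T, c ∉ P) ∧
    ∀ e : ℕ, c * u ^ p ^ e ∈ Ideal.span ((fun a => a ^ p ^ e) '' (J : Set T))

section MCHelpers
open IsLocalRing

theorem mc_precomplete_iff {A : Type*} [CommRing A] (I : Ideal A) :
    IsPrecomplete I A ↔ ∀ f : ℕ → A, (∀ m n, m ≤ n → f m - f n ∈ I ^ m) →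
      ∃ L, ∀ n, f n - L ∈ I ^ n := by
  rw [isPrecomplete_iff]
  simp [SModEq.sub_mem]

theorem mc_ps_mem_max {A : Type*} [CommRing A] [IsLocalRing A] (f : PowerSeries A) :
    f ∈ maximalIdeal (PowerSeries A) ↔ PowerSeries.coeff 0 f ∈ maximalIdeal A := by
  simp only [mem_maximalIdeal, mem_nonunits_iff, PowerSeries.isUnit_iff_constantCoeff,
    PowerSeries.coeff_zero_eq_constantCoeff_apply]

theorem mc_coeff_mem {A : Type*} [CommRing A] [IsLocalRing A] (k : ℕ) :
    ∀ f ∈ maximalIdeal (PowerSeries A) ^ k, ∀ j, PowerSeries.coeff j f ∈ maximalIdeal A ^ (k - j) := by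
  induction k with
  | zero => intro f _ j; simp
  | succ k ih =>
    intro f hf j
    rw [pow_succ] at hf
    induction hf using Submodule.mul_induction_on' with
    | mem_mul_mem a ha b hb =>
      rw [PowerSeries.coeff_mul]
      refine Ideal.sum_mem _ fun ij hij => ?_
      rw [Finset.HasAntidiagonal.mem_antidiagonal] at hij
      rcases Nat.eq_zero_or_pos ij.2 with h0 | h0
      · have h1 := ih a ha ij.1
        have h2 := (mc_ps_mem_max b).1 hb
        rw [← h0] at h2
        have := Ideal.mul_mem_mul h1 h2
        rw [← pow_succ] at this
        refine Ideal.pow_le_pow_right ?_ this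
        omega
      · refine Ideal.mul_mem_right _ _ (Ideal.pow_le_pow_right ?_ (ih a ha ij.1))
        omega
    | add x _ y _ hx hy => rw [map_add]; exact Ideal.add_mem _ hx hy

theorem mc_mem_of_coeff {A : Type*} [CommRing A] [IsLocalRing A] (k : ℕ) (f : PowerSeries A)
    (hf : ∀ j, PowerSeries.coeff j f ∈ maximalIdeal A ^ (k - j)) :
    f ∈ maximalIdeal (PowerSeries A) ^ k := by
  have hX : (PowerSeries.X : PowerSeries A) ∈ maximalIdeal (PowerSeries A) := by
    rw [mc_ps_mem_max]; simp
  have hC : (maximalIdeal A).map (PowerSeries.C (R := A)) ≤ maximalIdeal (PowerSeries A) := by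
    rw [Ideal.map_le_iff_le_comap]
    intro a ha
    rw [Ideal.mem_comap, mc_ps_mem_max]; simpa using ha
  rw [PowerSeries.eq_X_pow_mul_shift_add_trunc k f]
  refine Ideal.add_mem _ (Ideal.mul_mem_right _ _ (Ideal.pow_mem_pow hX k)) ?_
  have : ((PowerSeries.trunc k f : Polynomial A) : PowerSeries A) =
      ∑ j ∈ Finset.range k, PowerSeries.C (PowerSeries.coeff j f) * PowerSeries.X ^ j := by
    ext m
    simp [PowerSeries.coeff_trunc, PowerSeries.coeff_X_pow, ]
  rw [this]
  refine Ideal.sum_mem _ fun j hj => ?_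
  have h1 : PowerSeries.C (PowerSeries.coeff j f) ∈ maximalIdeal (PowerSeries A) ^ (k - j) := by
    refine Ideal.pow_right_mono hC _ ?_
    rw [← Ideal.map_pow]
    exact Ideal.mem_map_of_mem _ (hf j)
  have := Ideal.mul_mem_mul h1 (Ideal.pow_mem_pow hX j)
  rwa [← pow_add, Nat.sub_add_cancel (Finset.mem_range.1 hj).le] at this

theorem mc_precomplete_ps {A : Type*} [CommRing A] [IsLocalRing A]
    [IsPrecomplete (maximalIdeal A) A] :
    IsPrecomplete (maximalIdeal (PowerSeries A)) (PowerSeries A) := by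
  have hA := (mc_precomplete_iff (maximalIdeal A)).1 inferInstance
  rw [mc_precomplete_iff]
  intro f hf
  have : ∀ j, ∃ L, ∀ n, PowerSeries.coeff j (f (n + j)) - L ∈ maximalIdeal A ^ n := by
    intro j
    apply hA
    intro m n hmn
    rw [← map_sub]
    have := mc_coeff_mem _ _ (hf (m + j) (n + j) (by omega)) j
    simpa using this
  choose L hL using this
  refine ⟨PowerSeries.mk L, fun n => mc_mem_of_coeff _ _ fun j => ?_⟩
  rw [map_sub, PowerSeries.coeff_mk]
  have h1 := hL j (n - j)
  have h2 := mc_coeff_mem _ _ (hf n (n - j + j) (by omega)) j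
  rw [map_sub] at h2
  simpa using Ideal.add_mem _ h2 h1

theorem mc_precomplete_surj {A B : Type*} [CommRing A] [CommRing B] [IsLocalRing A] [IsLocalRing B]
    [IsPrecomplete (maximalIdeal A) A]
    (f : A →+* B) (hf : Function.Surjective f) :
    IsPrecomplete (maximalIdeal B) B := by
  have hA := (mc_precomplete_iff (maximalIdeal A)).1 inferInstance
  rw [mc_precomplete_iff]
  intro b hb
  have hm : ∀ k, ∀ y ∈ maximalIdeal B ^ k, ∃ x ∈ maximalIdeal A ^ k, f x = y := by
    intro k y hy
    rw [← map_maximalIdeal_of_surjective f hf, ← Ideal.map_pow] at hy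
    exact (Ideal.mem_map_iff_of_surjective f hf).1 hy
  have : ∀ k, ∃ x ∈ maximalIdeal A ^ k, f x = b (k + 1) - b k := by
    intro k
    apply hm
    rw [← neg_sub]
    exact neg_mem (hb k (k + 1) (by omega))
  choose d hd hfd using this
  obtain ⟨a0, ha0⟩ := hf (b 0)
  obtain ⟨L, hL⟩ := hA (fun k => a0 + ∑ i ∈ Finset.range k, d i) (by
    intro m n hmn
    rw [add_sub_add_left_eq_sub, ← Finset.sum_range_add_sum_Ico _ hmn]
    simp only [sub_add_cancel_left, neg_mem_iff]
    refine Ideal.sum_mem _ fun i hi => ?_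
    exact Ideal.pow_le_pow_right (Finset.mem_Ico.1 hi).1 (hd i))
  refine ⟨f L, fun n => ?_⟩
  have h : f (a0 + ∑ i ∈ Finset.range n, d i) = b n := by
    rw [map_add, map_sum, ha0]
    simp only [hfd]
    rw [Finset.sum_range_sub, add_sub_cancel]
  rw [← h, ← map_sub, ← map_maximalIdeal_of_surjective f hf, ← Ideal.map_pow]
  exact Ideal.mem_map_of_mem _ (hL n)

theorem mc_precomplete_mv (n : ℕ) {A : Type*} [CommRing A] [IsLocalRing A]
    [IsPrecomplete (maximalIdeal A) A] :
    IsPrecomplete (maximalIdeal (MvPowerSeries (Fin n) A)) (MvPowerSeries (Fin n) A) := by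
  induction n with
  | zero =>
    exact mc_precomplete_surj (MvPowerSeries.isEmptyEquiv (Fin 0) A).toRingEquiv.symm.toRingHom
      (MvPowerSeries.isEmptyEquiv (Fin 0) A).toRingEquiv.symm.surjective
  | succ n ih =>
    have : IsPrecomplete (maximalIdeal (PowerSeries (MvPowerSeries (Fin n) A)))
      (PowerSeries (MvPowerSeries (Fin n) A)) := mc_precomplete_ps
    exact mc_precomplete_surj (MvPowerSeries.finSuccEquiv A n).toRingEquiv.symm.toRingHom
      (MvPowerSeries.finSuccEquiv A n).toRingEquiv.symm.surjective



theorem mc_homog_eval {L : Type*} [CommRing L] {n N : ℕ} (F : MvPolynomial (Fin n) L)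
    (hF : F.IsHomogeneous N) (c : L) (w : Fin n → L) :
    MvPolynomial.eval (fun i => c * w i) F = c ^ N * MvPolynomial.eval w F := by
  rw [MvPolynomial.eval_eq, MvPolynomial.eval_eq, Finset.mul_sum]
  refine Finset.sum_congr rfl fun d hd => ?_
  have h1 : d.degree = N := by
    have := hF (MvPolynomial.mem_support_iff.1 hd)
    rw [Finsupp.degree_eq_weight_one]; exact this
  simp only [mul_pow, Finset.prod_mul_distrib]
  rw [Finset.prod_pow_eq_pow_sum]
  have h2 : ∑ i ∈ d.support, d i = N := by rw [← h1]; rfl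
  rw [h2]; ring

theorem mc_sup_pow {L : Type*} [CommRing L] (J A : Ideal L) (N : ℕ) :
    (J ⊔ A) ^ N ≤ J ⊔ A ^ N := by
  induction N with
  | zero => simp
  | succ N ih =>
    rw [pow_succ, pow_succ]
    refine (Ideal.mul_mono_left ih).trans ?_
    rw [Ideal.sup_mul]
    have h' : J * (J ⊔ A) ≤ J := Ideal.mul_le_left
    refine sup_le (h'.trans le_sup_left) ?_
    rw [Ideal.mul_sup]
    have h : A ^ N * J ≤ J := Ideal.mul_le_right
    exact sup_le (h.trans le_sup_left) le_sup_right

theorem mc_ai_aux {L : Type*} [CommRing L] [IsNoetherianRing L] [IsLocalRing L] {n N : ℕ}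
    (X v : Fin n → L) (hX : (Ideal.span (Set.range X)).radical = maximalIdeal L)
    (F : MvPolynomial (Fin n) L) (hF : F.IsHomogeneous N)
    (hFX : MvPolynomial.eval X F ∈ Ideal.span (Set.range X) ^ (N + 1))
    (hFv : IsUnit (MvPolynomial.eval v F)) (j : Fin n) (hj : IsUnit (v j)) :
    ringKrullDim L < n := by
  classical
  set I := Ideal.span (Set.range X) with hI
  have hIM : I ≤ maximalIdeal L := hX ▸ Ideal.le_radical
  set s : Finset L := (Finset.univ.erase j).image (fun i => v j * X i - v i * X j) with hs
  set J : Ideal L := Ideal.span (s : Set L) with hJ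
  have hmem : ∀ i, v j * X i - v i * X j ∈ J := by
    intro i
    by_cases h : i = j
    · subst h; simp
    · apply Ideal.subset_span
      rw [hs]
      simp only [Finset.coe_image, Set.mem_image, Finset.mem_coe]
      exact ⟨i, by simp [h], rfl⟩
  have hXI : ∀ i, X i ∈ I := fun i => Ideal.subset_span ⟨i, rfl⟩
  have hJI : J ≤ I := by
    rw [hJ, Ideal.span_le]
    intro y hy
    rw [hs] at hy
    simp only [Finset.coe_image, Set.mem_image, Finset.mem_coe] at hy
    obtain ⟨i, _, rfl⟩ := hy
    exact Ideal.sub_mem _ (Ideal.mul_mem_left _ _ (hXI _)) (Ideal.mul_mem_left _ _ (hXI _))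
  have hIJ : I ≤ J ⊔ Ideal.span {X j} := by
    rw [hI, Ideal.span_le]
    rintro _ ⟨i, rfl⟩
    have h1 : v j * X i ∈ J ⊔ Ideal.span {X j} := by
      have : v j * X i = (v j * X i - v i * X j) + v i * X j := by ring
      rw [this]
      exact Ideal.add_mem _ (Ideal.mem_sup_left (hmem i))
        (Ideal.mem_sup_right (Ideal.mul_mem_left _ _ (Ideal.mem_span_singleton_self _)))
    exact (Ideal.unit_mul_mem_iff_mem _ hj).1 h1
  have hpow : I ^ N ≤ J ⊔ Ideal.span {X j ^ N} := by
    refine (Ideal.pow_right_mono hIJ N).trans ?_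
    rw [← Ideal.span_singleton_pow]
    exact mc_sup_pow _ _ _
  have hXj : X j ^ N ∈ J ⊔ maximalIdeal L * I ^ N := by
    have h1 : MvPolynomial.eval (fun i => v j * X i) F - MvPolynomial.eval (fun i => X j * v i) F
        ∈ J := by
      rw [← Ideal.Quotient.eq]
      rw [← MvPolynomial.eval₂_id, ← MvPolynomial.eval₂_id,
        MvPolynomial.hom_eval₂, MvPolynomial.hom_eval₂]
      congr 1
      funext i
      rw [Ideal.Quotient.eq, mul_comm (X j)]
      exact hmem i
    have e1 : MvPolynomial.eval (fun i => v j * X i) F = v j ^ N * MvPolynomial.eval X F := by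
      exact mc_homog_eval F hF _ _
    have e2 : MvPolynomial.eval (fun i => X j * v i) F = X j ^ N * MvPolynomial.eval v F := by
      exact mc_homog_eval F hF _ _
    rw [e1, e2] at h1
    have h2 : v j ^ N * MvPolynomial.eval X F ∈ maximalIdeal L * I ^ N := by
      rw [pow_succ', ] at hFX
      exact Ideal.mul_mem_left _ _ (Ideal.mul_mono_left hIM hFX)
    have h3 : X j ^ N * MvPolynomial.eval v F ∈ J ⊔ maximalIdeal L * I ^ N := by
      have := Ideal.sub_mem _ (Ideal.mem_sup_right (S := J) h2) (Ideal.mem_sup_left h1)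
      simpa using this
    exact (Ideal.mul_unit_mem_iff_mem _ hFv).1 h3
  have hle : I ^ N ≤ J := by
    have h : I ^ N ≤ J ⊔ maximalIdeal L • I ^ N := by
      refine hpow.trans (sup_le le_sup_left ?_)
      rw [Ideal.span_singleton_le_iff_mem]
      exact hXj
    exact Submodule.le_of_le_smul_of_le_jacobson_bot (IsNoetherian.noetherian _)
      (IsLocalRing.maximalIdeal_le_jacobson _) h
  have hmin : maximalIdeal L ∈ J.minimalPrimes := by
    refine ⟨⟨inferInstance, hJI.trans hIM⟩, fun q hq _ => ?_⟩
    have hq1 := hq.1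
    rw [← hX]
    exact hq1.radical_le_iff.2 (Ideal.IsPrime.le_of_pow_le (hle.trans hq.2))
  have hh := Ideal.height_le_card_of_mem_minimalPrimes_span_finset hmin
  have hc : s.card < n := by
    refine (Finset.card_image_le).trans_lt ?_
    rw [Finset.card_erase_of_mem (Finset.mem_univ _)]
    simp
    exact j.pos
  rw [← IsLocalRing.maximalIdeal_height_eq_ringKrullDim]
  have h3 : (maximalIdeal L).height < n := hh.trans_lt (by exact_mod_cast hc)
  exact_mod_cast h3


theorem mc_ai {S : Type*} [CommRing S] [IsNoetherianRing S] [IsLocalRing S] {n N : ℕ}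
    (hdim : ringKrullDim S = n)
    (x : Fin n → S) (hx : (Ideal.span (Set.range x)).radical = maximalIdeal S)
    (F : MvPolynomial (Fin n) S) (hF : F.IsHomogeneous N)
    (hFX : MvPolynomial.eval x F ∈ Ideal.span (Set.range x) ^ (N + 1)) (α : Fin n →₀ ℕ) :
    F.coeff α ∈ maximalIdeal S := by
  classical
  by_contra hα
  have hIM : Ideal.span (Set.range x) ≤ maximalIdeal S := hx ▸ Ideal.le_radical
  -- reduction to the residue field
  let r : S →+* Polynomial (ResidueField S) := Polynomial.C.comp (residue S)
  have hr : Function.Surjective (Polynomial.mapRingHom (residue S)) :=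
    Polynomial.map_surjective _ residue_surjective
  have hne : MvPolynomial.map r F ≠ 0 := by
    intro h
    apply hα
    have := congrArg (MvPolynomial.coeff α) h
    rw [MvPolynomial.coeff_map] at this
    simpa [r] using this
  have : ∃ w, MvPolynomial.eval w (MvPolynomial.map r F) ≠ 0 := by
    by_contra hcon
    push Not at hcon
    exact hne (MvPolynomial.funext fun w => by simpa using hcon w)
  obtain ⟨w, hw⟩ := this
  choose v hv using fun i => hr (w i)
  let 𝔭 : Ideal (Polynomial S) := (maximalIdeal S).map Polynomial.C
  have h𝔭 : 𝔭.IsPrime := Ideal.isPrime_map_C_of_isPrime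
  have hker : ∀ f, f ∈ 𝔭 ↔ Polynomial.mapRingHom (residue S) f = 0 := by
    intro f
    rw [Ideal.mem_map_C_iff, Polynomial.ext_iff]
    simp
  let L := Localization.AtPrime 𝔭
  let φ : S →+* L := (algebraMap (Polynomial S) L).comp Polynomial.C
  have hunit : ∀ f : Polynomial S, f ∉ 𝔭 → IsUnit (algebraMap (Polynomial S) L f) := by
    intro f hf
    exact IsLocalization.map_units L (⟨f, hf⟩ : 𝔭.primeCompl)
  have hFv : MvPolynomial.eval v (MvPolynomial.map Polynomial.C F) ∉ 𝔭 := by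
    rw [hker]
    rw [MvPolynomial.eval_map, MvPolynomial.hom_eval₂]
    rw [MvPolynomial.eval_map] at hw
    have e1 : (Polynomial.mapRingHom (residue S)).comp Polynomial.C = r := by
      ext; simp [r]
    have e2 : (fun i => Polynomial.mapRingHom (residue S) (v i)) = w := funext hv
    rw [e1, e2]
    exact hw
  -- pick a coordinate that is a unit
  obtain ⟨j, hj⟩ : ∃ j, v j ∉ 𝔭 := by
    by_contra hcon
    push Not at hcon
    rcases Nat.eq_zero_or_pos N with h0 | h0
    · subst h0
      have hc := MvPolynomial.totalDegree_eq_zero_iff_eq_C.1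
        (Nat.le_zero.1 hF.totalDegree_le)
      rw [hc, MvPolynomial.eval_C] at hFX
      by_cases hα0 : α = 0
      · subst hα0
        exact hα (hIM (by simpa using hFX))
      · apply hα
        rw [hc, MvPolynomial.coeff_C, if_neg (Ne.symm hα0)]
        exact zero_mem _
    · apply hFv
      have hF' := hF.map (Polynomial.C (R := S))
      rw [MvPolynomial.eval_eq]
      refine Ideal.sum_mem _ fun d hd => Ideal.mul_mem_left _ _ ?_
      have h1 : d.degree = N := by
        have := hF' (MvPolynomial.mem_support_iff.1 hd)
        rw [Finsupp.degree_eq_weight_one]; exact this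
      have h2 : ∃ i ∈ d.support, True := by
        by_contra hh
        have : d.support = ∅ := by
          ext i; simp at hh ⊢; exact hh i
        rw [Finsupp.support_eq_empty] at this
        subst this; simp at h1; omega
      obtain ⟨i, hi, _⟩ := h2
      exact Ideal.mem_of_dvd _ (Finset.dvd_prod_of_mem _ hi) (Ideal.pow_mem_of_mem _ (hcon i) _ (Nat.pos_of_ne_zero (by simpa using hi)))
  have hmaxL : maximalIdeal L = (maximalIdeal S).map φ := by
    rw [← Ideal.map_map, Localization.AtPrime.map_eq_maximalIdeal]
  have hspan : Ideal.span (Set.range fun i => φ (x i)) = (Ideal.span (Set.range x)).map φ := by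
    rw [Ideal.map_span, ← Set.range_comp]; rfl
  have key : ringKrullDim L < n := by
    refine mc_ai_aux (fun i => φ (x i)) (fun i => algebraMap _ L (v i)) ?_ (MvPolynomial.map φ F)
      (hF.map _) ?_ ?_ j (hunit _ hj)
    · rw [hspan]
      apply le_antisymm
      · refine (Ideal.IsPrime.radical_le_iff inferInstance).2 ?_
        rw [hmaxL]
        exact Ideal.map_mono hIM
      · rw [hmaxL, ← hx]
        exact Ideal.map_radical_le _
    · rw [hspan, ← Ideal.map_pow]
      have : MvPolynomial.eval (fun i => φ (x i)) (MvPolynomial.map φ F) =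
          φ (MvPolynomial.eval x F) := by
        rw [MvPolynomial.eval_map, MvPolynomial.eval₂_comp]; rfl
      rw [this]
      exact Ideal.mem_map_of_mem _ hFX
    · have := hunit _ hFv
      rw [MvPolynomial.eval_map, MvPolynomial.hom_eval₂] at this
      rw [MvPolynomial.eval_map]
      exact this
  rw [IsLocalization.AtPrime.ringKrullDim_eq_height 𝔭 L, Polynomial.height_map_C,
    IsLocalRing.maximalIdeal_height_eq_ringKrullDim, hdim] at key
  exact lt_irrefl _ key

/-- homogeneous component of a power series, as a polynomial -/
noncomputable def mcF {S : Type*} [CommRing S] {n : ℕ} (N : ℕ) (f : MvPowerSeries (Fin n) S) :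
    MvPolynomial (Fin n) S :=
  ∑ α ∈ Finset.finsuppAntidiag Finset.univ N, MvPolynomial.monomial α (MvPowerSeries.coeff α f)

theorem mcF_coeff {S : Type*} [CommRing S] {n : ℕ} (N : ℕ) (f : MvPowerSeries (Fin n) S)
    (β : Fin n →₀ ℕ) :
    (mcF N f).coeff β = if β.degree = N then MvPowerSeries.coeff β f else 0 := by
  classical
  have : β ∈ (Finset.finsuppAntidiag Finset.univ N : Finset (Fin n →₀ ℕ)) ↔ β.degree = N := by
    simp [Finset.mem_finsuppAntidiag, Finsupp.degree_eq_sum]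
  rw [mcF, MvPolynomial.coeff_sum]
  simp only [MvPolynomial.coeff_monomial]
  rw [Finset.sum_ite_eq']
  simp only [this]

theorem mcF_homog {S : Type*} [CommRing S] {n : ℕ} (N : ℕ) (f : MvPowerSeries (Fin n) S) :
    (mcF N f).IsHomogeneous N := by
  intro β hβ
  rw [mcF_coeff] at hβ
  have : β.degree = N := by
    by_contra h
    rw [if_neg h] at hβ
    exact hβ rfl
  rw [Finsupp.degree_eq_weight_one] at this
  exact this

theorem mcF_add {S : Type*} [CommRing S] {n : ℕ} (N : ℕ) (f g : MvPowerSeries (Fin n) S) :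
    mcF N (f + g) = mcF N f + mcF N g := by
  ext β
  simp only [mcF_coeff, MvPolynomial.coeff_add, map_add]
  split_ifs <;> simp

theorem mcF_C_mul {S : Type*} [CommRing S] {n : ℕ} (N : ℕ) (s : S) (f : MvPowerSeries (Fin n) S) :
    mcF N (MvPowerSeries.C s * f) = MvPolynomial.C s * mcF N f := by
  ext β
  simp only [mcF_coeff, MvPolynomial.coeff_C_mul, MvPowerSeries.coeff_C_mul]
  split_ifs <;> simp

theorem mcF_X_mul {S : Type*} [CommRing S] {n : ℕ} (N : ℕ) (i : Fin n)
    (f : MvPowerSeries (Fin n) S) :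
    mcF (N + 1) (MvPowerSeries.X i * f) = MvPolynomial.X i * mcF N f := by
  classical
  ext β
  by_cases hi : i ∈ β.support
  · obtain ⟨γ, rfl⟩ : ∃ γ, β = Finsupp.single i 1 + γ := by
      refine ⟨β - Finsupp.single i 1, ?_⟩
      rw [add_tsub_cancel_of_le]
      rw [Finsupp.single_le_iff]
      exact Nat.pos_of_ne_zero (by simpa using hi)
    rw [MvPolynomial.coeff_X_mul, mcF_coeff, mcF_coeff, map_add]
    have : MvPowerSeries.coeff (Finsupp.single i 1 + γ) (MvPowerSeries.X i * f) =
        MvPowerSeries.coeff γ f := by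
      rw [MvPowerSeries.X, MvPowerSeries.coeff_add_monomial_mul, one_mul]
    rw [this, Finsupp.degree_single, add_comm 1]
    simp
  · have hz : MvPowerSeries.coeff β (MvPowerSeries.X i * f) = 0 := by
      rw [MvPowerSeries.X, MvPowerSeries.coeff_monomial_mul, if_neg]
      intro h
      rw [Finsupp.single_le_iff] at h
      simp at hi
      omega
    rw [MvPolynomial.coeff_X_mul', if_neg hi, mcF_coeff, hz, ite_self]

/-- evaluation of a homogeneous component -/
noncomputable def mcD {S : Type*} [CommRing S] {n : ℕ} (x : Fin n → S) (N : ℕ) :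
    MvPowerSeries (Fin n) S →+ S :=
  AddMonoidHom.mk' (fun f => MvPolynomial.eval x (mcF N f)) (fun f g => by
    rw [mcF_add, map_add])

theorem mcD_mem {S : Type*} [CommRing S] {n : ℕ} (x : Fin n → S) (N : ℕ)
    (f : MvPowerSeries (Fin n) S) : mcD x N f ∈ Ideal.span (Set.range x) ^ N := by
  change MvPolynomial.eval x (mcF N f) ∈ _
  rw [MvPolynomial.eval_eq]
  refine Ideal.sum_mem _ fun d hd => Ideal.mul_mem_left _ _ ?_
  have h1 : d.degree = N := by
    have := mcF_homog N f (MvPolynomial.mem_support_iff.1 hd)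
    rw [Finsupp.degree_eq_weight_one]; exact this
  have h2 : ∑ i ∈ d.support, d i = N := by rw [← h1]; rfl
  rw [← h2, ← Finset.prod_pow_eq_pow_sum]
  have hxi : ∀ i, x i ∈ Ideal.span (Set.range x) := fun i => Ideal.subset_span ⟨i, rfl⟩
  exact Ideal.prod_mem_prod fun i _ => Ideal.pow_mem_pow (hxi i) _

noncomputable def mcE {S : Type*} [CommRing S] {n : ℕ} (x : Fin n → S) (N K : ℕ) :
    PowerSeries (MvPowerSeries (Fin n) S) →+ S :=
  ∑ j ∈ Finset.range (K + 1), (mcD x (N + j)).comp (PowerSeries.coeff j).toAddMonoidHom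

/-- the relations `Z W_i - x_i` -/
noncomputable def mcRel {S : Type*} [CommRing S] {n : ℕ} (x : Fin n → S) (i : Fin n) :
    PowerSeries (MvPowerSeries (Fin n) S) :=
  PowerSeries.X * PowerSeries.C (MvPowerSeries.X i) - PowerSeries.C (MvPowerSeries.C (x i))

theorem mcE_apply {S : Type*} [CommRing S] {n : ℕ} (x : Fin n → S) (N K : ℕ)
    (g : PowerSeries (MvPowerSeries (Fin n) S)) :
    mcE x N K g = ∑ j ∈ Finset.range (K + 1), mcD x (N + j) (PowerSeries.coeff j g) := by
  simp [mcE, AddMonoidHom.finsetSum_apply]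

theorem mcE_rel {S : Type*} [CommRing S] {n : ℕ} (x : Fin n → S) (N K : ℕ) (i : Fin n)
    (h : PowerSeries (MvPowerSeries (Fin n) S)) :
    mcE x N K (h * mcRel x i) = - (x i * mcD x (N + K) (PowerSeries.coeff K h)) := by
  have e : h * mcRel x i = PowerSeries.X * (PowerSeries.C (MvPowerSeries.X i) * h)
      - PowerSeries.C (MvPowerSeries.C (x i)) * h := by
    rw [mcRel]; ring
  have hC : ∀ M f, mcD x M (MvPowerSeries.C (x i) * f) = x i * mcD x M f := by
    intro M f
    change MvPolynomial.eval x (mcF M _) = _ * MvPolynomial.eval x (mcF M _)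
    rw [mcF_C_mul]; simp
  have hX : ∀ M f, mcD x (M + 1) (MvPowerSeries.X i * f) = x i * mcD x M f := by
    intro M f
    change MvPolynomial.eval x (mcF (M + 1) _) = _ * MvPolynomial.eval x (mcF M _)
    rw [mcF_X_mul]; simp
  rw [e, map_sub, mcE_apply, mcE_apply]
  simp only [PowerSeries.coeff_C_mul, hC]
  rw [Finset.sum_range_succ', Finset.sum_range_succ (fun j => x i * _)]
  simp only [PowerSeries.coeff_succ_X_mul, PowerSeries.coeff_C_mul, ← add_assoc, hX]
  simp

theorem mcE_mem {S : Type*} [CommRing S] {n : ℕ} (x : Fin n → S) (N K : ℕ)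
    (g : PowerSeries (MvPowerSeries (Fin n) S)) (hg : g ∈ Ideal.span (Set.range (mcRel x))) :
    mcE x N K g ∈ Ideal.span (Set.range x) ^ (N + K + 1) := by
  obtain ⟨c, rfl⟩ := Ideal.mem_span_range_iff_exists_fun.1 hg
  rw [map_sum]
  refine Ideal.sum_mem _ fun i _ => ?_
  rw [mcE_rel, neg_mem_iff, pow_succ']
  exact Ideal.mul_mem_mul (Ideal.subset_span ⟨i, rfl⟩) (mcD_mem _ _ _)

theorem mc_artin_rees {S : Type*} [CommRing S] [IsNoetherianRing S] [IsDomain S] (I : Ideal S)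
    (a : S) (ha : a ≠ 0) : ∃ c, ∀ L ≥ c, ∀ s, a * s ∈ I ^ L → s ∈ I ^ (L - c) := by
  obtain ⟨c, hc⟩ := Ideal.exists_pow_inf_eq_pow_smul I (Ideal.span {a} : Submodule S S)
  refine ⟨c, fun L hL s hs => ?_⟩
  have h1 := hc L hL
  have h2 : a * s ∈ (I ^ L • ⊤ ⊓ Ideal.span {a} : Submodule S S) := by
    refine ⟨by simpa using hs, Ideal.mul_mem_right _ _ (Ideal.mem_span_singleton_self _)⟩
  rw [h1] at h2
  have h3 : a * s ∈ I ^ (L - c) * Ideal.span {a} := by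
    refine (Ideal.mul_mono_right ?_) h2
    exact inf_le_right
  rw [Ideal.mem_mul_span_singleton] at h3
  obtain ⟨z, hz, e⟩ := h3
  have : z = s := mul_left_cancel₀ ha (by rw [← e, mul_comm])
  exact this ▸ hz

theorem mc_step2 {S : Type*} [CommRing S] [IsNoetherianRing S] [IsLocalRing S] [IsDomain S]
    [CharZero S] {n : ℕ} (hdim : ringKrullDim S = n)
    (x : Fin n → S) (hx : (Ideal.span (Set.range x)).radical = maximalIdeal S)
    (a : ℕ) (ha : a ≠ 0) (g : PowerSeries (MvPowerSeries (Fin n) S))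
    (hg : (a : PowerSeries (MvPowerSeries (Fin n) S)) * g ∈ Ideal.span (Set.range (mcRel x)))
    (α : Fin n →₀ ℕ) :
    MvPowerSeries.coeff α (PowerSeries.coeff 0 g) ∈ maximalIdeal S := by
  set I := Ideal.span (Set.range x) with hI
  set N := α.degree with hN
  obtain ⟨c, hc⟩ := mc_artin_rees I (a : S) (by exact_mod_cast ha)
  have h1 := mcE_mem x N c _ hg
  rw [← nsmul_eq_mul, map_nsmul, nsmul_eq_mul] at h1
  have h2 := hc (N + c + 1) (by omega) _ h1
  have h3 : mcD x N (PowerSeries.coeff 0 g) ∈ I ^ (N + 1) := by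
    rw [mcE_apply, Finset.sum_range_succ'] at h2
    have h4 : N + c + 1 - c = N + 1 := by omega
    rw [h4] at h2
    refine (Ideal.add_mem_iff_right _ (Ideal.sum_mem _ fun j _ => ?_)).1 h2
    exact Ideal.pow_le_pow_right (by omega) (mcD_mem x (N + (j + 1)) _)
  have h5 := mc_ai hdim x hx (mcF N (PowerSeries.coeff 0 g)) (mcF_homog _ _) h3 α
  rwa [mcF_coeff, if_pos hN.symm] at h5

/-- the reduction map to the power series ring over the residue field -/
noncomputable def mcPi (S : Type*) [CommRing S] [IsLocalRing S] (n : ℕ) :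
    PowerSeries (MvPowerSeries (Fin n) S) →+* MvPowerSeries (Fin n) (ResidueField S) :=
  (MvPowerSeries.map (residue S)).comp PowerSeries.constantCoeff

theorem mc_mv_domain (n : ℕ) (k : Type*) [Field k] : IsDomain (MvPowerSeries (Fin n) k) :=
  NoZeroDivisors.to_isDomain _

theorem mc_exists_prime {S : Type*} [CommRing S] [IsNoetherianRing S] [IsLocalRing S] [IsDomain S]
    [CharZero S] {n : ℕ} (hdim : ringKrullDim S = n)
    (x : Fin n → S) (hx : (Ideal.span (Set.range x)).radical = maximalIdeal S)
    (p : ℕ) (hp : p ≠ 0) :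
    ∃ q : Ideal (PowerSeries (MvPowerSeries (Fin n) S)), q.IsPrime ∧
      Ideal.span (Set.range (mcRel x)) ≤ q ∧ q ≤ RingHom.ker (mcPi S n) ∧
      (p : PowerSeries (MvPowerSeries (Fin n) S)) ∉ q := by
  have := mc_mv_domain n (ResidueField S)
  have hP : (RingHom.ker (mcPi S n)).IsPrime := RingHom.ker_isPrime _
  set M : Submonoid (PowerSeries (MvPowerSeries (Fin n) S)) :=
    Submonoid.powers (p : PowerSeries (MvPowerSeries (Fin n) S)) ⊔
      (RingHom.ker (mcPi S n)).primeCompl with hM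
  have hdisj : Disjoint (Ideal.span (Set.range (mcRel x)) :
      Set (PowerSeries (MvPowerSeries (Fin n) S))) (M : Set _) := by
    rw [Set.disjoint_left]
    intro y hy hyM
    obtain ⟨_, ⟨k, rfl⟩, g, hg, rfl⟩ := Submonoid.mem_sup.1 hyM
    apply hg
    have h1 : ((p ^ k : ℕ) : PowerSeries (MvPowerSeries (Fin n) S)) * g ∈
      Ideal.span (Set.range (mcRel x)) := by push_cast; exact hy
    change mcPi S n g = 0
    ext α
    simp only [mcPi, RingHom.comp_apply, MvPowerSeries.coeff_map, map_zero]
    rw [residue_eq_zero_iff]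
    rw [← PowerSeries.coeff_zero_eq_constantCoeff_apply]
    exact mc_step2 hdim x hx _ (pow_ne_zero k hp) g h1 α
  obtain ⟨q, hq, h1, h2⟩ := Ideal.exists_le_prime_disjoint _ _ hdisj
  rw [Set.disjoint_left] at h2
  refine ⟨q, hq, h1, fun g hg => ?_, fun hpq => ?_⟩
  · by_contra hcon
    exact h2 hg (Submonoid.mem_sup_right (S := Submonoid.powers _) hcon)
  · exact h2 hpq (Submonoid.mem_sup_left (Submonoid.mem_powers _))


theorem mc_coeff_shift {k : Type*} [CommRing k] {n : ℕ} (m : ℕ) (c : MvPowerSeries (Fin n) k)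
    (γ : Fin n →₀ ℕ) (s : Finset (Fin n)) :
    MvPowerSeries.coeff (γ + ∑ i ∈ s, Finsupp.single i m) (c * ∏ i ∈ s, MvPowerSeries.X i ^ m) =
      MvPowerSeries.coeff γ c := by
  classical
  induction s using Finset.induction_on with
  | empty => simp
  | insert i s hi ih =>
    rw [Finset.sum_insert hi, Finset.prod_insert hi, MvPowerSeries.X_pow_eq, mul_left_comm,
      add_left_comm, MvPowerSeries.coeff_add_monomial_mul, one_mul, ih]

theorem mc_power_series_zero {k : Type*} [CommRing k] {n : ℕ} (p t : ℕ) (hp : 1 < p) (ht : 1 ≤ t)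
    (c : MvPowerSeries (Fin n) k)
    (h : ∀ e : ℕ, c * ((∏ i, MvPowerSeries.X i) ^ (t - 1)) ^ p ^ e ∈
      Ideal.span (Set.range fun i : Fin n => (MvPowerSeries.X i : MvPowerSeries (Fin n) k) ^ (t * p ^ e))) :
    c = 0 := by
  classical
  ext γ
  rw [map_zero]
  obtain ⟨e, he⟩ : ∃ e, ∀ i, γ i < p ^ e := by
    refine ⟨γ.degree, fun i => ?_⟩
    refine lt_of_le_of_lt ?_ (Nat.lt_pow_self hp)
    exact Finsupp.le_degree i γ
  set m := (t - 1) * p ^ e with hm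
  have h1 := h e
  rw [← pow_mul, ← hm, ← Finset.prod_pow] at h1
  rw [← mc_coeff_shift m c γ Finset.univ]
  obtain ⟨b, hb⟩ := Ideal.mem_span_range_iff_exists_fun.1 h1
  rw [← hb, map_sum]
  refine Finset.sum_eq_zero fun i _ => ?_
  rw [MvPowerSeries.X_pow_eq, MvPowerSeries.coeff_mul_monomial, if_neg]
  rw [Finsupp.single_le_iff, not_le]
  have : (γ + ∑ i : Fin n, Finsupp.single i m) i = γ i + m := by
    simp [Finsupp.single_apply]
  rw [this, hm]
  obtain ⟨t, rfl⟩ : ∃ t', t = t' + 1 := ⟨t - 1, by omega⟩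
  have := he i
  simp only [Nat.add_sub_cancel]
  rw [add_mul]
  omega

theorem mc_dim_le {L : Type*} [CommRing L] [IsNoetherianRing L] [IsLocalRing L] (s : Finset L)
    (hs : ∀ a ∈ s, a ∈ maximalIdeal L)
    (h : maximalIdeal L ≤ (Ideal.span (s : Set L)).radical) : ringKrullDim L ≤ (s.card : ℕ) := by
  have hmin : maximalIdeal L ∈ (Ideal.span (s : Set L)).minimalPrimes := by
    refine ⟨⟨inferInstance, Ideal.span_le.2 fun a ha => hs a ha⟩, fun q hq _ => ?_⟩
    exact h.trans (hq.1.radical_le_iff.2 hq.2)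
  have hh := Ideal.height_le_card_of_mem_minimalPrimes_span_finset hmin
  rw [← IsLocalRing.maximalIdeal_height_eq_ringKrullDim]
  exact_mod_cast hh

theorem mc_drop {A C : Type*} [CommRing A] [CommRing C] (f : A →+* C)
    (hf : Function.Surjective f) (r : A) (hr : r ∈ nonZeroDivisors A) (h0 : f r = 0) (m : ℕ)
    (hA : ringKrullDim A ≤ (m + 1 : ℕ)) : ringKrullDim C ≤ m := by
  have h := (ringKrullDim_succ_le_of_surjective f hf hr h0).trans hA
  push_cast at h
  exact ENat.WithBot.add_le_add_one_right_iff.1 h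

theorem mc_drop_prime {B : Type*} [CommRing B] (q r : Ideal B) [q.IsPrime] (hqr : q ≤ r) (y : B)
    (hyr : y ∈ r) (hyq : y ∉ q) (m : ℕ) (h : ringKrullDim (B ⧸ q) ≤ (m + 1 : ℕ)) :
    ringKrullDim (B ⧸ r) ≤ m := by
  refine mc_drop (Ideal.Quotient.factor hqr) (Ideal.Quotient.factor_surjective hqr)
    (Ideal.Quotient.mk q y) ?_ ?_ m h
  · rw [mem_nonZeroDivisors_iff_ne_zero]
    rwa [Ne, Ideal.Quotient.eq_zero_iff_mem]
  · simpa [Ideal.Quotient.eq_zero_iff_mem] using hyr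

theorem mc_minimal {B : Type*} [CommRing B] [IsDomain B] (n : ℕ)
    (hdim : ringKrullDim B ≤ (n + 1 : ℕ)) (P : Ideal B) [P.IsPrime]
    (hP : (n : WithBot ℕ∞) ≤ ringKrullDim (B ⧸ P)) (a : B) (ha : a ≠ 0) (haP : a ∈ P) :
    P ∈ (Ideal.span {a}).minimalPrimes := by
  refine ⟨⟨inferInstance, by simpa [Ideal.span_singleton_le_iff_mem] using haP⟩, fun q hq hqP => ?_⟩
  have := hq.1
  by_contra hcon
  obtain ⟨b, hbP, hbq⟩ := Set.not_subset.1 hcon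
  have h1 : ringKrullDim (B ⧸ q) ≤ n :=
    mc_drop (Ideal.Quotient.mk q) Ideal.Quotient.mk_surjective a
      (mem_nonZeroDivisors_iff_ne_zero.2 ha)
      (Ideal.Quotient.eq_zero_iff_mem.2 (hq.2 (Ideal.mem_span_singleton_self a))) n hdim
  have h2 : ringKrullDim (B ⧸ P) + 1 ≤ ringKrullDim (B ⧸ q) := by
    refine ringKrullDim_succ_le_of_surjective (Ideal.Quotient.factor hqP)
      (Ideal.Quotient.factor_surjective hqP) (r := Ideal.Quotient.mk q b) ?_ ?_
    · rw [mem_nonZeroDivisors_iff_ne_zero]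
      rwa [Ne, Ideal.Quotient.eq_zero_iff_mem]
    · simpa [Ideal.Quotient.eq_zero_iff_mem] using hbP
  have h3 : ((n + 1 : ℕ) : WithBot ℕ∞) ≤ (n : ℕ) := by
    push_cast
    exact (add_le_add_left hP 1).trans (h2.trans h1)
  have : n + 1 ≤ n := by exact_mod_cast h3
  omega

theorem mc_exists_exp {B : Type*} [CommRing B] [IsLocalRing B] (Z w : B) (hZ : Z ∈ maximalIdeal B)
    (M : Set (Ideal B)) (hM : M.Finite) (hMp : ∀ q ∈ M, q.IsPrime) (t K : ℕ) :
    ∃ e, 1 ≤ e ∧ ∀ q ∈ M, w ^ t + Z ^ (K + e) ∈ q → Z ∈ q ∧ w ∈ q := by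
  by_contra hcon
  push Not at hcon
  choose q hqM hq hqZ using fun e : ℕ => hcon (e + 1) (by omega)
  have := hM.to_subtype
  obtain ⟨e, e', hne, heq⟩ := Finite.exists_ne_map_eq_of_infinite
    (fun e => (⟨q e, hqM e⟩ : M))
  have heq : q e = q e' := congrArg Subtype.val heq
  wlog hlt : e < e' generalizing e e'
  · exact this e' e hne.symm (by simpa using heq.symm) heq.symm (by omega)
  have hp := hMp _ (hqM e)
  have h1 := hq e
  have h2 := hq e'
  rw [← heq] at h2
  have h3 := Ideal.sub_mem _ h1 h2
  have h4 : w ^ t + Z ^ (K + (e + 1)) - (w ^ t + Z ^ (K + (e' + 1))) =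
      Z ^ (K + (e + 1)) * (1 - Z ^ (e' - e)) := by
    have : K + (e' + 1) = K + (e + 1) + (e' - e) := by omega
    rw [this, pow_add Z (K + (e + 1))]; ring
  rw [h4] at h3
  have hu : IsUnit (1 - Z ^ (e' - e)) := by
    by_contra hu
    have : (1 - Z ^ (e' - e)) ∈ maximalIdeal B := hu
    have h5 := Ideal.add_mem _ this (Ideal.pow_mem_of_mem _ hZ (e' - e) (by omega))
    rw [sub_add_cancel] at h5
    exact (Ideal.ne_top_iff_one _).1 (maximalIdeal.isMaximal B).ne_top h5
  have hZq : Z ∈ q e := hp.mem_of_pow_mem _ ((Ideal.mul_unit_mem_iff_mem _ hu).1 h3)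
  refine hqZ e hZq (hp.mem_of_pow_mem t ?_)
  have := Ideal.sub_mem _ h1 (Ideal.pow_mem_of_mem _ hZq (K + (e + 1)) (by omega))
  simpa using this

theorem mc_avoid {B : Type*} [CommRing B] [IsNoetherianRing B] [IsLocalRing B] [IsDomain B] (n : ℕ)
    (hdim : ringKrullDim B ≤ (n + 1 : ℕ)) (Z : B) (w : Fin n → B) (hZ : Z ∈ maximalIdeal B)
    (hw : ∀ i, w i ∈ maximalIdeal B)
    (hrad : ∀ q : Ideal B, q.IsPrime → Z ∈ q → (∀ i, w i ∈ q) → q = maximalIdeal B)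
    (a : B) (ha : a ≠ 0) (t K : ℕ) (i : ℕ) (hi : i ≤ n) :
    ∃ e : Fin n → ℕ, (∀ j, 1 ≤ e j) ∧ ∀ q : Ideal B, q.IsPrime → a ∈ q →
      (∀ j : Fin n, (j : ℕ) < i → w j ^ t + Z ^ (K + e j) ∈ q) →
      ringKrullDim (B ⧸ q) ≤ ((n - i : ℕ) : WithBot ℕ∞) := by
  classical
  induction i with
  | zero =>
    refine ⟨fun _ => 1, fun _ => le_rfl, fun q hq haq _ => ?_⟩
    exact mc_drop (Ideal.Quotient.mk q) Ideal.Quotient.mk_surjective a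
      (mem_nonZeroDivisors_iff_ne_zero.2 ha)
      (Ideal.Quotient.eq_zero_iff_mem.2 haq) n hdim
  | succ i ih =>
    obtain ⟨e, he1, he⟩ := ih (by omega)
    let Q : Ideal B := Ideal.span (insert a ((fun j => w j ^ t + Z ^ (K + e j)) '' {j : Fin n | (j : ℕ) < i}))
    have hQ : ∀ q : Ideal B, Q ≤ q ↔ a ∈ q ∧ ∀ j : Fin n, (j : ℕ) < i → w j ^ t + Z ^ (K + e j) ∈ q := by
      intro q
      simp only [Q, Ideal.span_le, Set.insert_subset_iff, Set.image_subset_iff]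
      rfl
    let i' : Fin n := ⟨i, by omega⟩
    obtain ⟨f, hf1, hf⟩ := mc_exists_exp Z (w i') hZ Q.minimalPrimes
      (Ideal.finite_minimalPrimes_of_isNoetherianRing B Q) (fun q hq => hq.1.1) t K
    refine ⟨Function.update e i' f, fun j => ?_, fun r hr har hyr => ?_⟩
    · by_cases h : j = i'
      · subst h; simpa using hf1
      · rw [Function.update_of_ne h]; exact he1 j
    have hold : ∀ j : Fin n, (j : ℕ) < i → w j ^ t + Z ^ (K + e j) ∈ r := by
      intro j hj
      have := hyr j (by omega)
      rwa [Function.update_of_ne (by rintro rfl; simp [i'] at hj)] at this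
    have hnew : w i' ^ t + Z ^ (K + f) ∈ r := by
      have := hyr i' (by simp [i'])
      rwa [Function.update_self] at this
    obtain ⟨q, hqmin, hqr⟩ := Ideal.exists_minimalPrimes_le ((hQ r).2 ⟨har, hold⟩)
    have hqp := hqmin.1.1
    have hqd := he q hqp ((hQ q).1 hqmin.1.2).1 ((hQ q).1 hqmin.1.2).2
    by_cases hy : w i' ^ t + Z ^ (K + f) ∈ q
    · obtain ⟨hZq, hwq⟩ := hf q hqmin hy
      have hZr := hqr hZq
      have hwr : ∀ j : Fin n, (j : ℕ) < i + 1 → w j ∈ r := by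
        intro j hj
        rcases Nat.lt_succ_iff_lt_or_eq.1 hj with h | h
        · have h1 := Ideal.sub_mem _ (hold j h) (Ideal.pow_mem_of_mem _ hZr (K + e j)
            (by have := he1 j; omega))
          rw [add_sub_cancel_right] at h1
          exact hr.mem_of_pow_mem _ h1
        · have : j = i' := Fin.ext h
          rw [this]; exact hqr hwq
      have : Nontrivial (B ⧸ r) := Ideal.Quotient.nontrivial_iff.2 hr.ne_top
      have hloc : IsLocalRing (B ⧸ r) := .of_surjective' (Ideal.Quotient.mk r) Ideal.Quotient.mk_surjective
      have hmax : (maximalIdeal B).map (Ideal.Quotient.mk r) = maximalIdeal (B ⧸ r) :=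
        map_maximalIdeal_of_surjective _ Ideal.Quotient.mk_surjective
      let s : Finset (B ⧸ r) := (Finset.univ.filter (fun j : Fin n => i + 1 ≤ (j : ℕ))).image
        (fun j => Ideal.Quotient.mk r (w j))
      have hcard : s.card ≤ n - (i + 1) := by
        refine Finset.card_image_le.trans ?_
        rw [← Nat.card_Ico]
        refine Finset.card_le_card_of_injOn (fun j : Fin n => (j : ℕ)) ?_ ?_
        · intro j hj
          simp at hj ⊢
          omega
        · intro j _ j' _ h; exact Fin.ext h
      refine (mc_dim_le s ?_ ?_).trans (by exact_mod_cast hcard)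
      · intro b hb
        obtain ⟨j, _, rfl⟩ := Finset.mem_image.1 hb
        rw [← hmax]
        exact Ideal.mem_map_of_mem _ (hw j)
      · rw [Ideal.radical_eq_sInf]
        refine le_sInf fun q' ⟨hq's, hq'p⟩ => ?_
        rw [← hmax, Ideal.map_le_iff_le_comap]
        have hc : (q'.comap (Ideal.Quotient.mk r)).IsPrime := inferInstance
        have hrq : r ≤ q'.comap (Ideal.Quotient.mk r) := by
          intro b hb
          rw [Ideal.mem_comap, Ideal.Quotient.eq_zero_iff_mem.2 hb]
          exact zero_mem _
        refine (hrad _ hc (hrq hZr) fun j => ?_).ge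
        by_cases hj : (j : ℕ) < i + 1
        · exact hrq (hwr j hj)
        · rw [Ideal.mem_comap]
          apply hq's
          apply Ideal.subset_span
          simp only [s, Finset.coe_image]
          exact ⟨j, by simp; omega, rfl⟩
    · refine mc_drop_prime q r hqr _ hnew hy (n - (i + 1)) ?_
      have : n - (i + 1) + 1 = n - i := by omega
      rw [this]; exact hqd

theorem mc_mv_dim (n : ℕ) (k : Type*) [Field k] :
    (n : WithBot ℕ∞) ≤ ringKrullDim (MvPowerSeries (Fin n) k) := by
  induction n with
  | zero => simp [ringKrullDim_nonneg_of_nontrivial]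
  | succ n ih =>
    have h := ringKrullDim_eq_of_ringEquiv (MvPowerSeries.finSuccEquiv k n).toRingEquiv
    rw [h]
    push_cast
    exact (add_le_add_left ih 1).trans ringKrullDim_succ_le_ringKrullDim_powerseries

theorem mc_frob {A : Type*} [CommRing A] (p : ℕ) [Fact p.Prime] [CharP A p] {n : ℕ} (b : Fin n → A)
    (e : ℕ) (a : A) (ha : a ∈ Ideal.span (Set.range b)) :
    a ^ p ^ e ∈ Ideal.span (Set.range fun i => b i ^ p ^ e) := by
  obtain ⟨c, rfl⟩ := Ideal.mem_span_range_iff_exists_fun.1 ha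
  rw [sum_pow_char_pow]
  refine Ideal.sum_mem _ fun i _ => ?_
  rw [mul_pow]
  exact Ideal.mul_mem_left _ _ (Ideal.subset_span ⟨i, rfl⟩)

theorem mc_core {B k : Type u} [CommRing B] [IsNoetherianRing B] [IsLocalRing B] [IsDomain B]
    [Field k] (p : ℕ) (hp : p.Prime) [CharP k p] (n : ℕ)
    (H : ∀ (d : ℕ) (hd0 : 0 < d), ringKrullDim B = d →
        ∀ x : Fin d → B,
          (Ideal.span (Set.range x)).radical = IsLocalRing.maximalIdeal B →
          x ⟨0, hd0⟩ = (p : B) →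
          ∀ n : ℕ, 0 < n → ∀ u : B,
            (p : B) ^ n * u ∈ Ideal.span (x '' {i | i ≠ ⟨0, hd0⟩}) →
            MemTightClosure (B ⧸ Ideal.span {(p : B)}) p
              ((Ideal.span (x '' {i | i ≠ ⟨0, hd0⟩})).map
                (Ideal.Quotient.mk (Ideal.span {(p : B)})))
              (Ideal.Quotient.mk (Ideal.span {(p : B)}) u))
    (hpm : (p : B) ∈ maximalIdeal B) (hp0 : (p : B) ≠ 0)
    (ψ : B →+* MvPowerSeries (Fin n) k) (hψ : Function.Surjective ψ)
    (Z : B) (w : Fin n → B) (hZψ : ψ Z = 0) (hwψ : ∀ i, ψ (w i) = MvPowerSeries.X i)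
    (hZ : Z ∈ maximalIdeal B) (hw : ∀ i, w i ∈ maximalIdeal B)
    (hrad : ∀ q : Ideal B, q.IsPrime → Z ∈ q → (∀ i, w i ∈ q) → q = maximalIdeal B)
    (N : ℕ) (h : B) (hN : (p : B) ^ N = Z * h)
    (t K : ℕ) (ht : 1 ≤ t) (r : Fin n → B)
    (hrel : Z ^ K * (∏ i, w i) ^ (t - 1) = ∑ i, r i * w i ^ t) : False := by
  classical
  have := Fact.mk hp
  have hdom := mc_mv_domain n k
  have hZ0 : Z ≠ 0 := by
    rintro rfl
    rw [zero_mul] at hN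
    exact pow_ne_zero N hp0 hN
  have hlow : ((n + 1 : ℕ) : WithBot ℕ∞) ≤ ringKrullDim B := by
    push_cast
    exact (add_le_add_left (mc_mv_dim n k) 1).trans (ringKrullDim_succ_le_of_surjective ψ hψ
      (mem_nonZeroDivisors_iff_ne_zero.2 hZ0) hZψ)
  have hup : ringKrullDim B ≤ ((n + 1 : ℕ) : WithBot ℕ∞) := by
    let s : Finset B := insert Z (Finset.univ.image w)
    have hc : s.card ≤ n + 1 := by
      refine (Finset.card_insert_le _ _).trans ?_
      have := Finset.card_image_le (s := Finset.univ) (f := w)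
      simpa using this
    refine (mc_dim_le s ?_ ?_).trans (by exact_mod_cast hc)
    · intro a ha
      rcases Finset.mem_insert.1 ha with rfl | ha
      · exact hZ
      · obtain ⟨j, _, rfl⟩ := Finset.mem_image.1 ha
        exact hw j
    · rw [Ideal.radical_eq_sInf]
      refine le_sInf fun q' ⟨hq's, hq'p⟩ => ?_
      refine (hrad q' hq'p ?_ fun j => ?_).ge
      · exact hq's (Ideal.subset_span (by simp [s]))
      · exact hq's (Ideal.subset_span (by simp [s]))
  have hdim := le_antisymm hup hlow
  obtain ⟨e, he1, he⟩ := mc_avoid n hup Z w hZ hw hrad (p : B) hp0 t K n le_rfl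
  let y : Fin n → B := fun i => w i ^ t + Z ^ (K + e i)
  have hym : ∀ i, y i ∈ maximalIdeal B := fun i =>
    Ideal.add_mem _ (Ideal.pow_mem_of_mem _ (hw i) t ht)
      (Ideal.pow_mem_of_mem _ hZ _ (by have := he1 i; omega))
  have hsop : (Ideal.span (Set.range (Fin.cons (p : B) y : Fin (n + 1) → B))).radical
      = maximalIdeal B := by
    apply le_antisymm
    · refine (Ideal.IsPrime.radical_le_iff inferInstance).2 (Ideal.span_le.2 ?_)
      rintro _ ⟨i, rfl⟩
      refine Fin.cases ?_ (fun i => ?_) i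
      · simpa using hpm
      · simpa using hym i
    · rw [Ideal.radical_eq_sInf]
      refine le_sInf fun q ⟨hqs, hqp⟩ => ?_
      by_contra hcon
      obtain ⟨b, hbm, hbq⟩ := Set.not_subset.1 hcon
      have h1 := he q hqp (hqs (Ideal.subset_span ⟨0, rfl⟩))
        (fun j _ => hqs (Ideal.subset_span ⟨j.succ, rfl⟩))
      have hqm := IsLocalRing.le_maximalIdeal hqp.ne_top
      have h2 : ringKrullDim (B ⧸ maximalIdeal B) + 1 ≤ ringKrullDim (B ⧸ q) := by
        refine ringKrullDim_succ_le_of_surjective (Ideal.Quotient.factor hqm)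
          (Ideal.Quotient.factor_surjective hqm) (r := Ideal.Quotient.mk q b) ?_ ?_
        · rw [mem_nonZeroDivisors_iff_ne_zero]
          rwa [Ne, Ideal.Quotient.eq_zero_iff_mem]
        · simpa [Ideal.Quotient.eq_zero_iff_mem] using hbm
      have h3 := h2.trans h1
      rw [Nat.sub_self, Nat.cast_zero, ENat.WithBot.add_one_le_zero_iff] at h3
      have h4 : (0 : WithBot ℕ∞) ≤ ringKrullDim (B ⧸ maximalIdeal B) :=
        ringKrullDim_nonneg_of_nontrivial
      rw [h3] at h4
      simp at h4
  have himg : (Fin.cons (p : B) y : Fin (n + 1) → B) '' {i | i ≠ ⟨0, n.succ_pos⟩} = Set.range y := by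
    ext b
    constructor
    · rintro ⟨i, hi, rfl⟩
      revert hi
      refine Fin.cases (fun hi => absurd rfl hi) (fun i _ => ⟨i, by simp⟩) i
    · rintro ⟨i, rfl⟩
      exact ⟨i.succ, Fin.succ_ne_zero i, by simp⟩
  let u : B := (∏ i, w i) ^ (t - 1) + ∑ i, Z ^ e i * r i
  have hu1 : Z ^ K * u ∈ Ideal.span (Set.range y) := by
    have : Z ^ K * u = ∑ i, r i * y i := by
      simp only [u, y, mul_add, hrel, Finset.mul_sum, ← Finset.sum_add_distrib]
      refine Finset.sum_congr rfl fun i _ => ?_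
      rw [pow_add]; ring
    rw [this]
    exact Ideal.sum_mem _ fun i _ => Ideal.mul_mem_left _ _ (Ideal.subset_span ⟨i, rfl⟩)
  have hu2 : (p : B) ^ (N * K + 1) * u ∈ Ideal.span (Set.range y) := by
    have : (p : B) ^ (N * K + 1) * u = (p * h ^ K) * (Z ^ K * u) := by
      rw [pow_succ, pow_mul, hN]; ring
    rw [this]
    exact Ideal.mul_mem_left _ _ hu1
  have key := H (n + 1) n.succ_pos hdim (Fin.cons (p : B) y) hsop rfl (N * K + 1) (Nat.succ_pos _) u
    (by rw [himg]; exact hu2)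
  rw [himg] at key
  obtain ⟨c, hc, hce⟩ := key
  obtain ⟨c, rfl⟩ := Ideal.Quotient.mk_surjective c
  have hpψ : ψ (p : B) = 0 := by
    have : ψ (p : B) ^ N = 0 := by rw [← map_pow, hN, map_mul, hZψ, zero_mul]
    exact eq_zero_of_pow_eq_zero this
  have hcharP : CharP (MvPowerSeries (Fin n) k) p := by
    exact charP_of_injective_ringHom (f := MvPowerSeries.C) MvPowerSeries.C_injective p
  have hPprime : (RingHom.ker ψ).IsPrime := RingHom.ker_isPrime ψ
  have hPmin : RingHom.ker ψ ∈ (Ideal.span {(p : B)}).minimalPrimes := by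
    refine mc_minimal n hup _ ?_ _ hp0 hpψ
    rw [ringKrullDim_eq_of_ringEquiv (RingHom.quotientKerEquivOfSurjective hψ)]
    exact mc_mv_dim n k
  rw [Ideal.minimalPrimes_eq_comap] at hPmin
  obtain ⟨P', hP', hPP⟩ := hPmin
  have hc0 : ψ c ≠ 0 := by
    intro h0
    apply hc P' hP'
    rw [← Ideal.mem_comap, hPP]
    exact h0
  apply hc0
  refine mc_power_series_zero p t hp.one_lt ht _ fun f => ?_
  let ψ' : B ⧸ Ideal.span {(p : B)} →+* MvPowerSeries (Fin n) k :=
    Ideal.Quotient.lift _ ψ (by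
      intro a ha
      have : Ideal.span {(p : B)} ≤ RingHom.ker ψ := by
        rw [Ideal.span_singleton_le_iff_mem]; exact hpψ
      exact this ha)
  have hψu : ψ u = (∏ i, MvPowerSeries.X i) ^ (t - 1) := by
    simp only [u, map_add, map_pow, map_prod, hwψ, map_sum, map_mul, hZψ]
    rw [Finset.sum_eq_zero, add_zero]
    intro i _
    rw [zero_pow (by have := he1 i; omega), zero_mul]
  have h1 := Ideal.mem_map_of_mem ψ' (hce f)
  have h2 : ψ' (Ideal.Quotient.mk _ c * Ideal.Quotient.mk _ u ^ p ^ f) =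
      ψ c * ((∏ i, MvPowerSeries.X i) ^ (t - 1)) ^ p ^ f := by
    rw [map_mul, map_pow, ← hψu]
    rfl
  rw [h2, Ideal.map_span] at h1
  refine (Ideal.span_le.2 ?_) h1
  rintro _ ⟨_, ⟨a, ha, rfl⟩, rfl⟩
  simp only [map_pow, SetLike.mem_coe]
  have h3 : ψ' a ∈ Ideal.span (Set.range fun i : Fin n =>
      (MvPowerSeries.X i : MvPowerSeries (Fin n) k) ^ t) := by
    have h4 := Ideal.mem_map_of_mem ψ' ha
    rw [Ideal.map_map, Ideal.map_span] at h4
    refine (Ideal.span_le.2 ?_) h4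
    rintro _ ⟨_, ⟨i, rfl⟩, rfl⟩
    apply Ideal.subset_span
    refine ⟨i, ?_⟩
    change _ = ψ (y i)
    simp only [y, map_add, map_pow, hwψ, hZψ]
    rw [zero_pow (by have := he1 i; omega), add_zero]
  have h5 := mc_frob p _ f _ h3
  simpa only [pow_mul] using h5

theorem mc_mem_span_X {A : Type*} [CommRing A] {n : ℕ} (f : MvPowerSeries (Fin n) A)
    (hf : MvPowerSeries.constantCoeff f = 0) :
    f ∈ Ideal.span (Set.range (MvPowerSeries.X : Fin n → MvPowerSeries (Fin n) A)) := by
  classical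
  have hex : ∀ β : Fin n →₀ ℕ, β ≠ 0 → ∃ i, i ∈ β.support := by
    intro β hβ
    exact Finsupp.support_nonempty_iff.2 hβ
  choose m hm using hex
  let g : Fin n → MvPowerSeries (Fin n) A := fun i γ =>
    if h : Finsupp.single i 1 + γ ≠ 0 then
      if m _ h = i then MvPowerSeries.coeff (Finsupp.single i 1 + γ) f else 0
    else 0
  have hcoef : ∀ i γ, MvPowerSeries.coeff γ (g i) = if h : Finsupp.single i 1 + γ ≠ 0 then
      if m _ h = i then MvPowerSeries.coeff (Finsupp.single i 1 + γ) f else 0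
    else 0 := fun i γ => rfl
  have hsum : f = ∑ i, MvPowerSeries.X i * g i := by
    ext β
    rw [map_sum]
    by_cases hβ : β = 0
    · subst hβ
      rw [Finset.sum_eq_zero]
      · exact hf
      · intro i _
        rw [MvPowerSeries.X, MvPowerSeries.coeff_monomial_mul, if_neg]
        rw [Finsupp.single_le_iff]; simp
    · rw [Finset.sum_eq_single (m β hβ)]
      · have h1 : Finsupp.single (m β hβ) 1 ≤ β := by
          rw [Finsupp.single_le_iff]
          exact Nat.pos_of_ne_zero (by simpa using hm β hβ)
        rw [MvPowerSeries.X, MvPowerSeries.coeff_monomial_mul, if_pos h1, hcoef]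
        simp only [add_tsub_cancel_of_le h1]
        rw [dif_pos hβ, if_pos trivial, one_mul]
      · intro i _ hi
        rw [MvPowerSeries.X, MvPowerSeries.coeff_monomial_mul]
        split_ifs with h1
        · rw [hcoef]
          simp only [add_tsub_cancel_of_le h1]
          rw [dif_pos hβ, if_neg (Ne.symm hi), mul_zero]
        · rfl
      · intro h; exact absurd (Finset.mem_univ _) h
  rw [hsum]
  exact Ideal.sum_mem _ fun i _ => Ideal.mul_mem_right _ _ (Ideal.subset_span ⟨i, rfl⟩)

theorem mc_max_le {S : Type*} [CommRing S] [IsLocalRing S] {n : ℕ}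
    (x : Fin n → S) (hx : (Ideal.span (Set.range x)).radical = maximalIdeal S)
    (Q : Ideal (PowerSeries (MvPowerSeries (Fin n) S))) [hQ : Q.IsPrime]
    (hrel : Ideal.span (Set.range (mcRel x)) ≤ Q) (hX : PowerSeries.X ∈ Q)
    (hW : ∀ i, PowerSeries.C (MvPowerSeries.X i) ∈ Q) :
    maximalIdeal (PowerSeries (MvPowerSeries (Fin n) S)) ≤ Q := by
  have hxQ : ∀ i, PowerSeries.C (MvPowerSeries.C (x i)) ∈ Q := by
    intro i
    have h1 : mcRel x i ∈ Q := hrel (Ideal.subset_span ⟨i, rfl⟩)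
    have h2 := Ideal.sub_mem _ (Ideal.mul_mem_right (PowerSeries.C (MvPowerSeries.X i)) _ hX) h1
    rw [mcRel, sub_sub_cancel] at h2
    exact h2
  have hmQ : ∀ a ∈ maximalIdeal S, PowerSeries.C (MvPowerSeries.C a) ∈ Q := by
    have hprime : (Q.comap ((PowerSeries.C (R := MvPowerSeries (Fin n) S)).comp
      (MvPowerSeries.C (σ := Fin n) (R := S)))).IsPrime := inferInstance
    intro a ha
    rw [← hx] at ha
    have h3 := (hprime.radical_le_iff.2 (Ideal.span_le.2 (by
      rintro _ ⟨i, rfl⟩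
      exact hxQ i))) ha
    exact h3
  have hker : ∀ g : MvPowerSeries (Fin n) S, MvPowerSeries.constantCoeff g = 0 →
      PowerSeries.C g ∈ Q := by
    intro g hg
    have h1 := Ideal.mem_map_of_mem (PowerSeries.C (R := MvPowerSeries (Fin n) S))
      (mc_mem_span_X g hg)
    rw [Ideal.map_span] at h1
    refine (Ideal.span_le.2 ?_) h1
    rintro _ ⟨_, ⟨i, rfl⟩, rfl⟩
    exact hW i
  intro f hf
  have h0 := (mc_ps_mem_max f).1 hf
  have h1 : MvPowerSeries.constantCoeff (PowerSeries.coeff 0 f) ∈ maximalIdeal S := by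
    rw [mem_maximalIdeal, mem_nonunits_iff] at h0 ⊢
    rwa [MvPowerSeries.isUnit_iff_constantCoeff] at h0
  have h2 := PowerSeries.eq_X_pow_mul_shift_add_trunc 1 f
  set f0 := PowerSeries.coeff 0 f with hf0
  have h3 : PowerSeries.C f0 ∈ Q := by
    have e : f0 = (f0 - MvPowerSeries.C (MvPowerSeries.constantCoeff f0)) +
      MvPowerSeries.C (MvPowerSeries.constantCoeff f0) := by ring
    rw [e, map_add]
    refine Ideal.add_mem _ (hker _ (by simp)) (hmQ _ h1)
  have h4 : f - PowerSeries.C f0 ∈ Q := by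
    have : PowerSeries.X ∣ f - PowerSeries.C f0 := by
      rw [PowerSeries.X_dvd_iff]; simp [hf0]
    exact Ideal.mem_of_dvd _ this hX
  have := Ideal.add_mem _ h4 h3
  rwa [sub_add_cancel] at this

theorem mcPi_surjective (S : Type*) [CommRing S] [IsLocalRing S] (n : ℕ) :
    Function.Surjective (mcPi S n) := by
  intro f
  choose c hc using fun α => residue_surjective (R := S) (MvPowerSeries.coeff α f)
  refine ⟨PowerSeries.C (fun α => c α : MvPowerSeries (Fin n) S), ?_⟩
  ext α
  simp only [mcPi, RingHom.comp_apply, PowerSeries.constantCoeff_C, MvPowerSeries.coeff_map]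
  exact hc α

end MCHelpers

/-- If, for every complete local Noetherian domain `R` of mixed
characteristic `p` with a system of parameters of the form `p, x₂, …, x_d`, and every
`n ≥ 1`, the image in `R̄ = R/pR` of `(x₂,…,x_d) :_R pⁿ` lies in the tight closure of
`(x₂,…,x_d)R̄`, then the Monomial Conjecture holds: for every complete local Noetherian
domain `R` of mixed characteristic, every system of parameters `x₁,…,x_d` and every
`t ≥ 1`, `(x₁⋯x_d)^{t−1} ∉ (x₁^t,…,x_d^t)R`. -/
theorem monomialConjecture_of_colon_capturing
    (H : ∀ (p : ℕ), p.Prime →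
      ∀ (R : Type u) [CommRing R] [IsNoetherianRing R] [IsLocalRing R] [IsDomain R]
        [IsAdicComplete (IsLocalRing.maximalIdeal R) R],
        CharZero R → CharP (IsLocalRing.ResidueField R) p →
        ∀ (d : ℕ) (hd0 : 0 < d), ringKrullDim R = d →
        ∀ x : Fin d → R,
          (Ideal.span (Set.range x)).radical = IsLocalRing.maximalIdeal R →
          x ⟨0, hd0⟩ = (p : R) →
          ∀ n : ℕ, 0 < n → ∀ u : R,
            (p : R) ^ n * u ∈ Ideal.span (x '' {i | i ≠ ⟨0, hd0⟩}) →
            MemTightClosure (R ⧸ Ideal.span {(p : R)}) p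
              ((Ideal.span (x '' {i | i ≠ ⟨0, hd0⟩})).map
                (Ideal.Quotient.mk (Ideal.span {(p : R)})))
              (Ideal.Quotient.mk (Ideal.span {(p : R)}) u)) :
    ∀ (p : ℕ), p.Prime →
      ∀ (R : Type u) [CommRing R] [IsNoetherianRing R] [IsLocalRing R] [IsDomain R]
        [IsAdicComplete (IsLocalRing.maximalIdeal R) R],
        CharZero R → CharP (IsLocalRing.ResidueField R) p →
        ∀ (d : ℕ), ringKrullDim R = d →
        ∀ x : Fin d → R,
          (Ideal.span (Set.range x)).radical = IsLocalRing.maximalIdeal R →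
          ∀ t : ℕ, 1 ≤ t →
            (∏ i, x i) ^ (t - 1) ∉ Ideal.span (Set.range fun i => x i ^ t) := by
  classical
  intro p hp R _ _ _ _ _ hchar hres d hdim x hx t ht hmem
  have hresp : (p : IsLocalRing.ResidueField R) = 0 := CharP.cast_eq_zero _ p
  have hpm : (p : R) ∈ IsLocalRing.maximalIdeal R := by
    rw [← IsLocalRing.residue_eq_zero_iff, map_natCast]; exact hresp
  rw [← hx] at hpm
  obtain ⟨N, hN⟩ := hpm
  obtain ⟨a, ha⟩ := Ideal.mem_span_range_iff_exists_fun.1 hN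
  obtain ⟨s, hs⟩ := Ideal.mem_span_range_iff_exists_fun.1 hmem
  obtain ⟨q, hq, hrelq, hqker, hpq⟩ := mc_exists_prime hdim x hx p hp.ne_zero
  let A := PowerSeries (MvPowerSeries (Fin d) R)
  let B := A ⧸ q
  let φ : A →+* B := Ideal.Quotient.mk q
  have hφ : Function.Surjective φ := Ideal.Quotient.mk_surjective
  have hBloc : IsLocalRing B := IsLocalRing.of_surjective' φ hφ
  have hAprec : IsPrecomplete (IsLocalRing.maximalIdeal A) A := by
    have := mc_precomplete_mv d (A := R)
    exact mc_precomplete_ps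
  have hBprec : IsPrecomplete (IsLocalRing.maximalIdeal B) B := mc_precomplete_surj φ hφ
  have hBcomp : IsAdicComplete (IsLocalRing.maximalIdeal B) B := { }
  let ψ : B →+* MvPowerSeries (Fin d) (IsLocalRing.ResidueField R) :=
    Ideal.Quotient.lift q (mcPi R d) (fun b hb => hqker hb)
  have hψφ : ∀ b, ψ (φ b) = mcPi R d b := fun b => rfl
  have hψ : Function.Surjective ψ := fun f => by
    obtain ⟨b, hb⟩ := mcPi_surjective R d f
    exact ⟨φ b, hb⟩
  have hnu : ∀ b, ¬ IsUnit (ψ b) → b ∈ IsLocalRing.maximalIdeal B := fun b hb hu =>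
    hb (hu.map ψ)
  have hdom := mc_mv_domain d (IsLocalRing.ResidueField R)
  have hψp : ψ (p : B) = 0 := by
    rw [map_natCast]
    have : ((p : ℕ) : MvPowerSeries (Fin d) (IsLocalRing.ResidueField R)) =
        MvPowerSeries.C (p : IsLocalRing.ResidueField R) := (map_natCast MvPowerSeries.C p).symm
    rw [this, hresp, map_zero]
  have hpB : (p : B) ∈ IsLocalRing.maximalIdeal B := hnu _ (by rw [hψp]; exact not_isUnit_zero)
  have hpB0 : (p : B) ≠ 0 := by
    intro h0
    apply hpq
    rw [← Ideal.Quotient.eq_zero_iff_mem, map_natCast]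
    exact h0
  have hresB : CharP (IsLocalRing.ResidueField B) p := by
    rw [CharP.charP_iff_prime_eq_zero hp]
    rw [← map_natCast (IsLocalRing.residue B), IsLocalRing.residue_eq_zero_iff]
    exact hpB
  have hcharB : CharZero B := by
    obtain ⟨c, hc⟩ := CharP.exists B
    rcases CharP.char_is_prime_or_zero B c with hcp | rfl
    · exfalso
      have h1 : (c : IsLocalRing.ResidueField B) = 0 := by
        rw [← map_natCast (IsLocalRing.residue B), CharP.cast_eq_zero, map_zero]
      rw [CharP.cast_eq_zero_iff (IsLocalRing.ResidueField B) p] at h1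
      rw [Nat.prime_dvd_prime_iff_eq hp hcp] at h1
      subst h1
      exact hpB0 (CharP.cast_eq_zero B p)
    · exact CharP.charP_to_charZero B
  let Z : B := φ PowerSeries.X
  let w : Fin d → B := fun i => φ (PowerSeries.C (MvPowerSeries.X i))
  let ι : R →+* B := φ.comp (PowerSeries.C.comp MvPowerSeries.C)
  have hι : ∀ i, ι (x i) = Z * w i := by
    intro i
    have h1 : φ (mcRel x i) = 0 :=
      Ideal.Quotient.eq_zero_iff_mem.2 (hrelq (Ideal.subset_span ⟨i, rfl⟩))
    rw [mcRel, map_sub, sub_eq_zero, map_mul] at h1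
    exact h1.symm
  have hZψ : ψ Z = 0 := by
    rw [hψφ]; simp [mcPi]
  have hwψ : ∀ i, ψ (w i) = MvPowerSeries.X i := by
    intro i
    rw [hψφ]; simp [mcPi]
  refine mc_core (B := B) (k := IsLocalRing.ResidueField R) p hp d
    (H p hp B hcharB hresB) hpB hpB0 ψ hψ Z w hZψ hwψ
    (hnu _ (by rw [hZψ]; exact not_isUnit_zero))
    (fun i => hnu _ (by
      rw [hwψ, MvPowerSeries.isUnit_iff_constantCoeff]; simp)) ?_
    N (∑ i, ι (a i) * w i) ?_ t (d * (t - 1)) ht (fun i => ι (s i) * Z ^ t) ?_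
  · intro q' hq' hZ hw
    apply le_antisymm (IsLocalRing.le_maximalIdeal hq'.ne_top)
    rw [← IsLocalRing.map_maximalIdeal_of_surjective φ hφ, Ideal.map_le_iff_le_comap]
    have hc : (q'.comap φ).IsPrime := inferInstance
    refine mc_max_le x hx (q'.comap φ) ?_ hZ hw
    refine hrelq.trans fun b hb => ?_
    rw [Ideal.mem_comap, show φ b = 0 from Ideal.Quotient.eq_zero_iff_mem.2 hb]
    exact zero_mem _
  · have := congrArg ι ha
    rw [map_sum, map_pow, map_natCast] at this
    rw [← this, Finset.mul_sum]
    refine Finset.sum_congr rfl fun i _ => ?_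
    rw [map_mul, hι]; ring
  · have := congrArg ι hs
    rw [map_sum, map_pow, map_prod] at this
    simp only [hι, map_mul, map_pow, Finset.prod_mul_distrib, Finset.prod_const,
      Finset.card_univ, Fintype.card_fin] at this
    rw [pow_mul, ← mul_pow, ← this]
    refine Finset.sum_congr rfl fun i _ => ?_
    ring
end
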